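/- arXiv:1307.1956 — 2 statements merged into one kernel-verified Lean document; each statement's English description precedes it below -/
import Mathlib

section
/- Let F be a pseudo-algebraically closed field and f ∈ F[X] a non-constant polynomial that is square-free over the algebraic closure of F. Then every nonzero element of F is a product of two values of f: F = f(F)·f(F) ∪ {0}. -/
/-- A field `F` is pseudo-algebraically closed (PAC) if every absolutely irreducible
affine variety over `F` has an `F`-rational point: for every prime ideal `I` of
`F[X₁,…,Xₙ]` whose extension to the algebraic closure of `F` is still prime
(i.e. the variety is absolutely irreducible), there is a common zero of `I` in `Fⁿ`. -/
def IsPAC (F : Type*) [Field F] : Prop :=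
  ∀ (n : ℕ) (I : Ideal (MvPolynomial (Fin n) F)), I.IsPrime →
    (I.map (MvPolynomial.map (algebraMap F (AlgebraicClosure F)))).IsPrime →
    ∃ x : Fin n → F, ∀ g ∈ I, MvPolynomial.eval x g = 0

/-!
Over the algebraic closure, let `α` be a simple root of `g`. Viewed as a polynomial in `Y` with
coefficients in the polynomials in `X`, `g(X) f(Y) - c` has all its coefficients divisible by
`X - α` except the constant one, while its leading coefficient is divisible by `X - α` only once.
Eisenstein's criterion, applied to the reversed polynomial, shows that the curve `g(X) f(Y) = c`
is absolutely irreducible, so it has a rational point over a PAC field.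
-/

open Polynomial

section ReverseEisenstein

variable {R : Type*}

theorem isUnit_reverse_iff [Semiring R] [NoZeroDivisors R] {p : R[X]} (h0 : p.coeff 0 ≠ 0) :
    IsUnit p.reverse ↔ IsUnit p := by
  have natDegree_reverse : p.reverse.natDegree = p.natDegree := by
    rw [reverse_natDegree, natTrailingDegree_eq_zero.2 (Or.inr h0), Nat.sub_zero]
  have reverse_eq_self (hp : p.natDegree = 0) : p.reverse = p := by
    rw [eq_C_of_natDegree_eq_zero hp, reverse_C]
  constructor <;> intro h
  · rwa [reverse_eq_self (natDegree_reverse ▸ natDegree_eq_zero_of_isUnit h)] at h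
  · rwa [reverse_eq_self (natDegree_eq_zero_of_isUnit h)]

theorem irreducible_of_irreducible_reverse [Semiring R] [NoZeroDivisors R] {p : R[X]}
    (h0 : p.coeff 0 ≠ 0) (hp : Irreducible p.reverse) : Irreducible p where
  not_isUnit := mt (isUnit_reverse_iff h0).2 hp.not_isUnit
  isUnit_or_isUnit := by
    rintro a b rfl
    rw [mul_coeff_zero] at h0
    rw [reverse_mul_of_domain] at hp
    exact (hp.isUnit_or_isUnit rfl).imp (isUnit_reverse_iff (left_ne_zero_of_mul h0)).1
      (isUnit_reverse_iff (right_ne_zero_of_mul h0)).1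

theorem isPrimitive_reverse [CommSemiring R] {p : R[X]} (hp : p.IsPrimitive) :
    p.reverse.IsPrimitive := by
  refine fun r hr ↦ hp r ((C_dvd_iff_dvd_coeff r p).2 fun n ↦ ?_)
  simpa only [coeff_reverse, revAt_invol] using
    (C_dvd_iff_dvd_coeff r p.reverse).1 hr (revAt p.natDegree n)

theorem irreducible_of_reverse_eisenstein_criterion [CommRing R] [IsDomain R] {p : R[X]}
    {P : Ideal R} (hP : P.IsPrime) (h0 : p.coeff 0 ∉ P) (hcoeff : ∀ n, 0 < n → p.coeff n ∈ P)
    (hdeg : 0 < p.natDegree) (hlead : p.leadingCoeff ∉ P ^ 2) (hprim : p.IsPrimitive) :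
    Irreducible p := by
  have coeff_zero_ne_zero : p.coeff 0 ≠ 0 := fun h ↦ h0 (h ▸ P.zero_mem)
  have natTrailingDegree_eq : p.natTrailingDegree = 0 :=
    natTrailingDegree_eq_zero.2 (Or.inr coeff_zero_ne_zero)
  have natDegree_eq : p.reverse.natDegree = p.natDegree := by
    rw [reverse_natDegree, natTrailingDegree_eq, Nat.sub_zero]
  refine irreducible_of_irreducible_reverse coeff_zero_ne_zero
    (IsEisensteinAt.irreducible ⟨?_, fun {n} hn ↦ ?_, ?_⟩ hP (isPrimitive_reverse hprim)
      (natDegree_eq ▸ hdeg))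
  · rwa [reverse_leadingCoeff, trailingCoeff, natTrailingDegree_eq]
  · rw [natDegree_eq] at hn
    rw [coeff_reverse, revAt_le hn.le]
    exact hcoeff _ (Nat.sub_pos_of_lt hn)
  · rwa [coeff_zero_reverse]

theorem irreducible_C_mul_sub_C [CommRing R] [IsDomain R] {P : Ideal R} (hP : P.IsPrime)
    {u c : R} (hu : u ∈ P) (hu_sq : u ∉ P ^ 2) (hc : IsUnit c) {f : R[X]}
    (hdeg : 0 < f.natDegree) (hlead : IsUnit f.leadingCoeff) :
    Irreducible (C u * f - C c) := by
  have u_ne_zero : u ≠ 0 := fun h ↦ hu_sq (h ▸ (P ^ 2).zero_mem)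
  have coeff_zero : (C u * f - C c).coeff 0 = u * f.coeff 0 - c := by
    rw [coeff_sub, coeff_C_mul, coeff_C_zero]
  have coeff_pos (n : ℕ) (hn : 0 < n) : (C u * f - C c).coeff n = u * f.coeff n := by
    rw [coeff_sub, coeff_C_mul, coeff_C_of_ne_zero hn.ne', sub_zero]
  have natDegree_eq : (C u * f - C c).natDegree = f.natDegree := by
    rw [natDegree_sub_C, natDegree_C_mul u_ne_zero]
  apply irreducible_of_reverse_eisenstein_criterion hP
  · rw [coeff_zero, P.sub_mem_iff_right (P.mul_mem_right _ hu)]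
    exact fun h ↦ hP.ne_top (P.eq_top_of_isUnit_mem h hc)
  · intro n hn
    exact coeff_pos n hn ▸ P.mul_mem_right _ hu
  · rwa [natDegree_eq]
  · rwa [leadingCoeff, natDegree_eq, coeff_pos _ hdeg, coeff_natDegree,
      Ideal.mul_unit_mem_iff_mem _ hlead]
  · intro r hr
    rw [C_dvd_iff_dvd_coeff] at hr
    have r_dvd_u : r ∣ u := by
      have := hr f.natDegree
      rwa [coeff_pos _ hdeg, coeff_natDegree, hlead.dvd_mul_right] at this
    have r_dvd_c : r ∣ c := by
      have := hr 0
      rwa [coeff_zero, dvd_sub_right (r_dvd_u.mul_right _)] at this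
    exact isUnit_of_dvd_unit r_dvd_c hc

end ReverseEisenstein

theorem rootMultiplicity_eq_one_of_squarefree {R : Type*} [CommRing R] [IsDomain R] {p : R[X]}
    {a : R} (hp : Squarefree p) (ha : p.IsRoot a) : p.rootMultiplicity a = 1 := by
  have le_one : p.rootMultiplicity a ≤ 1 := by
    rw [rootMultiplicity_le_iff hp.ne_zero, one_add_one_eq_two, sq]
    exact fun h ↦ not_isUnit_X_sub_C a (hp _ h)
  exact le_antisymm le_one ((rootMultiplicity_pos hp.ne_zero).2 ha)

section SeparatedVariables

theorem equivMvPolynomial_C {R : Type*} [CommRing R] (p : R[X]) :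
    Bivariate.equivMvPolynomial R (C p) = p.toMvPolynomial 0 := by
  induction p using Polynomial.induction_on' <;> simp_all [← C_mul_X_pow_eq_monomial]

theorem equivMvPolynomial_map_C {R : Type*} [CommRing R] (p : R[X]) :
    Bivariate.equivMvPolynomial R (p.map C) = p.toMvPolynomial 1 := by
  induction p using Polynomial.induction_on' <;> simp_all [← C_mul_X_pow_eq_monomial]

theorem map_toMvPolynomial {R S σ : Type*} [CommSemiring R] [CommSemiring S] (φ : R →+* S)
    (i : σ) (p : R[X]) :
    MvPolynomial.map φ (p.toMvPolynomial i) = (p.map φ).toMvPolynomial i := by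
  induction p using Polynomial.induction_on' <;> simp_all [← C_mul_X_pow_eq_monomial]

variable {K : Type*} [Field K] {f g : K[X]} {α c : K}

theorem irreducible_C_mul_map_C_sub_C_C (hf : 0 < f.degree) (hα : g.rootMultiplicity α = 1)
    (hc : c ≠ 0) : Irreducible (C g * f.map C - C (C c)) := by
  have g_ne_zero : g ≠ 0 := by
    rintro rfl
    simp at hα
  have span_isPrime : (Ideal.span {X - C α}).IsPrime :=
    (Ideal.span_singleton_prime (X_sub_C_ne_zero α)).2 (prime_X_sub_C α)
  apply irreducible_C_mul_sub_C span_isPrime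
  · rw [Ideal.mem_span_singleton, ← pow_one (X - C α), ← le_rootMultiplicity_iff g_ne_zero, hα]
  · rw [Ideal.span_singleton_pow, Ideal.mem_span_singleton,
      ← le_rootMultiplicity_iff g_ne_zero, hα]
    decide
  · exact isUnit_C.2 hc.isUnit
  · rwa [natDegree_map_eq_of_injective C_injective, natDegree_pos_iff_degree_pos]
  · rw [leadingCoeff_map_of_injective C_injective, isUnit_C, isUnit_iff_ne_zero,
      leadingCoeff_ne_zero]
    exact ne_zero_of_degree_gt hf

theorem prime_toMvPolynomial_mul_sub_C (hf : 0 < f.degree) (hα : g.rootMultiplicity α = 1)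
    (hc : c ≠ 0) :
    Prime (g.toMvPolynomial (0 : Fin 2) * f.toMvPolynomial 1 - MvPolynomial.C c) := by
  rw [← irreducible_iff_prime, ← equivMvPolynomial_C, ← equivMvPolynomial_map_C,
    ← Bivariate.equivMvPolynomial_C_C, ← map_mul, ← map_sub,
    MulEquiv.irreducible_iff]
  exact irreducible_C_mul_map_C_sub_C_C hf hα hc

end SeparatedVariables

theorem IsPAC.exists_eval_eq_zero {F : Type*} [Field F] (hF : IsPAC F) {n : ℕ}
    {g : MvPolynomial (Fin n) F}
    (hg : Prime (MvPolynomial.map (algebraMap F (AlgebraicClosure F)) g)) :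
    ∃ x : Fin n → F, MvPolynomial.eval x g = 0 := by
  set φ : MvPolynomial (Fin n) F →+* MvPolynomial (Fin n) (AlgebraicClosure F) :=
    MvPolynomial.map (algebraMap F (AlgebraicClosure F))
  -- Taking the contraction of `(φ g)`, rather than `(g)`, makes primality over `F` automatic.
  set I : Ideal (MvPolynomial (Fin n) F) := (Ideal.span {φ g}).comap φ
  have span_isPrime : (Ideal.span {φ g}).IsPrime := (Ideal.span_singleton_prime hg.ne_zero).2 hg
  have g_mem : g ∈ I := Ideal.mem_span_singleton_self (φ g)
  have map_comap_eq : I.map φ = Ideal.span {φ g} :=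
    le_antisymm Ideal.map_comap_le
      ((Ideal.span_singleton_le_iff_mem _).2 (Ideal.mem_map_of_mem φ g_mem))
  obtain ⟨x, hx⟩ := hF n I (Ideal.comap_isPrime φ _) (map_comap_eq ▸ span_isPrime)
  exact ⟨x, hx g g_mem⟩

theorem statement10_general {F : Type*} [Field F] (hF : IsPAC F) {f g : F[X]}
    (hf : 0 < f.degree) {α : AlgebraicClosure F}
    (hα : (g.map (algebraMap F (AlgebraicClosure F))).rootMultiplicity α = 1)
    {c : F} (hc : c ≠ 0) : ∃ x y : F, g.eval x * f.eval y = c := by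
  have prime_map : Prime (MvPolynomial.map (algebraMap F (AlgebraicClosure F))
      (g.toMvPolynomial (0 : Fin 2) * f.toMvPolynomial 1 - MvPolynomial.C c)) := by
    simp only [map_sub, map_mul, map_toMvPolynomial, MvPolynomial.map_C]
    exact prime_toMvPolynomial_mul_sub_C (by rwa [degree_map]) hα
      ((map_ne_zero (algebraMap F (AlgebraicClosure F))).2 hc)
  obtain ⟨x, hx⟩ := hF.exists_eval_eq_zero prime_map
  simp only [map_sub, map_mul, MvPolynomial.eval_toMvPolynomial, MvPolynomial.eval_C,
    sub_eq_zero] at hx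
  exact ⟨x 0, x 1, hx⟩

/-- If `F` is PAC and `f ∈ F[X]` is non-constant and square-free over the
algebraic closure, then every nonzero `c ∈ F` is a product of two values of `f`. -/
theorem statement10 (F : Type*) [Field F] (hF : IsPAC F)
    (f : Polynomial F) (hdeg : 0 < f.degree)
    (hsf : Squarefree (f.map (algebraMap F (AlgebraicClosure F)))) :
    ∀ c : F, c ≠ 0 → ∃ x y : F, Polynomial.eval x f * Polynomial.eval y f = c := by
  obtain ⟨α, hα⟩ := IsAlgClosed.exists_root (f.map (algebraMap F (AlgebraicClosure F)))
    (by rw [degree_map]; exact hdeg.ne')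
  exact fun c hc ↦ statement10_general hF hdeg (rootMultiplicity_eq_one_of_squarefree hsf hα) hc
end

section
/- Let F be a finite field with |F| > (2d−1)^4 and let f ∈ F[X] be non-constant of degree d and square-free over the algebraic closure. Then every nonzero c ∈ F can be written as c = f(x)f(y) for some x, y ∈ F. -/
/-!
The coordinate ring of the curve `f(x) f(y) = c` has the explicit basis of monomials `x ^ i * y ^ j`
with `i < d` or `j < d`. Inverting `f'(y)` gives a ring `D` that is unramified over `F[x]`, hence a
Dedekind domain, and an ideal of codimension one in `D` is a rational point of the curve.

Let `A n` be the number of nonzero ideals of `D` of codimension `n` and `q = |F|`. The coefficients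
of the logarithmic derivative of `∑ A n T ^ n` are the numbers `N j` of points of `D` over the
extension of `F` of degree `j`. Let `Q = q ^ j`. Over the `x` with `x ^ Q = x`, Stepanov's method
bounds from above both the number of points with `y ^ Q = y` and the number of the others, which
satisfy `(f(y ^ Q) - f(y)) / (y ^ Q - y) = 0`. The two numbers add up to `d Q + O(1)`, so that
`N j = Q + O(√Q)`.

The monomial basis takes the place of the Riemann-Roch theorem: factoring `(t) = E E'` for functions
`t` with prescribed terms of top degree shows `A n / q ^ n = A m / q ^ m` when `n + m` is one of
infinitely many values and neither `n` nor `m` is too small. The differences of `A n / q ^ n` tend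
to zero by the estimate for `N j`, so by this symmetry they vanish eventually, and
`(1 - q T) ∑ A n T ^ n` is a polynomial, of degree at most `B = 3 d (d - 1) + 1`. All its zeros have
absolute value at least `1 / √q`, again by the estimate for `N j`, so its linear coefficient
`A 1 - q` is at most `B √q < q` in absolute value, and `A 1 > 0`.
-/

namespace ProductCurve

section LogDerivative

open Polynomial

theorem hasSum_coeff_mul_pow (P : ℂ[X]) (T : ℂ) :
    HasSum (fun n ↦ P.coeff n * T ^ n) (P.eval T) := by
  rw [eval_eq_sum_range]
  refine hasSum_sum_of_ne_finset_zero fun n hn ↦ ?_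
  rw [coeff_eq_zero_of_natDegree_lt (by simpa using hn), zero_mul]

theorem summable_norm_coeff_mul_pow (P : ℂ[X]) (T : ℂ) : Summable fun n ↦ ‖P.coeff n * T ^ n‖ := by
  refine summable_of_ne_finset_zero (s := Finset.range (P.natDegree + 1)) fun n hn ↦ ?_
  rw [coeff_eq_zero_of_natDegree_lt (by simpa using hn), zero_mul, norm_zero]

variable {e : ℕ → ℂ} {C s : ℝ}

theorem norm_mul_pow_le_geometric (he : ∀ j, ‖e j‖ ≤ C * s ^ j) {T : ℂ} {ρ : ℝ} (hT : ‖T‖ ≤ ρ)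
    (j : ℕ) : ‖e j * T ^ j‖ ≤ C * (ρ * s) ^ j := by
  rw [norm_mul, norm_pow]
  calc ‖e j‖ * ‖T‖ ^ j ≤ C * s ^ j * ρ ^ j := by
        gcongr
        · exact (norm_nonneg _).trans (he j)
        · exact he j
    _ = C * (ρ * s) ^ j := by rw [mul_pow]; ring

theorem eval_derivative_eq_eval_mul_tsum {P : ℂ[X]}
    (hP : PowerSeries.derivative ℂ (P : PowerSeries ℂ) = P * PowerSeries.mk e) {T : ℂ}
    (hT : Summable fun j ↦ ‖e j * T ^ j‖) :
    P.derivative.eval T = P.eval T * ∑' j, e j * T ^ j := by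
  rw [← (hasSum_coeff_mul_pow P T).tsum_eq, ← (hasSum_coeff_mul_pow _ T).tsum_eq,
    tsum_mul_tsum_eq_tsum_sum_antidiagonal_of_summable_norm (summable_norm_coeff_mul_pow P T) hT]
  congr 1 with n
  rw [← coeff_coe, ← PowerSeries.derivative_coe, hP, PowerSeries.coeff_mul, Finset.sum_mul]
  refine Finset.sum_congr rfl fun ij hij ↦ ?_
  rw [coeff_coe, PowerSeries.coeff_mk, ← Finset.HasAntidiagonal.mem_antidiagonal.mp hij, pow_add]
  ring

/-- On the segment from a root `z` to `0` the polynomial solves a linear differential equation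
with bounded coefficient, so by Grönwall it would vanish at `0` if `z` were too small. -/
theorem one_le_norm_mul_of_isRoot {P : ℂ[X]} (h0 : P.coeff 0 ≠ 0)
    (hP : PowerSeries.derivative ℂ (P : PowerSeries ℂ) = P * PowerSeries.mk e) (hs : 0 ≤ s)
    (he : ∀ j, ‖e j‖ ≤ C * s ^ j) {z : ℂ} (hz : P.IsRoot z) : 1 ≤ ‖z‖ * s := by
  by_contra! hlt
  have hgeom : Summable fun j ↦ C * (‖z‖ * s) ^ j :=
    (summable_geometric_of_lt_one (by positivity) hlt).mul_left C
  let u (t : ℝ) : ℂ := (1 - t) * z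
  have hu : ∀ t ∈ Set.Ico (0 : ℝ) 1, ‖u t‖ ≤ ‖z‖ := by
    intro t ht
    have : ‖(1 - t : ℂ)‖ ≤ 1 := by
      rw [← Complex.ofReal_one, ← Complex.ofReal_sub, Complex.norm_real, Real.norm_eq_abs,
        abs_of_pos (by linarith [ht.2])]
      linarith [ht.1]
    simpa [u] using mul_le_of_le_one_left (norm_nonneg z) this
  have hderiv (t : ℝ) :
      HasDerivAt (fun t ↦ P.eval (u t)) (P.derivative.eval (u t) * (-1 * z)) t := by
    have hline : HasDerivAt u (-1 * z) t := (Complex.ofRealCLM.hasDerivAt.const_sub 1).mul_const z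
    exact (P.hasDerivAt (u t)).comp t hline
  have hbound : ∀ t ∈ Set.Ico (0 : ℝ) 1, ‖P.derivative.eval (u t) * (-1 * z)‖ ≤
      (∑' j, C * (‖z‖ * s) ^ j) * ‖z‖ * ‖P.eval (u t)‖ := by
    intro t ht
    have hterm := norm_mul_pow_le_geometric he (hu t ht)
    have hsum := Summable.of_nonneg_of_le (fun _ ↦ norm_nonneg _) hterm hgeom
    rw [eval_derivative_eq_eval_mul_tsum hP hsum, neg_one_mul, norm_mul, norm_mul, norm_neg]
    calc ‖P.eval (u t)‖ * ‖∑' j, e j * u t ^ j‖ * ‖z‖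
        ≤ ‖P.eval (u t)‖ * (∑' j, C * (‖z‖ * s) ^ j) * ‖z‖ := by
          gcongr
          exact (norm_tsum_le_tsum_norm hsum).trans (hsum.tsum_le_tsum hterm hgeom)
      _ = _ := by ring
  have hzero := eq_zero_of_abs_deriv_le_mul_abs_self_of_eq_zero_right
    (fun t _ ↦ (hderiv t).continuousAt.continuousWithinAt)
    (fun t _ ↦ (hderiv t).hasDerivWithinAt) (by simpa [u] using hz) hbound 1 (by simp)
  exact h0 (by simpa [u, coeff_zero_eq_eval_zero] using hzero)

theorem norm_coeff_one_le_natDegree_mul {P : ℂ[X]} (h0 : P.coeff 0 = 1) {s : ℝ}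
    (hroots : ∀ z, P.IsRoot z → 1 ≤ ‖z‖ * s) : ‖P.coeff 1‖ ≤ P.natDegree * s := by
  have heval : P.eval 0 = 1 := by rw [← coeff_zero_eq_eval_zero, h0]
  have hcoeff : P.coeff 1 = (P.roots.map fun z ↦ 1 / (0 - z)).sum := by
    rw [← (IsAlgClosed.splits P).eval_derivative_div_eval_of_ne_zero (by simp [heval]), heval,
      div_one, ← coeff_zero_eq_eval_zero, coeff_derivative]
    simp
  have hterm : ∀ w ∈ (P.roots.map fun z ↦ 1 / (0 - z)).map norm, w ≤ s := by
    simp only [Multiset.map_map, Multiset.mem_map]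
    rintro _ ⟨z, hz, rfl⟩
    have hroot : P.IsRoot z := isRoot_of_mem_roots hz
    have hz0 : z ≠ 0 := by
      rintro rfl
      simp [IsRoot, heval] at hroot
    have hpos : 0 < ‖z‖ := norm_pos_iff.mpr hz0
    simpa [inv_le_iff_one_le_mul₀' hpos] using hroots z hroot
  calc ‖P.coeff 1‖ ≤ ((P.roots.map fun z ↦ 1 / (0 - z)).map norm).sum := by
        rw [hcoeff]; exact norm_multiset_sum_le _
    _ ≤ P.natDegree * s := by
        have := Multiset.sum_le_card_nsmul _ s hterm
        rwa [Multiset.card_map, Multiset.card_map, nsmul_eq_mul,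
          ← (IsAlgClosed.splits P).natDegree_eq_card_roots] at this

end LogDerivative

section Growth

theorem sum_range_pow_sub_le {r : ℝ} (h0 : 0 ≤ r) (h1 : r < 1) (n : ℕ) :
    ∑ i ∈ Finset.range (n + 1), r ^ (n - i) ≤ (1 - r)⁻¹ := by
  have hreflect := Finset.sum_range_reflect (fun i ↦ r ^ i) (n + 1)
  simp only [Nat.add_sub_cancel] at hreflect
  rw [hreflect, ← tsum_geometric_of_lt_one h0 h1]
  exact (summable_geometric_of_lt_one h0 h1).sum_le_tsum _ fun i _ ↦ by positivity

theorem exists_forall_le_of_succ_mul_le_sum {a : ℕ → ℝ} {C r : ℝ} (ha : ∀ n, 0 ≤ a n) (hC : 0 ≤ C)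
    (hr0 : 0 ≤ r) (hr1 : r < 1)
    (h : ∀ n : ℕ, (n + 1) * a (n + 1) ≤ ∑ i ∈ Finset.range (n + 1), C * a i * r ^ (n - i)) :
    ∃ K, ∀ n, a n ≤ K := by
  obtain ⟨n₀, hn₀⟩ := exists_nat_ge (C * (1 - r)⁻¹)
  set K := ∑ i ∈ Finset.range (n₀ + 1), a i
  have hK : 0 ≤ K := Finset.sum_nonneg fun i _ ↦ ha i
  refine ⟨K, fun n ↦ ?_⟩
  induction n using Nat.strong_induction_on with
  | _ n ih =>
    rcases Nat.lt_or_ge n (n₀ + 1) with hn | hn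
    · exact Finset.single_le_sum (fun i _ ↦ ha i) (Finset.mem_range.mpr hn)
    obtain ⟨m, rfl⟩ : ∃ m, n = m + 1 := ⟨n - 1, by lia⟩
    have hm : (n₀ : ℝ) ≤ m + 1 := by exact_mod_cast (by lia : n₀ ≤ m + 1)
    refine le_of_mul_le_mul_left ?_ (by positivity : (0 : ℝ) < m + 1)
    calc (m + 1) * a (m + 1) ≤ ∑ i ∈ Finset.range (m + 1), C * a i * r ^ (m - i) := h m
      _ ≤ ∑ i ∈ Finset.range (m + 1), C * K * r ^ (m - i) := by
          gcongr with i hi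
          exact ih i (Finset.mem_range.mp hi)
      _ ≤ C * K * (1 - r)⁻¹ := by
          rw [← Finset.mul_sum]
          gcongr
          exact sum_range_pow_sub_le hr0 hr1 m
      _ = C * (1 - r)⁻¹ * K := by ring
      _ ≤ (m + 1) * K := by gcongr; exact hn₀.trans hm

theorem exists_abs_coeff_le_mul_pow {G E : PowerSeries ℝ} (hG : PowerSeries.derivative ℝ G = G * E)
    {C s ρ : ℝ} (hs : 0 ≤ s) (hsρ : s < ρ) (hE : ∀ j, |E.coeff j| ≤ C * s ^ j) :
    ∃ K, ∀ n, |G.coeff n| ≤ K * ρ ^ n := by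
  have hρ : 0 < ρ := hs.trans_lt hsρ
  have hC : 0 ≤ C := by simpa using (abs_nonneg _).trans (hE 0)
  have hstep (n : ℕ) : (n + 1) * (|G.coeff (n + 1)| / ρ ^ (n + 1)) ≤
      ∑ i ∈ Finset.range (n + 1), C / ρ * (|G.coeff i| / ρ ^ i) * (s / ρ) ^ (n - i) := by
    have hrec : G.coeff (n + 1) * (n + 1) =
        ∑ i ∈ Finset.range (n + 1), G.coeff i * E.coeff (n - i) := by
      rw [← PowerSeries.coeff_derivative, hG, PowerSeries.coeff_mul,
        Finset.Nat.sum_antidiagonal_eq_sum_range_succ_mk]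
    calc (n + 1) * (|G.coeff (n + 1)| / ρ ^ (n + 1))
        = |G.coeff (n + 1) * (n + 1)| / ρ ^ (n + 1) := by
          rw [abs_mul, abs_of_pos (by positivity : (0 : ℝ) < n + 1)]
          ring
      _ ≤ (∑ i ∈ Finset.range (n + 1), |G.coeff i| * (C * s ^ (n - i))) / ρ ^ (n + 1) := by
          rw [hrec]
          gcongr
          refine (Finset.abs_sum_le_sum_abs _ _).trans (Finset.sum_le_sum fun i _ ↦ ?_)
          rw [abs_mul]
          gcongr
          exact hE _
      _ = _ := by
          rw [Finset.sum_div]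
          refine Finset.sum_congr rfl fun i hi ↦ ?_
          obtain ⟨j, rfl⟩ := Nat.exists_eq_add_of_le (Nat.lt_succ_iff.mp (Finset.mem_range.mp hi))
          rw [Nat.add_sub_cancel_left, pow_succ, pow_add, div_pow]
          field_simp
  obtain ⟨K, hK⟩ := exists_forall_le_of_succ_mul_le_sum
    (a := fun n ↦ |G.coeff n| / ρ ^ n) (C := C / ρ) (fun n ↦ by positivity)
    (by positivity) (by positivity) ((div_lt_one hρ).mpr hsρ) hstep
  exact ⟨K, fun n ↦ (div_le_iff₀ (by positivity)).mp (hK n)⟩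

end Growth

section Reciprocity

open Filter Topology
open scoped Polynomial
open PowerSeries (C X derivative)

theorem derivative_one_sub_C_mul_X_mul {k : Type*} [CommRing k] (q : k) {Z S : PowerSeries k}
    (hZ : derivative k Z = Z * S) :
    derivative k ((1 - C q * X) * Z) =
      (1 - C q * X) * Z * (S - PowerSeries.mk fun j ↦ q ^ (j + 1)) := by
  have hgeom : (1 - C q * X) * PowerSeries.mk (fun j ↦ q ^ (j + 1)) = C q := by
    ext n
    rw [sub_mul, one_mul, mul_assoc, map_sub, PowerSeries.coeff_C_mul]
    cases n with
    | zero => simp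
    | succ n => simp [PowerSeries.coeff_succ_X_mul, pow_succ']
  have hlinear : derivative k (1 - C q * X) = -C q := by
    simp [PowerSeries.derivative_X]
  rw [Derivation.leibniz, hZ, hlinear, smul_eq_mul, smul_eq_mul]
  linear_combination Z * hgeom

theorem coeff_succ_one_sub_C_mul_X_mul {k : Type*} [CommRing k] (q : k) (Z : PowerSeries k)
    (n : ℕ) :
    ((1 - C q * X) * Z).coeff (n + 1) = Z.coeff (n + 1) - q * Z.coeff n := by
  rw [sub_mul, one_mul, mul_assoc, map_sub, PowerSeries.coeff_C_mul, PowerSeries.coeff_succ_X_mul]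

/-- Each difference has the same absolute value as differences arbitrarily far out. -/
theorem succ_eq_of_reflection {b : ℕ → ℝ} (hb : Tendsto (fun n ↦ b (n + 1) - b n) atTop (𝓝 0))
    {B : ℕ} (hrefl : ∀ k, ∃ M ≥ k, ∀ n m, n + m = M → B ≤ n → B ≤ m → b n = b m)
    {n : ℕ} (hn : B ≤ n) : b (n + 1) = b n := by
  by_contra hne
  obtain ⟨k, hk⟩ := Metric.tendsto_atTop.mp hb _ (abs_pos.mpr (sub_ne_zero.mpr hne))
  obtain ⟨M, hM, hrefl⟩ := hrefl (n + 1 + B + k)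
  obtain ⟨m, rfl⟩ : ∃ m, M = n + 1 + m := ⟨M - (n + 1), by lia⟩
  have hsmall := hk m (by lia)
  rw [hrefl (n + 1) m rfl (by lia) (by lia), hrefl n (m + 1) (by lia) hn (by lia),
    Real.dist_0_eq_abs, abs_sub_comm] at hsmall
  exact hsmall.false

theorem coeff_eq_zero_of_reflection {q s C₀ : ℝ} (hs : 0 < s) (hsq : s < q) {Z S : PowerSeries ℝ}
    (hZ : derivative ℝ Z = Z * S) (hS : ∀ j, |S.coeff j - q ^ (j + 1)| ≤ C₀ * s ^ j) {B : ℕ}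
    (hrefl : ∀ k, ∃ M ≥ k, ∀ n m, n + m = M → B ≤ n → B ≤ m →
      Z.coeff n / q ^ n = Z.coeff m / q ^ m) {n : ℕ} (hn : B < n) :
    ((1 - C q * X) * Z).coeff n = 0 := by
  have hq : 0 < q := hs.trans hsq
  obtain ⟨ρ, hsρ, hρq⟩ := exists_between hsq
  obtain ⟨K, hK⟩ := exists_abs_coeff_le_mul_pow (derivative_one_sub_C_mul_X_mul q hZ) hs.le hsρ
    (C := C₀) (by simpa using hS)
  have hdiff (n : ℕ) : Z.coeff (n + 1) / q ^ (n + 1) - Z.coeff n / q ^ n =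
      ((1 - C q * X) * Z).coeff (n + 1) / q ^ (n + 1) := by
    rw [coeff_succ_one_sub_C_mul_X_mul]
    field_simp
    ring
  have hlim : Tendsto (fun n ↦ Z.coeff (n + 1) / q ^ (n + 1) - Z.coeff n / q ^ n) atTop (𝓝 0) := by
    have hgeom : Tendsto (fun n : ℕ ↦ K * (ρ / q) ^ (n + 1)) atTop (𝓝 (K * 0)) :=
      ((tendsto_pow_atTop_nhds_zero_of_lt_one (div_nonneg (hs.trans hsρ).le hq.le)
        ((div_lt_one hq).mpr hρq)).comp (tendsto_add_atTop_nat 1)).const_mul K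
    rw [mul_zero] at hgeom
    refine squeeze_zero_norm (fun n ↦ ?_) hgeom
    rw [hdiff, norm_div, norm_pow, Real.norm_of_nonneg hq.le, Real.norm_eq_abs, div_pow,
      ← mul_div_assoc]
    gcongr
    exact hK _
  obtain ⟨m, rfl⟩ : ∃ m, n = m + 1 := ⟨n - 1, by lia⟩
  have hsucc := succ_eq_of_reflection (b := fun n ↦ Z.coeff n / q ^ n) hlim hrefl
    (Nat.lt_succ_iff.mp hn)
  simpa [hdiff, hq.ne'] using sub_eq_zero.mpr hsucc

theorem coeff_one_pos_of_reflection {q C₀ : ℝ} (hq : 1 < q) {Z S : PowerSeries ℝ}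
    (h0 : Z.constantCoeff = 1) (hZ : derivative ℝ Z = Z * S)
    (hS : ∀ j, |S.coeff j - q ^ (j + 1)| ≤ C₀ * √q ^ j) {B : ℕ}
    (hrefl : ∀ k, ∃ M ≥ k, ∀ n m, n + m = M → B ≤ n → B ≤ m →
      Z.coeff n / q ^ n = Z.coeff m / q ^ m) (hB : B < √q) : 0 < Z.coeff 1 := by
  have hsqrt : 0 < √q := Real.sqrt_pos.mpr (by linarith)
  have hsq : √q < q := Real.sqrt_lt_self_iff.mpr hq
  set G := (1 - C q * X) * Z with hG
  have hG0 : G.coeff 0 = 1 := by simp [hG, h0]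
  have hG1 : G.coeff 1 = Z.coeff 1 - q := by
    simpa [h0] using coeff_succ_one_sub_C_mul_X_mul q Z 0
  set P : ℂ[X] := (G.trunc (B + 1)).map Complex.ofRealHom with hP
  have hcoeff (n : ℕ) : P.coeff n = (G.coeff n : ℂ) := by
    rw [hP, Polynomial.coeff_map, PowerSeries.coeff_trunc]
    split_ifs with hn
    · rfl
    · rw [coeff_eq_zero_of_reflection hsqrt hsq hZ hS hrefl (by lia)]
      simp
  have hderiv : derivative ℂ (P : PowerSeries ℂ) =
      P * PowerSeries.mk fun j ↦ ((S.coeff j - q ^ (j + 1) : ℝ) : ℂ) := by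
    ext n
    have := congrArg (fun F : PowerSeries ℝ ↦ ((F.coeff n : ℝ) : ℂ))
      (derivative_one_sub_C_mul_X_mul q hZ)
    simpa [← hG, PowerSeries.coeff_derivative, PowerSeries.coeff_mul, hcoeff] using this
  have hdegree : P.natDegree ≤ B :=
    Polynomial.natDegree_map_le.trans
      (Nat.lt_succ_iff.mp (PowerSeries.natDegree_trunc_lt G B))
  have hroots (z : ℂ) (hz : P.IsRoot z) : 1 ≤ ‖z‖ * √q :=
    one_le_norm_mul_of_isRoot (by simp [hcoeff, hG0]) hderiv hsqrt.le
      (fun j ↦ by simpa only [Complex.norm_real, Real.norm_eq_abs] using hS j) hz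
  have hbound : |Z.coeff 1 - q| < q :=
    calc |Z.coeff 1 - q| = ‖P.coeff 1‖ := by
          rw [hcoeff, hG1, Complex.norm_real, Real.norm_eq_abs]
      _ ≤ P.natDegree * √q := norm_coeff_one_le_natDegree_mul (by simp [hcoeff, hG0]) hroots
      _ ≤ B * √q := by gcongr
      _ < √q * √q := by gcongr
      _ = q := Real.mul_self_sqrt (by linarith)
  linarith [(abs_lt.mp hbound).1]

end Reciprocity

open Polynomial Module Filter

section MonomialSpan

variable {K R : Type*} [Field K] [CommRing R] [Algebra K R]

/-- The monomial `x ^ i * y ^ j` attached to the pair of exponents `(i, j)`. -/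
def bimonomial (x y : R) (p : ℕ × ℕ) : R := x ^ p.1 * y ^ p.2

variable (K) in
/-- The span of the monomials in `x` and `y` whose exponents lie in `S`. -/
def monomialSpan (x y : R) (S : Set (ℕ × ℕ)) : Submodule K R :=
  Submodule.span K (bimonomial x y '' S)

/-- The pairs of exponents `(i, j)` with `i < a` and `j < b`. -/
def exponentBox (a b : ℕ) : Set (ℕ × ℕ) := {p | p.1 < a ∧ p.2 < b}

variable (K) in
/-- The elements of bidegree less than `(a, b)` in `x` and `y`. The bounds are strict, so that the
box is empty when `a` or `b` vanishes. -/
abbrev boxSpan (x y : R) (a b : ℕ) : Submodule K R := monomialSpan K x y (exponentBox a b)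

variable {x y : R}

theorem mk_mem_exponentBox {a b i j : ℕ} : (i, j) ∈ exponentBox a b ↔ i < a ∧ j < b := Iff.rfl

theorem exponentBox_mono {a b a' b' : ℕ} (ha : a ≤ a') (hb : b ≤ b') :
    exponentBox a b ⊆ exponentBox a' b' :=
  fun _ hp ↦ ⟨hp.1.trans_le ha, hp.2.trans_le hb⟩

theorem bimonomial_mul (p q : ℕ × ℕ) :
    bimonomial x y p * bimonomial x y q = bimonomial x y (p + q) := by
  simp only [bimonomial, Prod.fst_add, Prod.snd_add, pow_add]
  ring

theorem bimonomial_swap (x y : R) (p : ℕ × ℕ) : bimonomial y x p = bimonomial x y p.swap :=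
  mul_comm _ _

theorem bimonomial_mem {S : Set (ℕ × ℕ)} {p : ℕ × ℕ} (hp : p ∈ S) :
    bimonomial x y p ∈ monomialSpan K x y S :=
  Submodule.subset_span (Set.mem_image_of_mem _ hp)

theorem bimonomial_mem_boxSpan {a b i j : ℕ} (hi : i < a) (hj : j < b) :
    bimonomial x y (i, j) ∈ boxSpan K x y a b :=
  bimonomial_mem ⟨hi, hj⟩

theorem monomialSpan_le_iff {S : Set (ℕ × ℕ)} {N : Submodule K R} :
    monomialSpan K x y S ≤ N ↔ ∀ p ∈ S, bimonomial x y p ∈ N := by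
  rw [monomialSpan, Submodule.span_le, Set.image_subset_iff]
  rfl

theorem monomialSpan_mono {S S' : Set (ℕ × ℕ)} (h : S ⊆ S') :
    monomialSpan K x y S ≤ monomialSpan K x y S' :=
  Submodule.span_mono (Set.image_mono h)

theorem boxSpan_mono {a b a' b' : ℕ} (ha : a ≤ a') (hb : b ≤ b') :
    boxSpan K x y a b ≤ boxSpan K x y a' b' :=
  monomialSpan_mono (exponentBox_mono ha hb)

theorem monomialSpan_swap (S : Set (ℕ × ℕ)) :
    monomialSpan K y x S = monomialSpan K x y (Prod.swap ⁻¹' S) := by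
  rw [monomialSpan, monomialSpan, ← Set.image_swap_eq_preimage_swap, Set.image_image]
  simp only [bimonomial_swap x y]

theorem boxSpan_swap (a b : ℕ) : boxSpan K y x a b = boxSpan K x y b a := by
  rw [boxSpan, monomialSpan_swap]
  congr 1
  ext p
  exact and_comm

theorem mul_mem_boxSpan {a b a' b' A B : ℕ} (hA : a + a' ≤ A + 1) (hB : b + b' ≤ B + 1) {u v : R}
    (hu : u ∈ boxSpan K x y a b) (hv : v ∈ boxSpan K x y a' b') :
    u * v ∈ boxSpan K x y A B := by
  suffices boxSpan K x y a b * boxSpan K x y a' b' ≤ boxSpan K x y A B from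
    this (Submodule.mul_mem_mul hu hv)
  rw [boxSpan, boxSpan, monomialSpan, monomialSpan, Submodule.span_mul_span, Submodule.span_le]
  rintro _ ⟨_, ⟨⟨i, j⟩, ⟨hi, hj⟩, rfl⟩, _, ⟨⟨k, l⟩, ⟨hk, hl⟩, rfl⟩, rfl⟩
  simp only at hi hj hk hl
  simp only [bimonomial_mul, Prod.mk_add_mk]
  exact bimonomial_mem_boxSpan (by lia) (by lia)

theorem mul_bimonomial_mem_boxSpan (i j : ℕ) {a b : ℕ} {u : R} (hu : u ∈ boxSpan K x y a b) :
    u * bimonomial x y (i, j) ∈ boxSpan K x y (a + i) (b + j) :=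
  mul_mem_boxSpan (by lia) (by lia) hu
    (bimonomial_mem_boxSpan (Nat.lt_succ_self i) (Nat.lt_succ_self j))

instance (a b : ℕ) : FiniteDimensional K (boxSpan K x y a b) :=
  FiniteDimensional.span_of_finite K (((Set.finite_Iio a).prod (Set.finite_Iio b)).image _)

end MonomialSpan

section CoordinateRing

variable {K R : Type*} [Field K] [CommRing R] [Algebra K R]

/-- The pairs of exponents `(i, j)` with `i < d` or `j < d`: on the curve `f(x) f(y) = c` with
`f` of degree `d`, the leading monomial `x ^ d * y ^ d` of the equation can be eliminated. -/
def reducedExponents (d : ℕ) : Set (ℕ × ℕ) := {p | p.1 < d ∨ p.2 < d}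

theorem mk_mem_reducedExponents {d i j : ℕ} : (i, j) ∈ reducedExponents d ↔ i < d ∨ j < d :=
  Iff.rfl

/-- The `K`-algebra `R` is, up to isomorphism, the coordinate ring of the affine curve
`f(x) f(y) = c`: it is generated by `x` and `y`, these satisfy the equation, and the reduced
monomials are linearly independent. -/
structure IsProductCurve (f : K[X]) (c : K) (x y : R) : Prop where
  natDegree_pos : 0 < f.natDegree
  ne_zero : c ≠ 0
  aeval_mul_aeval : aeval x f * aeval y f = algebraMap K R c
  linearIndepOn : LinearIndepOn K (bimonomial x y) (reducedExponents f.natDegree)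
  monomialSpan_univ : monomialSpan K x y Set.univ = ⊤

variable {f : K[X]} {c : K} {x y : R}

namespace IsProductCurve

theorem symm (H : IsProductCurve f c x y) : IsProductCurve f c y x where
  natDegree_pos := H.natDegree_pos
  ne_zero := H.ne_zero
  aeval_mul_aeval := by rw [mul_comm, H.aeval_mul_aeval]
  monomialSpan_univ := by rw [monomialSpan_swap, Set.preimage_univ, H.monomialSpan_univ]
  linearIndepOn := by
    let e : reducedExponents f.natDegree ≃ reducedExponents f.natDegree :=
      (Equiv.prodComm ℕ ℕ).subtypeEquiv fun p ↦ by simp [reducedExponents, or_comm]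
    refine (linearIndependent_equiv' e ?_).mpr H.linearIndepOn
    ext p
    exact mul_comm _ _

/-- Multiplying the equation of the curve by `x ^ i * y ^ j` and isolating the leading term. -/
theorem leadingCoeff_sq_smul_bimonomial (H : IsProductCurve f c x y) (i j : ℕ) :
    f.leadingCoeff ^ 2 • bimonomial x y (f.natDegree + i, f.natDegree + j) =
      c • bimonomial x y (i, j) -
        ∑ p ∈ (Finset.range (f.natDegree + 1) ×ˢ Finset.range (f.natDegree + 1)).erase
            (f.natDegree, f.natDegree),
          (f.coeff p.1 * f.coeff p.2) • bimonomial x y (p + (i, j)) := by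
  have hterm (p : ℕ × ℕ) : (f.coeff p.1 • x ^ p.1) * (f.coeff p.2 • y ^ p.2) *
      bimonomial x y (i, j) = (f.coeff p.1 * f.coeff p.2) • bimonomial x y (p + (i, j)) := by
    rw [smul_mul_smul_comm, smul_mul_assoc, ← bimonomial_mul, bimonomial.eq_def x y p]
  have hmem : (f.natDegree, f.natDegree) ∈
      Finset.range (f.natDegree + 1) ×ˢ Finset.range (f.natDegree + 1) := by simp
  have hrel := congrArg (· * bimonomial x y (i, j)) H.aeval_mul_aeval
  simp only [aeval_eq_sum_range] at hrel
  rw [Finset.sum_mul_sum, ← Finset.sum_product', Finset.sum_mul, ← Algebra.smul_def] at hrel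
  simp only [hterm] at hrel
  rw [eq_sub_iff_add_eq, ← hrel, ← Finset.add_sum_erase _ _ hmem, sq]
  rfl

theorem bimonomial_natDegree_add_mem (H : IsProductCurve f c x y) (i j : ℕ) :
    bimonomial x y (f.natDegree + i, f.natDegree + j) ∈
      monomialSpan K x y (exponentBox (f.natDegree + i + 1) (f.natDegree + j + 1) \
        {(f.natDegree + i, f.natDegree + j)}) := by
  have hd := H.natDegree_pos
  have hlead : f.leadingCoeff ^ 2 ≠ 0 :=
    pow_ne_zero 2 (leadingCoeff_ne_zero.mpr (ne_zero_of_natDegree_gt hd))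
  rw [← Submodule.smul_mem_iff _ hlead, H.leadingCoeff_sq_smul_bimonomial]
  refine Submodule.sub_mem _ (Submodule.smul_mem _ _ (bimonomial_mem ?_))
    (Submodule.sum_mem _ fun p hp ↦ Submodule.smul_mem _ _ (bimonomial_mem ?_))
  · simp only [Set.mem_sdiff, mk_mem_exponentBox, Set.mem_singleton_iff, Prod.mk.injEq]
    lia
  · obtain ⟨a, b⟩ := p
    simp only [Finset.mem_erase, Finset.mem_product, Finset.mem_range, Ne, Prod.mk.injEq] at hp
    simp only [Prod.mk_add_mk, Set.mem_sdiff, mk_mem_exponentBox, Set.mem_singleton_iff,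
      Prod.mk.injEq]
    lia

theorem bimonomial_mem_reduced (H : IsProductCurve f c x y) (i j : ℕ) :
    bimonomial x y (i, j) ∈
      monomialSpan K x y (exponentBox (i + 1) (j + 1) ∩ reducedExponents f.natDegree) := by
  induction hn : i + j using Nat.strong_induction_on generalizing i j with
  | _ n ih =>
    by_cases hred : (i, j) ∈ reducedExponents f.natDegree
    · exact bimonomial_mem ⟨⟨by simp, by simp⟩, hred⟩
    rw [mk_mem_reducedExponents, not_or, not_lt, not_lt] at hred
    obtain ⟨i, rfl⟩ := Nat.exists_eq_add_of_le hred.1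
    obtain ⟨j, rfl⟩ := Nat.exists_eq_add_of_le hred.2
    refine monomialSpan_le_iff.mpr ?_ (H.bimonomial_natDegree_add_mem i j)
    rintro ⟨a, b⟩ ⟨⟨ha, hb⟩, hne⟩
    simp only [Set.mem_singleton_iff, Prod.mk.injEq] at ha hb hne
    exact monomialSpan_mono (Set.inter_subset_inter_left _ (exponentBox_mono (by lia) (by lia)))
      (ih (a + b) (by lia) a b rfl)

theorem boxSpan_eq (H : IsProductCurve f c x y) (a b : ℕ) :
    boxSpan K x y a b =
      monomialSpan K x y (exponentBox a b ∩ reducedExponents f.natDegree) := by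
  refine le_antisymm (monomialSpan_le_iff.mpr fun p hp ↦ ?_)
    (monomialSpan_mono Set.inter_subset_left)
  exact monomialSpan_mono (Set.inter_subset_inter_left _ (exponentBox_mono hp.1 hp.2))
    (H.bimonomial_mem_reduced p.1 p.2)

theorem monomialSpan_reducedExponents (H : IsProductCurve f c x y) :
    monomialSpan K x y (reducedExponents f.natDegree) = ⊤ := by
  rw [eq_top_iff, ← H.monomialSpan_univ, monomialSpan_le_iff]
  exact fun p _ ↦ monomialSpan_mono Set.inter_subset_right (H.bimonomial_mem_reduced p.1 p.2)

/-- The basis of the coordinate ring formed by the reduced monomials. -/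
noncomputable def basis (H : IsProductCurve f c x y) :
    Basis (reducedExponents f.natDegree) K R :=
  Basis.mk H.linearIndepOn (by
    rw [← Set.image_eq_range]
    exact H.monomialSpan_reducedExponents.ge)

theorem basis_apply (H : IsProductCurve f c x y) (p : reducedExponents f.natDegree) :
    H.basis p = bimonomial x y p :=
  Basis.mk_apply _ _ p

/-- The coefficient of the monomial with exponents `p` in the expansion of an element in the
reduced monomials. It is zero when `p` is not reduced. -/
noncomputable def coeff (H : IsProductCurve f c x y) (p : ℕ × ℕ) : R →ₗ[K] K :=
  Finsupp.lapply p ∘ₗ Finsupp.lmapDomain K K Subtype.val ∘ₗ H.basis.repr.toLinearMap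

theorem coeff_bimonomial (H : IsProductCurve f c x y) (p : ℕ × ℕ) {q : ℕ × ℕ}
    (hq : q ∈ reducedExponents f.natDegree) :
    H.coeff p (bimonomial x y q) = if q = p then 1 else 0 := by
  rw [← H.basis_apply ⟨q, hq⟩]
  simp [coeff, Finsupp.single_apply]

theorem coeff_swap (H : IsProductCurve f c x y) (p : ℕ × ℕ) :
    H.symm.coeff p.swap = H.coeff p := by
  refine H.basis.ext fun q ↦ ?_
  have hq : (q : ℕ × ℕ).swap ∈ reducedExponents f.natDegree := Or.symm q.2
  rw [basis_apply, H.coeff_bimonomial _ q.2, bimonomial_swap y x, H.symm.coeff_bimonomial _ hq]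
  simp only [Prod.swap_inj]

theorem mem_boxSpan_iff (H : IsProductCurve f c x y) {a b : ℕ} {r : R} :
    r ∈ boxSpan K x y a b ↔ ∀ p ∉ exponentBox a b, H.coeff p r = 0 := by
  constructor
  · intro hr p hp
    suffices boxSpan K x y a b ≤ LinearMap.ker (H.coeff p) from this hr
    rw [H.boxSpan_eq, monomialSpan_le_iff]
    intro q hq
    rw [LinearMap.mem_ker, H.coeff_bimonomial p hq.2, if_neg (ne_of_mem_of_not_mem hq.1 hp)]
  · intro hr
    rw [← H.basis.linearCombination_repr r, Finsupp.linearCombination_apply]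
    refine Submodule.sum_mem _ fun p hp ↦ Submodule.smul_mem _ _ ?_
    rw [basis_apply]
    refine bimonomial_mem (by_contra fun hbox ↦ Finsupp.mem_support_iff.mp hp ?_)
    have := hr p hbox
    simpa [coeff, Finsupp.mapDomain_apply Subtype.val_injective] using this

theorem finrank_boxSpan_add (H : IsProductCurve f c x y) {a b : ℕ} (ha : f.natDegree ≤ a)
    (hb : f.natDegree ≤ b) :
    finrank K (boxSpan K x y a b) + f.natDegree ^ 2 = f.natDegree * (a + b) := by
  set d := f.natDegree with hd
  let S : Finset (ℕ × ℕ) :=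
    Finset.range a ×ˢ Finset.range b \ Finset.Ico d a ×ˢ Finset.Ico d b
  have hS : exponentBox a b ∩ reducedExponents d = S := by
    ext ⟨i, j⟩
    simp only [Set.mem_inter_iff, mk_mem_exponentBox, mk_mem_reducedExponents, S,
      Finset.coe_sdiff, Finset.coe_product, Set.mem_sdiff, Set.mem_prod, Finset.mem_coe,
      Finset.mem_range, Finset.mem_Ico]
    lia
  have hcard : S.card + (a - d) * (b - d) = a * b := by
    have hsub : Finset.Ico d a ×ˢ Finset.Ico d b ⊆ Finset.range a ×ˢ Finset.range b :=
      Finset.product_subset_product (fun i hi ↦ by simp_all) (fun i hi ↦ by simp_all)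
    simpa [S] using Finset.card_sdiff_add_card_eq_card hsub
  have hrank : finrank K (boxSpan K x y a b) = S.card := by
    have hindep : LinearIndepOn K (bimonomial x y) (S : Set (ℕ × ℕ)) :=
      hS ▸ H.linearIndepOn.mono Set.inter_subset_right
    rw [H.boxSpan_eq, hS, monomialSpan, Set.image_eq_range]
    exact (finrank_span_eq_card hindep).trans (Fintype.card_coe S)
  obtain ⟨a, rfl⟩ := Nat.exists_eq_add_of_le ha
  obtain ⟨b, rfl⟩ := Nat.exists_eq_add_of_le hb
  rw [Nat.add_sub_cancel_left, Nat.add_sub_cancel_left] at hcard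
  rw [hrank]
  linarith

theorem eventually_mem_boxSpan (H : IsProductCurve f c x y) (r : R) :
    ∀ᶠ n in atTop, r ∈ boxSpan K x y n n := by
  have hr : r ∈ monomialSpan K x y Set.univ := by simp [H.monomialSpan_univ]
  induction hr using Submodule.span_induction with
  | mem r hr =>
    obtain ⟨p, -, rfl⟩ := hr
    filter_upwards [eventually_gt_atTop p.1, eventually_gt_atTop p.2] with n h₁ h₂
    exact bimonomial_mem_boxSpan h₁ h₂
  | zero => simp
  | add u v _ _ hu hv => filter_upwards [hu, hv] with n using Submodule.add_mem _
  | smul a u _ hu => filter_upwards [hu] with n using Submodule.smul_mem _ a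

theorem eventually_subset_map_boxSpan (H : IsProductCurve f c x y) {M : Type*} [AddCommGroup M]
    [Module K M] {π : R →ₗ[K] M} (hπ : Function.Surjective π) (s : Finset M) :
    ∀ᶠ n in atTop, (s : Set M) ⊆ (boxSpan K x y n n).map π := by
  have hmem (z : M) : ∀ᶠ n in atTop, z ∈ (boxSpan K x y n n).map π := by
    obtain ⟨r, rfl⟩ := hπ z
    filter_upwards [H.eventually_mem_boxSpan r] with n hn using Submodule.mem_map_of_mem hn
  exact (Finset.eventually_all s).mpr fun z _ ↦ hmem z

theorem eventually_map_boxSpan_eq_top (H : IsProductCurve f c x y) {M : Type*} [AddCommGroup M]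
    [Module K M] [Module.Finite K M] {π : R →ₗ[K] M} (hπ : Function.Surjective π) :
    ∀ᶠ n in atTop, (boxSpan K x y n n).map π = ⊤ := by
  obtain ⟨s, hs⟩ := (Module.Finite.fg_top : (⊤ : Submodule K M).FG)
  filter_upwards [H.eventually_subset_map_boxSpan hπ s] with n hn
  rwa [eq_top_iff, ← hs, Submodule.span_le]

end IsProductCurve

end CoordinateRing

section MonicElements

variable {K R : Type*} [Field K] [CommRing R] [Algebra K R] {f : K[X]} {c : K} {x y : R}

variable (K) in
/-- The element `t` has the same terms of top degree `j` in `x` and in `y` as `x ^ j + y ^ j`.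
Such elements have a pole of order exactly `j` at each point at infinity of the curve
`f(x) f(y) = c`. -/
def IsMonicOfLevel (x y : R) (j : ℕ) (t : R) : Prop :=
  t - (x ^ j + y ^ j) ∈ boxSpan K x y j j

namespace IsMonicOfLevel

variable {j : ℕ} {t : R}

theorem symm (ht : IsMonicOfLevel K x y j t) : IsMonicOfLevel K y x j t := by
  rwa [IsMonicOfLevel, boxSpan_swap, add_comm]

theorem mem_boxSpan (ht : IsMonicOfLevel K x y j t) :
    t ∈ boxSpan K x y (j + 1) (j + 1) := by
  have hx : x ^ j ∈ boxSpan K x y (j + 1) (j + 1) := by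
    simpa [bimonomial] using
      bimonomial_mem_boxSpan (K := K) (x := x) (y := y) (Nat.lt_succ_self j) j.succ_pos
  have hy : y ^ j ∈ boxSpan K x y (j + 1) (j + 1) := by
    simpa [bimonomial] using
      bimonomial_mem_boxSpan (K := K) (x := x) (y := y) j.succ_pos (Nat.lt_succ_self j)
  simpa using Submodule.add_mem _ (boxSpan_mono (Nat.le_succ j) (Nat.le_succ j) ht)
    (Submodule.add_mem _ hx hy)

theorem mul_bimonomial_sub_mem (ht : IsMonicOfLevel K x y j t) (i l : ℕ) :
    t * bimonomial x y (i, l) - (bimonomial x y (j + i, l) + bimonomial x y (i, j + l)) ∈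
      boxSpan K x y (j + i) (j + l) := by
  convert mul_bimonomial_mem_boxSpan i l ht using 1
  simp only [bimonomial, pow_add]
  ring

theorem bimonomial_sub_mul_mem (ht : IsMonicOfLevel K x y j t) (hj : 0 < j) (i l : ℕ) :
    bimonomial x y (j + i, l) - t * bimonomial x y (i, l) ∈
      boxSpan K x y (j + i) (j + l + 1) := by
  have := Submodule.add_mem _
    (boxSpan_mono le_rfl (Nat.le_succ _) (ht.mul_bimonomial_sub_mem i l))
    (bimonomial_mem_boxSpan (i := i) (by lia) (Nat.lt_succ_self (j + l)))
  convert Submodule.neg_mem _ this using 1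
  ring

end IsMonicOfLevel

namespace IsProductCurve

variable {j : ℕ} {t : R}

theorem coeff_mul_of_isMonicOfLevel (H : IsProductCurve f c x y) {n b : ℕ} (hj : 0 < j)
    (hn : f.natDegree ≤ n) (ht : IsMonicOfLevel K x y j t) {w : R}
    (hw : w ∈ boxSpan K x y (n + 1) (n + 1)) :
    H.coeff (j + n, b) (t * w) = H.coeff (n, b) w := by
  rw [H.boxSpan_eq] at hw
  suffices monomialSpan K x y (exponentBox (n + 1) (n + 1) ∩ reducedExponents f.natDegree) ≤
      LinearMap.eqLocus (H.coeff (j + n, b) ∘ₗ LinearMap.mulLeft K t) (H.coeff (n, b)) from this hw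
  rw [monomialSpan_le_iff]
  rintro ⟨i, l⟩ ⟨⟨hi, hl⟩, hred⟩
  simp only at hi hl
  have hsmall (r : R) (hr : r ∈ boxSpan K x y (j + n) (j + n)) : H.coeff (j + n, b) r = 0 :=
    H.mem_boxSpan_iff.mp hr _ fun h ↦ (lt_irrefl _ h.1).elim
  have herror := hsmall _
    (boxSpan_mono (by lia) (by lia) (ht.mul_bimonomial_sub_mem i l))
  have hy : H.coeff (j + n, b) (bimonomial x y (i, j + l)) = 0 := by
    rcases (by lia : l < n ∨ l = n) with hln | rfl
    · exact hsmall _ (bimonomial_mem_boxSpan (by lia) (by lia))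
    · have := mk_mem_reducedExponents.mp hred
      rw [H.coeff_bimonomial _ (mk_mem_reducedExponents.mpr (by lia)), if_neg]
      simp only [Prod.mk.injEq]
      lia
  have hx : H.coeff (j + n, b) (bimonomial x y (j + i, l)) =
      H.coeff (n, b) (bimonomial x y (i, l)) := by
    rw [H.coeff_bimonomial _ hred]
    rcases (by lia : i < n ∨ i = n) with hin | rfl
    · rw [hsmall _ (bimonomial_mem_boxSpan (by lia) (by lia)), if_neg (by grind)]
    · have := mk_mem_reducedExponents.mp hred
      rw [H.coeff_bimonomial _ (mk_mem_reducedExponents.mpr (by lia))]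
      simp
  rwa [map_sub, map_add, hx, hy, add_zero, sub_eq_zero] at herror

theorem ne_zero_of_isMonicOfLevel (H : IsProductCurve f c x y) (hj : 0 < j)
    (ht : IsMonicOfLevel K x y j t) : t ≠ 0 := by
  rintro rfl
  have hd := H.natDegree_pos
  have hcoeff := H.coeff_mul_of_isMonicOfLevel (b := 0) hj le_rfl ht
    (bimonomial_mem_boxSpan (Nat.lt_succ_self _) (Nat.succ_pos f.natDegree))
  rw [zero_mul, map_zero, H.coeff_bimonomial _ (Or.inr hd), if_pos rfl] at hcoeff
  exact zero_ne_one hcoeff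

theorem mem_boxSpan_of_mul_mem (H : IsProductCurve f c x y) {k : ℕ} (hj : 0 < j)
    (hk : f.natDegree ≤ k) (ht : IsMonicOfLevel K x y j t) {w : R}
    (hw : t * w ∈ boxSpan K x y (j + k) (j + k)) : w ∈ boxSpan K x y k k := by
  obtain ⟨n, hn, hkn⟩ := ((H.eventually_mem_boxSpan w).and (eventually_ge_atTop k)).exists
  obtain ⟨n, rfl⟩ := Nat.exists_eq_add_of_le hkn
  induction n with
  | zero => exact hn
  | succ n ih =>
    refine ih (H.mem_boxSpan_iff.mpr ?_) (Nat.le_add_right k n)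
    rintro ⟨a, b⟩ hab
    have htw (p : ℕ × ℕ) (hp : p ∉ exponentBox (j + k) (j + k)) : H.coeff p (t * w) = 0 :=
      H.mem_boxSpan_iff.mp hw p hp
    by_cases hbox : (a, b) ∈ exponentBox (k + n + 1) (k + n + 1)
    · rw [mk_mem_exponentBox] at hab hbox
      rcases (by lia : a = k + n ∨ b = k + n) with rfl | rfl
      · rw [← H.coeff_mul_of_isMonicOfLevel (n := k + n) hj (by lia) ht hn]
        exact htw _ (by rw [mk_mem_exponentBox]; lia)
      · rw [← H.coeff_swap, Prod.swap_prod_mk,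
          ← H.symm.coeff_mul_of_isMonicOfLevel (n := k + n) hj (by lia) ht.symm
            (by rwa [boxSpan_swap]),
          ← Prod.swap_prod_mk, H.coeff_swap]
        exact htw _ (by rw [mk_mem_exponentBox]; lia)
    · exact H.mem_boxSpan_iff.mp hn _ hbox

theorem boxSpan_le_boxSpan_sup_range (H : IsProductCurve f c x y) (hj : f.natDegree ≤ j)
    (ht : IsMonicOfLevel K x y j t) (l : ℕ) :
    boxSpan K x y (j + f.natDegree) l ≤
      boxSpan K x y (j + f.natDegree) j ⊔ LinearMap.range (LinearMap.mulLeft K t) := by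
  have hd := H.natDegree_pos
  induction l with
  | zero => exact le_sup_of_le_left (boxSpan_mono le_rfl (Nat.zero_le _))
  | succ b ih =>
    rcases lt_or_ge b j with hbj | hjb
    · exact le_sup_of_le_left (boxSpan_mono le_rfl (by lia))
    rw [H.boxSpan_eq, monomialSpan_le_iff]
    rintro ⟨i, l⟩ ⟨⟨hi, hl⟩, hred⟩
    rw [mk_mem_reducedExponents] at hred
    simp only at hi hl
    rcases (by lia : l < b ∨ l = b) with hlb | rfl
    · exact ih (bimonomial_mem_boxSpan hi hlb)
    obtain ⟨m, rfl⟩ := Nat.exists_eq_add_of_le hjb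
    have hrem := ht.symm.bimonomial_sub_mul_mem (hd.trans_le hj) m i
    rw [boxSpan_swap, bimonomial_swap x y, bimonomial_swap x y] at hrem
    exact (Submodule.sub_mem_iff_left _ (Submodule.mem_sup_right (LinearMap.mem_range_self _ _))).mp
      (ih (boxSpan_mono (by lia) le_rfl hrem))

theorem boxSpan_sup_range_eq_top (H : IsProductCurve f c x y) (hj : f.natDegree ≤ j)
    (ht : IsMonicOfLevel K x y j t) :
    boxSpan K x y (j + f.natDegree) j ⊔ LinearMap.range (LinearMap.mulLeft K t) = ⊤ := by
  have hj' := H.natDegree_pos.trans_le hj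
  rw [eq_top_iff]
  intro r _
  obtain ⟨n, hn⟩ := (H.eventually_mem_boxSpan r).exists
  refine (?_ : boxSpan K x y n n ≤ _) hn
  clear hn
  induction n with
  | zero => exact le_sup_of_le_left (boxSpan_mono (Nat.zero_le _) (Nat.zero_le _))
  | succ n ih =>
    rcases lt_or_ge n (j + f.natDegree) with hn | hn
    · exact (boxSpan_mono hn le_rfl).trans (H.boxSpan_le_boxSpan_sup_range hj ht _)
    obtain ⟨m, rfl⟩ := Nat.exists_eq_add_of_le ((Nat.le_add_right _ _).trans hn)
    rw [H.boxSpan_eq, monomialSpan_le_iff]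
    rintro ⟨a, b⟩ ⟨⟨ha, hb⟩, hred⟩
    rw [mk_mem_reducedExponents] at hred
    simp only at ha hb
    by_cases hab : a < j + m ∧ b < j + m
    · exact ih (bimonomial_mem_boxSpan hab.1 hab.2)
    suffices ∃ s, bimonomial x y (a, b) - t * s ∈ boxSpan K x y (j + m) (j + m) by
      obtain ⟨s, hs⟩ := this
      exact (Submodule.sub_mem_iff_left _
        (Submodule.mem_sup_right (LinearMap.mem_range_self _ s))).mp (ih hs)
    rcases (by lia : a = j + m ∧ b < f.natDegree ∨ b = j + m ∧ a < f.natDegree) with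
      ⟨rfl, hb⟩ | ⟨rfl, ha⟩
    · exact ⟨_, boxSpan_mono le_rfl (by lia) (ht.bimonomial_sub_mul_mem hj' m b)⟩
    · have hrem := ht.symm.bimonomial_sub_mul_mem hj' m a
      rw [boxSpan_swap, bimonomial_swap x y, bimonomial_swap x y] at hrem
      exact ⟨_, boxSpan_mono (by lia) le_rfl hrem⟩

theorem exists_sub_mul_mem_boxSpan (H : IsProductCurve f c x y) (hj : f.natDegree ≤ j)
    (ht : IsMonicOfLevel K x y j t) (r : R) :
    ∃ s, r - t * s ∈ boxSpan K x y (j + f.natDegree) j := by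
  have hr : r ∈ boxSpan K x y (j + f.natDegree) j ⊔
      LinearMap.range (LinearMap.mulLeft K t) :=
    H.boxSpan_sup_range_eq_top hj ht ▸ Submodule.mem_top
  obtain ⟨v, hv, _, ⟨s, rfl⟩, rfl⟩ := Submodule.mem_sup.mp hr
  exact ⟨s, by simpa using hv⟩

end IsProductCurve

end MonicElements

section PrincipalQuotient

variable {K R : Type*} [Field K] [CommRing R] [Algebra K R]

theorem finrank_map_mkₐ_add_finrank_comap [IsDomain R] {g : R} (hg : g ≠ 0) (V : Submodule K R)
    [FiniteDimensional K V] :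
    finrank K (V.map (Ideal.Quotient.mkₐ K (Ideal.span {g})).toLinearMap) +
      finrank K (V.comap (LinearMap.mulLeft K g)) = finrank K V := by
  set π := (Ideal.Quotient.mkₐ K (Ideal.span {g})).toLinearMap
  have hker : LinearMap.ker π = LinearMap.range (LinearMap.mulLeft K g) := by
    ext r
    rw [LinearMap.mem_ker]
    exact (Ideal.Quotient.eq_zero_iff_mem.trans Ideal.mem_span_singleton).trans
      (exists_congr fun s ↦ eq_comm)
  have hmul : Function.Injective (LinearMap.mulLeft K g) := mul_right_injective₀ hg
  have hcomap : (LinearMap.ker (π.domRestrict V)).map V.subtype =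
      (V.comap (LinearMap.mulLeft K g)).map (LinearMap.mulLeft K g) := by
    rw [LinearMap.ker_domRestrict, Submodule.map_comap_eq, Submodule.range_subtype, hker,
      Submodule.map_comap_eq, inf_comm]
  rw [← LinearMap.finrank_range_add_finrank_ker (π.domRestrict V), LinearMap.range_domRestrict,
    (Submodule.equivMapOfInjective _ hmul _).finrank_eq, ← hcomap,
    Submodule.finrank_map_subtype_eq]

variable {f : K[X]} {c : K} {x y : R}

namespace IsProductCurve

variable [IsDomain R] {g : R}

theorem finrank_map_boxSpan_le (H : IsProductCurve f c x y) (hg : g ≠ 0) {a b n : ℕ}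
    (hmem : g ∈ boxSpan K x y (a + 1) (b + 1)) (hn : f.natDegree ≤ n) :
    finrank K ((boxSpan K x y (n + a) (n + b)).map
      (Ideal.Quotient.mkₐ K (Ideal.span {g})).toLinearMap) ≤ f.natDegree * (a + b) := by
  have hsplit := finrank_map_mkₐ_add_finrank_comap hg (boxSpan K x y (n + a) (n + b))
  have : FiniteDimensional K ((boxSpan K x y (n + a) (n + b)).comap (LinearMap.mulLeft K g)) :=
    Module.Finite.of_injective ((LinearMap.mulLeft K g).restrict
      (q := boxSpan K x y (n + a) (n + b)) fun _ hv ↦ hv)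
      fun u v h ↦ Subtype.ext (mul_left_cancel₀ hg (congrArg Subtype.val h))
  have hle : finrank K (boxSpan K x y n n) ≤
      finrank K ((boxSpan K x y (n + a) (n + b)).comap (LinearMap.mulLeft K g)) :=
    Submodule.finrank_mono fun v hv ↦ mul_mem_boxSpan (by lia) (by lia) hmem hv
  have hbig := H.finrank_boxSpan_add (a := n + a) (b := n + b) (by lia) (by lia)
  have hsmall := H.finrank_boxSpan_add hn hn
  linarith

theorem rank_quotient_span_le (H : IsProductCurve f c x y) (hg : g ≠ 0) {a b : ℕ}
    (hmem : g ∈ boxSpan K x y (a + 1) (b + 1)) :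
    Module.rank K (R ⧸ Ideal.span {g}) ≤ (f.natDegree * (a + b) : ℕ) := by
  refine rank_le fun s hs ↦ ?_
  obtain ⟨n, hsub, hn⟩ := ((H.eventually_subset_map_boxSpan
    (π := (Ideal.Quotient.mkₐ K (Ideal.span {g})).toLinearMap) Ideal.Quotient.mk_surjective s).and
      (eventually_ge_atTop f.natDegree)).exists
  calc s.card = finrank K (Submodule.span K (s : Set (R ⧸ Ideal.span {g}))) :=
        (finrank_span_finset_eq_card hs).symm
    _ ≤ _ := Submodule.finrank_mono (Submodule.span_le.mpr (hsub.trans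
        (Submodule.map_mono (boxSpan_mono (Nat.le_add_right n a) (Nat.le_add_right n b)))))
    _ ≤ _ := H.finrank_map_boxSpan_le hg hmem hn

theorem finite_quotient_span (H : IsProductCurve f c x y) (hg : g ≠ 0) :
    Module.Finite K (R ⧸ Ideal.span {g}) := by
  obtain ⟨n, hn⟩ := (H.eventually_mem_boxSpan g).exists
  rw [← Module.rank_lt_aleph0_iff]
  exact (H.rank_quotient_span_le hg (boxSpan_mono n.le_succ n.le_succ hn)).trans_lt
    Cardinal.natCast_lt_aleph0

theorem finrank_quotient_span_le (H : IsProductCurve f c x y) (hg : g ≠ 0) {a b : ℕ}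
    (hmem : g ∈ boxSpan K x y (a + 1) (b + 1)) :
    finrank K (R ⧸ Ideal.span {g}) ≤ f.natDegree * (a + b) := by
  have := H.finite_quotient_span hg
  exact_mod_cast (finrank_eq_rank K (R ⧸ Ideal.span {g})).trans_le (H.rank_quotient_span_le hg hmem)

theorem finrank_quotient_span_of_isMonicOfLevel (H : IsProductCurve f c x y) {j : ℕ} {t : R}
    (hj : f.natDegree ≤ j) (ht : IsMonicOfLevel K x y j t) :
    finrank K (R ⧸ Ideal.span {t}) = 2 * f.natDegree * j := by
  have hj' := H.natDegree_pos.trans_le hj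
  have ht0 := H.ne_zero_of_isMonicOfLevel hj' ht
  have hsplit :=
    finrank_map_mkₐ_add_finrank_comap ht0 (boxSpan K x y (j + f.natDegree) (j + f.natDegree))
  have htop : (boxSpan K x y (j + f.natDegree) (j + f.natDegree)).map
      (Ideal.Quotient.mkₐ K (Ideal.span {t})).toLinearMap = ⊤ := by
    rw [eq_top_iff]
    intro z _
    obtain ⟨r, rfl⟩ := Ideal.Quotient.mk_surjective z
    obtain ⟨s, hs⟩ := H.exists_sub_mul_mem_boxSpan hj ht r
    refine ⟨r - t * s, boxSpan_mono le_rfl (Nat.le_add_right _ _) hs, ?_⟩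
    exact Ideal.Quotient.eq.mpr (by simp [Ideal.mem_span_singleton])
  have hcomap : (boxSpan K x y (j + f.natDegree) (j + f.natDegree)).comap
      (LinearMap.mulLeft K t) = boxSpan K x y f.natDegree f.natDegree :=
    le_antisymm (fun w hw ↦ H.mem_boxSpan_of_mul_mem hj' le_rfl ht hw)
      (fun w hw ↦ mul_mem_boxSpan (by lia) (by lia) ht.mem_boxSpan hw)
  have hbig := H.finrank_boxSpan_add (Nat.le_add_left f.natDegree j) (Nat.le_add_left _ j)
  have hsmall := H.finrank_boxSpan_add le_rfl le_rfl
  rw [htop, hcomap, finrank_top] at hsplit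
  linarith

theorem eventually_exists_isMonicOfLevel_dvd (H : IsProductCurve f c x y) (hg : g ≠ 0) :
    ∀ᶠ j in atTop, ∃ t, IsMonicOfLevel K x y j t ∧ g ∣ t := by
  have := H.finite_quotient_span hg
  filter_upwards [H.eventually_map_boxSpan_eq_top
    (π := (Ideal.Quotient.mkₐ K (Ideal.span {g})).toLinearMap) Ideal.Quotient.mk_surjective]
    with j hj
  obtain ⟨v, hv, hvj⟩ := hj.ge (Submodule.mem_top (x := Ideal.Quotient.mk _ (x ^ j + y ^ j)))
  refine ⟨x ^ j + y ^ j - v, ?_, Ideal.mem_span_singleton.mp (Ideal.Quotient.eq.mp hvj.symm)⟩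
  rw [IsMonicOfLevel, sub_sub_cancel_left]
  exact Submodule.neg_mem _ hv

/-- Reduce a monic multiple `g * g'` of `g` instead, and cancel `g'` afterwards. -/
theorem exists_sub_mul_mem_boxSpan_of_mem (H : IsProductCurve f c x y) {k : ℕ}
    (hk : f.natDegree ≤ k) (hg : g ≠ 0) (hmem : g ∈ boxSpan K x y (k + 1 - f.natDegree) (k + 1))
    (r : R) : ∃ s, r - g * s ∈ boxSpan K x y k k := by
  obtain ⟨j, ⟨_, ht, g', rfl⟩, hj⟩ := ((H.eventually_exists_isMonicOfLevel_dvd hg).and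
    (eventually_ge_atTop f.natDegree)).exists
  obtain ⟨s, hs⟩ := H.exists_sub_mul_mem_boxSpan hj ht (g' * r)
  refine ⟨s, H.mem_boxSpan_of_mul_mem (H.natDegree_pos.trans_le hj) hk ht ?_⟩
  rw [show g * g' * (r - g * s) = g * (g' * r - g * g' * s) by ring]
  exact mul_mem_boxSpan (by lia) (by lia) hmem hs

end IsProductCurve

end PrincipalQuotient

section Irreducibility

theorem irreducible_of_irreducible_reverse {A : Type*} [CommRing A] [IsDomain A] {P : A[X]}
    (h0 : P.coeff 0 ≠ 0) (hP : Irreducible P.reverse) : Irreducible P := by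
  have isUnit_of_reverse {Q : A[X]} (hQ : Q.coeff 0 ≠ 0) (hu : IsUnit Q.reverse) : IsUnit Q := by
    have hdeg := natDegree_eq_zero_of_isUnit hu
    rw [reverse_natDegree, natTrailingDegree_eq_zero.mpr (Or.inr hQ), Nat.sub_zero] at hdeg
    rw [eq_C_of_natDegree_eq_zero hdeg] at hu ⊢
    rwa [reverse_C] at hu
  refine ⟨fun hu ↦ hP.not_isUnit ?_, fun Q S hQS ↦ ?_⟩
  · obtain ⟨a, -, rfl⟩ := isUnit_iff.mp hu
    rwa [reverse_C]
  · subst hQS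
    rw [mul_coeff_zero] at h0
    rw [reverse_mul_of_domain] at hP
    exact (hP.isUnit_or_isUnit rfl).imp (isUnit_of_reverse (left_ne_zero_of_mul h0))
      (isUnit_of_reverse (right_ne_zero_of_mul h0))

end Irreducibility

section CurveRing

variable {K : Type*} [Field K]

/-- The polynomial `f(X) f(Y) - c`, as a polynomial in `Y` over `K[X]`. -/
noncomputable def curvePolynomial (f : K[X]) (c : K) : K[X][X] := C f * f.map C - C (C c)

/-- The coordinate ring of the affine curve `f(X) f(Y) = c`. -/
abbrev CurveRing (f : K[X]) (c : K) := AdjoinRoot (curvePolynomial f c)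

/-- The first coordinate function on the curve `f(X) f(Y) = c`. -/
noncomputable def xCoord (f : K[X]) (c : K) : CurveRing f c := AdjoinRoot.of _ X

/-- The second coordinate function on the curve `f(X) f(Y) = c`. -/
noncomputable def yCoord (f : K[X]) (c : K) : CurveRing f c := AdjoinRoot.root _

variable {f : K[X]} {c : K}

theorem coeff_curvePolynomial (n : ℕ) :
    (curvePolynomial f c).coeff n = f * C (f.coeff n) - if n = 0 then C c else 0 := by
  rw [curvePolynomial, coeff_sub, coeff_C_mul, coeff_map, coeff_C]

theorem coeff_curvePolynomial_natDegree (hd : 0 < f.natDegree) :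
    (curvePolynomial f c).coeff f.natDegree = f * C f.leadingCoeff := by
  rw [coeff_curvePolynomial, if_neg hd.ne', sub_zero, leadingCoeff]

theorem natDegree_curvePolynomial (hd : 0 < f.natDegree) :
    (curvePolynomial f c).natDegree = f.natDegree := by
  have hf := ne_zero_of_natDegree_gt hd
  refine natDegree_eq_of_le_of_coeff_ne_zero (natDegree_le_iff_coeff_eq_zero.mpr fun n hn ↦ ?_) ?_
  · rw [coeff_curvePolynomial, if_neg (by lia), coeff_eq_zero_of_natDegree_lt hn]
    simp
  · rw [coeff_curvePolynomial_natDegree hd]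
    exact mul_ne_zero hf (C_ne_zero.mpr (leadingCoeff_ne_zero.mpr hf))

theorem eq_zero_of_curvePolynomial_dvd (hd : 0 < f.natDegree) {G : K[X][X]}
    (hG : curvePolynomial f c ∣ G)
    (h : ∀ i j, f.natDegree ≤ i → f.natDegree ≤ j → (G.coeff j).coeff i = 0) : G = 0 := by
  obtain ⟨g, rfl⟩ := hG
  by_contra hne
  have hg : g.leadingCoeff.leadingCoeff ≠ 0 :=
    leadingCoeff_ne_zero.mpr (leadingCoeff_ne_zero.mpr (right_ne_zero_of_mul hne))
  have hf : f.leadingCoeff ≠ 0 := leadingCoeff_ne_zero.mpr (ne_zero_of_natDegree_gt hd)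
  have htop := coeff_mul_degree_add_degree (curvePolynomial f c) g
  rw [leadingCoeff, natDegree_curvePolynomial hd, coeff_curvePolynomial_natDegree hd, mul_comm f,
    mul_assoc] at htop
  have hzero := h (f.natDegree + g.leadingCoeff.natDegree) (f.natDegree + g.natDegree)
    (Nat.le_add_right _ _) (Nat.le_add_right _ _)
  rw [htop, coeff_C_mul, coeff_mul_degree_add_degree] at hzero
  exact mul_ne_zero hf (mul_ne_zero hf hg) hzero

section Monomials

variable (f c) in
/-- The quotient map from `K[X][Y]` to the coordinate ring, as a map of `K`-algebras. -/
noncomputable def curveRingMk : K[X][X] →ₐ[K] CurveRing f c :=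
  (AdjoinRoot.mkₐ (curvePolynomial f c)).restrictScalars K

/-- The basis `X ^ i * Y ^ j` of `K[X][Y]` over `K`, indexed by `(i, j)`. -/
noncomputable def bimonomialBasis : Basis (ℕ × ℕ) K K[X][X] :=
  (basisMonomials K).smulTower (basisMonomials K[X])

theorem bimonomialBasis_repr (G : K[X][X]) (i j : ℕ) :
    bimonomialBasis.repr G (i, j) = (G.coeff j).coeff i := by
  rw [bimonomialBasis, Basis.smulTower_repr_mk]
  rfl

theorem curveRingMk_comp_bimonomialBasis :
    (curveRingMk f c).toLinearMap ∘ bimonomialBasis = bimonomial (xCoord f c) (yCoord f c) := by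
  ext p
  have hX : bimonomialBasis p = C (X ^ p.1 : K[X]) * X ^ p.2 := by
    simp only [bimonomialBasis, Basis.smulTower_apply, coe_basisMonomials,
      monomial_one_right_eq_X_pow, smul_eq_C_mul]
  rw [Function.comp_apply, hX, C_pow, AlgHom.toLinearMap_apply, map_mul, map_pow, map_pow,
    bimonomial]
  rfl

theorem aeval_xCoord (g : K[X]) : aeval (xCoord f c) g = curveRingMk f c (C g) := by
  have := aeval_algHom_apply ((curveRingMk f c).comp (Algebra.algHom K K[X] K[X][X])) X g
  rwa [aeval_X_left_apply] at this

theorem aeval_yCoord (g : K[X]) : aeval (yCoord f c) g = curveRingMk f c (g.map C) :=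
  (aeval_map_algebraMap K[X] (AdjoinRoot.root (curvePolynomial f c)) g).symm.trans
    (AdjoinRoot.aeval_eq (g.map C))

theorem linearIndepOn_bimonomial_coord (hd : 0 < f.natDegree) :
    LinearIndepOn K (bimonomial (xCoord f c) (yCoord f c)) (reducedExponents f.natDegree) := by
  have hindep : LinearIndependent K
      (bimonomialBasis ∘ Subtype.val : reducedExponents f.natDegree → K[X][X]) :=
    bimonomialBasis.linearIndependent.comp _ Subtype.val_injective
  have hdisj : Disjoint (Submodule.span K (Set.range (bimonomialBasis ∘ Subtype.val :
      reducedExponents f.natDegree → K[X][X]))) (LinearMap.ker (curveRingMk f c).toLinearMap) := by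
    refine Submodule.disjoint_def.mpr fun G hspan hker ↦
      eq_zero_of_curvePolynomial_dvd hd (AdjoinRoot.mk_eq_zero.mp hker) fun i j hi hj ↦ ?_
    rw [Set.range_comp, Subtype.range_coe, Basis.mem_span_image] at hspan
    rw [← bimonomialBasis_repr]
    by_contra hne
    have := mk_mem_reducedExponents.mp (hspan (Finsupp.mem_support_iff.mpr hne))
    lia
  rw [LinearIndepOn, ← curveRingMk_comp_bimonomialBasis]
  exact hindep.map hdisj

theorem monomialSpan_coord : monomialSpan K (xCoord f c) (yCoord f c) Set.univ = ⊤ := by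
  rw [monomialSpan, Set.image_univ, ← curveRingMk_comp_bimonomialBasis, Set.range_comp,
    Submodule.span_image, bimonomialBasis.span_eq, Submodule.map_top, LinearMap.range_eq_top]
  exact AdjoinRoot.mk_surjective

theorem isProductCurve_coord (hd : 0 < f.natDegree) (hc : c ≠ 0) :
    IsProductCurve f c (xCoord f c) (yCoord f c) where
  natDegree_pos := hd
  ne_zero := hc
  aeval_mul_aeval := by
    have hself : curveRingMk f c (C f * f.map C - C (C c)) = 0 := AdjoinRoot.mk_self
    rw [map_sub, sub_eq_zero] at hself
    rw [aeval_xCoord, aeval_yCoord, ← map_mul, hself]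
    rfl
  linearIndepOn := linearIndepOn_bimonomial_coord hd
  monomialSpan_univ := monomialSpan_coord

end Monomials

/-- Eisenstein's criterion applies at a prime factor of `f` to the polynomial with reversed
coefficients, since `f` divides all of them but the leading one. -/
theorem irreducible_curvePolynomial (hd : 0 < f.natDegree) (hc : c ≠ 0) (hf : Squarefree f) :
    Irreducible (curvePolynomial f c) := by
  obtain ⟨π, hπ, hπf⟩ := exists_irreducible_of_natDegree_pos hd
  have isUnit_of_dvd {g : K[X]} (hg : g ∣ f) (hg0 : g ∣ (curvePolynomial f c).coeff 0) :
      IsUnit g := by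
    rw [coeff_curvePolynomial, if_pos rfl, dvd_sub_right (hg.mul_right _)] at hg0
    exact isUnit_of_dvd_unit hg0 (isUnit_C.mpr hc.isUnit)
  have hπ0 : ¬π ∣ (curvePolynomial f c).coeff 0 := fun h ↦ hπ.not_isUnit (isUnit_of_dvd hπf h)
  have h0 : (curvePolynomial f c).coeff 0 ≠ 0 := fun h ↦ hπ0 (h ▸ dvd_zero π)
  have hdeg : (curvePolynomial f c).reverse.natDegree = f.natDegree := by
    rw [reverse_natDegree, natTrailingDegree_eq_zero.mpr (Or.inr h0), Nat.sub_zero,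
      natDegree_curvePolynomial hd]
  have hcoeff (n : ℕ) (hn : n ≤ f.natDegree) : (curvePolynomial f c).reverse.coeff n =
      (curvePolynomial f c).coeff (f.natDegree - n) := by
    rw [coeff_reverse, natDegree_curvePolynomial hd, revAt_le hn]
  have hlead : (curvePolynomial f c).reverse.leadingCoeff = (curvePolynomial f c).coeff 0 := by
    rw [leadingCoeff, hdeg, hcoeff _ le_rfl, Nat.sub_self]
  have hconst : (curvePolynomial f c).reverse.coeff 0 = f * C f.leadingCoeff := by
    rw [hcoeff 0 hd.le, Nat.sub_zero, coeff_curvePolynomial_natDegree hd]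
  have hunit : IsUnit (C f.leadingCoeff) :=
    isUnit_C.mpr (leadingCoeff_ne_zero.mpr (ne_zero_of_natDegree_gt hd)).isUnit
  refine irreducible_of_irreducible_reverse h0 (irreducible_of_eisenstein_criterion
    (P := Ideal.span {π}) ((Ideal.span_singleton_prime hπ.ne_zero).mpr hπ.prime) ?_
    (fun n hn ↦ ?_) ?_ ?_ fun g hg ↦ ?_)
  · rwa [hlead, Ideal.mem_span_singleton]
  · have hn : n < f.natDegree := hdeg ▸ coe_lt_degree.mp hn
    rw [hcoeff n hn.le, coeff_curvePolynomial, if_neg (by lia), sub_zero,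
      Ideal.mem_span_singleton]
    exact hπf.mul_right _
  · rw [← natDegree_pos_iff_degree_pos, hdeg]
    exact hd
  · rw [hconst, Ideal.span_singleton_pow, Ideal.mem_span_singleton, hunit.dvd_mul_right, sq]
    exact fun h ↦ hπ.not_isUnit (hf π h)
  · rw [C_dvd_iff_dvd_coeff] at hg
    exact isUnit_of_dvd (hunit.dvd_mul_right.mp (hconst ▸ hg 0)) (hlead ▸ hg _)

theorem isDomain_curveRing (hd : 0 < f.natDegree) (hc : c ≠ 0) (hf : Squarefree f) :
    IsDomain (CurveRing f c) :=
  AdjoinRoot.isDomain_of_prime (irreducible_curvePolynomial hd hc hf).prime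

variable {S : Type*} [CommRing S] [Algebra K S]

theorem exists_algHom_coord {a b : S} (h : aeval a f * aeval b f = algebraMap K S c) :
    ∃ φ : CurveRing f c →ₐ[K] S, φ (xCoord f c) = a ∧ φ (yCoord f c) = b := by
  have heval : (curvePolynomial f c).eval₂ (aeval a : K[X] →ₐ[K] S) b = 0 := by
    have hC : ((aeval a : K[X] →ₐ[K] S) : K[X] →+* S).comp C = algebraMap K S := by
      ext r
      simp
    rw [curvePolynomial, eval₂_sub, eval₂_mul, eval₂_C, eval₂_C, eval₂_map, hC]
    simpa [sub_eq_zero, ← aeval_def] using h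
  exact ⟨AdjoinRoot.liftAlgHom _ (aeval a) b heval, by simp [xCoord], by simp [yCoord]⟩

theorem IsProductCurve.algHom_ext {R : Type*} [CommRing R] [Algebra K R] {x y : R}
    (H : IsProductCurve f c x y) {φ ψ : R →ₐ[K] S} (hx : φ x = ψ x) (hy : φ y = ψ y) : φ = ψ :=
  AlgHom.toLinearMap_injective (H.basis.ext fun p ↦ by simp [H.basis_apply, bimonomial, hx, hy])

end CurveRing

section Valuation

variable {K R Γ : Type*} [Field K] [CommRing R] [Algebra K R] [LinearOrderedCommGroupWithZero Γ]
  (v : Valuation R Γ) [v.IsTrivialOn K]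

theorem linearIndependent_of_valuation_injective {ι : Type*} {g : ι → R} (hne : ∀ i, v (g i) ≠ 0)
    (hinj : Function.Injective fun i ↦ v (g i)) : LinearIndependent K g := by
  classical
  have hsmul {a : K} (ha : a ≠ 0) (i : ι) : v (a • g i) = v (g i) := by
    rw [Algebra.smul_def, map_mul, Valuation.IsTrivialOn.eq_one a ha, one_mul]
  refine linearIndependent_iff'.mpr fun s a hsum ↦ ?_
  by_contra! hex
  obtain ⟨i, hi, hai⟩ := hex
  obtain ⟨m, hm, hmax⟩ := Finset.exists_max_image (s.filter (a · ≠ 0)) (fun i ↦ v (g i))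
    ⟨i, Finset.mem_filter.mpr ⟨hi, hai⟩⟩
  have ham := (Finset.mem_filter.mp hm).2
  rw [← Finset.sum_filter_of_ne fun i _ ↦ left_ne_zero_of_smul] at hsum
  have hv : v (∑ i ∈ s.filter (a · ≠ 0), a i • g i) = v (a m • g m) := by
    refine Valuation.map_sum_eq_of_lt v hm fun i hi ↦ ?_
    rw [Finset.mem_sdiff, Finset.mem_singleton] at hi
    rw [hsmul (Finset.mem_filter.mp hi.1).2, hsmul ham]
    exact lt_of_le_of_ne (hmax i hi.1) fun h ↦ hi.2 (hinj h)
  rw [hsum, map_zero, hsmul ham] at hv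
  exact hne m hv.symm

variable {v} {x : R} {α : K} {g : K[X]}

theorem valuation_aeval_le_one (hx : v x ≤ 1) (g : K[X]) : v (aeval x g) ≤ 1 := by
  rw [aeval_eq_sum_range]
  refine Valuation.map_sum_le v fun i _ ↦ ?_
  rw [Algebra.smul_def, map_mul, map_pow]
  exact mul_le_one' (Valuation.IsTrivialOn.valuation_algebraMap_le_one v _) (pow_le_one' hx i)

theorem valuation_aeval_eq_one (hα : v (x - algebraMap K R α) < 1) (hg : g.eval α ≠ 0) :
    v (aeval x g) = 1 := by
  have hx : v x ≤ 1 := by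
    rw [← sub_add_cancel x (algebraMap K R α)]
    exact v.map_add_le hα.le (Valuation.IsTrivialOn.valuation_algebraMap_le_one v α)
  obtain ⟨h, hh⟩ := X_sub_C_dvd_sub_C_eval (p := g) (a := α)
  have hsub : aeval x g - algebraMap K R (g.eval α) = (x - algebraMap K R α) * aeval x h := by
    simpa using congrArg (aeval x) hh
  rw [← Valuation.IsTrivialOn.eq_one (v := v) _ hg]
  refine Valuation.map_eq_of_sub_lt v ?_
  rw [hsub, map_mul, Valuation.IsTrivialOn.eq_one (v := v) _ hg]
  exact (mul_le_of_le_one_right' (valuation_aeval_le_one hx h)).trans_lt hα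

theorem valuation_aeval_eq_valuation_sub (hα : v (x - algebraMap K R α) < 1) (hroot : g.IsRoot α)
    (hsimple : g.derivative.eval α ≠ 0) : v (aeval x g) = v (x - algebraMap K R α) := by
  obtain ⟨h, rfl⟩ := dvd_iff_isRoot.mpr hroot
  have hh : h.eval α ≠ 0 := by simpa [derivative_mul] using hsimple
  rw [map_mul, map_mul, valuation_aeval_eq_one hα hh, mul_one]
  simp

theorem exists_isRoot_valuation_sub_lt_one (hg : g ≠ 0) (hsplits : g.Splits)
    (hlt : v (aeval x g) < 1) : ∃ α, g.IsRoot α ∧ v (x - algebraMap K R α) < 1 := by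
  by_contra! hge
  rw [hsplits.eq_prod_roots, map_mul, aeval_C, map_mul,
    Valuation.IsTrivialOn.eq_one (v := v) _ (leadingCoeff_ne_zero.mpr hg), one_mul,
    map_multiset_prod, map_multiset_prod, Multiset.map_map, Multiset.map_map] at hlt
  refine hlt.not_ge (Multiset.one_le_prod fun z hz ↦ ?_)
  obtain ⟨α, hα, rfl⟩ := Multiset.mem_map.mp hz
  simpa using hge α (isRoot_of_mem_roots hα)

end Valuation

section Place

theorem exists_valuation_one_lt {K : Type*} {R : Type*} [Field K] [CommRing R] [IsDomain R]
    [Algebra K R] {t : R} (ht : Transcendental K t) :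
    ∃ V : ValuationSubring (FractionRing R),
      (V.valuation.comap (algebraMap R (FractionRing R))).IsTrivialOn K ∧
        1 < V.valuation (algebraMap R (FractionRing R) t) := by
  set E := FractionRing R
  have hint : algebraMap R E t ∉ (integralClosure K E).toSubring := fun h ↦
    ht ((isAlgebraic_algebraMap_iff (IsFractionRing.injective R E)).mp
      (IsIntegral.isAlgebraic (R := K) h))
  have : IsIntegrallyClosedIn (integralClosure K E).toSubring E :=
    inferInstanceAs (IsIntegrallyClosedIn (integralClosure K E) E)
  obtain ⟨V, hV, htV⟩ := Subring.exists_le_valuationSubring_of_isIntegrallyClosedIn hint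
  refine ⟨V, Valuation.IsTrivialOn.of_le_one _ fun a ↦ ?_, ?_⟩
  · rw [Valuation.comap_apply, ← IsScalarTower.algebraMap_apply, V.valuation_le_one_iff]
    exact hV (isIntegral_algebraMap : IsIntegral K (algebraMap K E a))
  · rwa [← not_le, V.valuation_le_one_iff]

namespace IsProductCurve

variable {K : Type*} {R : Type*} [Field K] [CommRing R] [Algebra K R] {f : K[X]} {c : K} {x y : R}

theorem transcendental_snd (H : IsProductCurve f c x y) : Transcendental K y := by
  refine transcendental_iff.mpr fun g hg ↦ Polynomial.ext fun n ↦ ?_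
  have hcoeff := congrArg (H.coeff (0, n)) hg
  have hpow (i : ℕ) : H.coeff (0, n) (y ^ i) = if i = n then 1 else 0 := by
    have := H.coeff_bimonomial (0, n) (q := (0, i)) (Or.inl H.natDegree_pos)
    simpa [bimonomial, eq_comm] using this
  rw [aeval_eq_sum_range, map_sum, map_zero] at hcoeff
  simp only [map_smul, hpow, smul_eq_mul, mul_ite, mul_one, mul_zero, Finset.sum_ite_eq',
    Finset.mem_range] at hcoeff
  rw [coeff_zero]
  by_cases hn : n < g.natDegree + 1
  · rwa [if_pos hn] at hcoeff
  · exact coeff_eq_zero_of_natDegree_lt (by lia)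

/-- The point at infinity of the curve over a zero `α` of `f`: there `x - α` vanishes to order
`deg f` and `y` has a simple pole. -/
theorem exists_valuation [IsAlgClosed K] [IsDomain R] (H : IsProductCurve f c x y)
    (hf : f.Separable) :
    ∃ (α : K) (V : ValuationSubring (FractionRing R)) (v : Valuation R V.ValueGroup),
      v.IsTrivialOn K ∧ 1 < v y ∧ v (x - algebraMap K R α) * v y ^ f.natDegree = 1 := by
  obtain ⟨V, hK, hy⟩ := exists_valuation_one_lt H.transcendental_snd
  set v := V.valuation.comap (algebraMap R (FractionRing R))
  have hmul : v (aeval x f) * v y ^ f.natDegree = 1 := by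
    rw [← valuation_aeval_eq_valuation_X_pow_natDegree_of_one_lt_valuation_X (v := v) y hy
      hf.ne_zero, ← map_mul, H.aeval_mul_aeval, hK.eq_one c H.ne_zero]
  have hlt : v (aeval x f) < 1 := by
    rw [eq_inv_of_mul_eq_one_left hmul]
    exact inv_lt_one_of_one_lt₀ (one_lt_pow₀ hy H.natDegree_pos.ne')
  obtain ⟨α, hα, hαv⟩ := exists_isRoot_valuation_sub_lt_one hf.ne_zero (IsAlgClosed.splits f) hlt
  have hsimple : f.derivative.eval α ≠ 0 := by
    simpa using hf.aeval_derivative_ne_zero (x := α) (by simpa using hα)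
  exact ⟨α, V, v, hK, hy, valuation_aeval_eq_valuation_sub hαv hα hsimple ▸ hmul⟩

theorem exists_linearIndependent_sub_pow_mul_pow [IsAlgClosed K] [IsDomain R]
    (H : IsProductCurve f c x y) (hf : f.Separable) :
    ∃ α : K, ∀ {ι : Type*} (I J : ι → ℕ),
      (Function.Injective fun i ↦ (J i : ℤ) - f.natDegree * I i) →
      LinearIndependent K fun i ↦ (x - algebraMap K R α) ^ I i * y ^ J i := by
  obtain ⟨α, V, v, hK, hy, hα⟩ := H.exists_valuation hf
  have hy0 : v y ≠ 0 := (zero_lt_one.trans hy).ne'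
  refine ⟨α, fun I J hinj ↦ ?_⟩
  have hval (i) : v ((x - algebraMap K R α) ^ I i * y ^ J i) =
      v y ^ ((J i : ℤ) - f.natDegree * I i) := by
    rw [map_mul, map_pow, map_pow, eq_inv_of_mul_eq_one_left hα, inv_pow, ← pow_mul,
      zpow_sub₀ hy0, zpow_natCast, mul_comm, div_eq_mul_inv]
    norm_cast
  refine linearIndependent_of_valuation_injective v (fun i ↦ ?_) fun i j hij ↦ ?_
  · rw [hval]
    exact zpow_ne_zero _ hy0
  · simp only [hval] at hij
    exact hinj (zpow_right_injective₀ (zero_lt_one.trans hy) hy.ne' hij)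

end IsProductCurve

end Place

section Stepanov

variable {K R : Type*} [Field K] [CommRing R] [Algebra K R] {f : K[X]} {c : K} {x y : R}

theorem IsProductCurve.card_le_of_forall_algHom_eq_zero [IsDomain R] (H : IsProductCurve f c x y)
    {g : R} (hg : g ≠ 0) {a b : ℕ} (hmem : g ∈ boxSpan K x y (a + 1) (b + 1))
    (s : Finset (R →ₐ[K] K)) (hs : ∀ φ ∈ s, φ g = 0) : s.card ≤ f.natDegree * (a + b) := by
  have := H.finite_quotient_span hg
  have hker (φ : s) (r : R) (hr : r ∈ Ideal.span {g}) : φ.1 r = 0 := by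
    obtain ⟨t, rfl⟩ := Ideal.mem_span_singleton'.mp hr
    rw [map_mul, hs φ.1 φ.2, mul_zero]
  have hinj : Function.Injective fun φ : s ↦ Ideal.Quotient.liftₐ _ φ.1 (hker φ) := fun φ ψ h ↦
    Subtype.ext (AlgHom.ext fun r ↦ DFunLike.congr_fun h (Ideal.Quotient.mk _ r))
  calc s.card = Nat.card s := (Nat.card_eq_finsetCard s).symm
    _ ≤ Nat.card (R ⧸ Ideal.span {g} →ₐ[K] K) := Nat.card_le_card_of_injective _ hinj
    _ ≤ finrank K (R ⧸ Ideal.span {g}) := card_algHom_le_finrank K _ K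
    _ ≤ f.natDegree * (a + b) := H.finrank_quotient_span_le hg hmem

theorem sub_pow_mem_boxSpan (x y : R) (α : K) (n : ℕ) :
    (x - algebraMap K R α) ^ n ∈ boxSpan K x y (n + 1) 1 := by
  have hone : (1 : R) ∈ boxSpan K x y 1 1 := by
    simpa [bimonomial] using bimonomial_mem_boxSpan (K := K) (x := x) (y := y) one_pos one_pos
  have hx : x ∈ boxSpan K x y 2 1 := by
    simpa [bimonomial] using bimonomial_mem_boxSpan (K := K) (x := x) (y := y) one_lt_two one_pos
  have hsub : x - algebraMap K R α ∈ boxSpan K x y 2 1 := by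
    rw [Algebra.algebraMap_eq_smul_one]
    exact sub_mem hx (Submodule.smul_mem _ _ (boxSpan_mono one_le_two le_rfl hone))
  induction n with
  | zero => simpa only [pow_zero] using hone
  | succ n ih => exact pow_succ (x - algebraMap K R α) n ▸ mul_mem_boxSpan (by lia) (by lia) ih hsub

theorem pow_snd_mem_boxSpan (x y : R) (n : ℕ) : y ^ n ∈ boxSpan K x y 1 (n + 1) := by
  simpa [bimonomial] using bimonomial_mem_boxSpan (K := K) (x := x) (y := y) one_pos n.lt_add_one

theorem aeval_snd_mem_boxSpan (x y : R) {g : K[X]} {n : ℕ} (hg : g.natDegree < n) :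
    aeval y g ∈ boxSpan K x y 1 n := by
  rw [aeval_eq_sum_range]
  refine Submodule.sum_mem _ fun i hi ↦ Submodule.smul_mem _ _ ?_
  exact boxSpan_mono le_rfl (by grind) (pow_snd_mem_boxSpan x y i)

theorem IsProductCurve.card_le_natDegree_mul_of_pow_eq [IsDomain R] (H : IsProductCurve f c x y)
    {Q : ℕ} (hQ : 1 < Q) (s : Finset (R →ₐ[K] K)) (hs : ∀ φ ∈ s, φ x ^ Q = φ x) :
    s.card ≤ f.natDegree * Q := by
  have hne : x ^ Q - x ≠ 0 := by
    have := (transcendental_iff.mp H.symm.transcendental_snd (X ^ Q - X)).mt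
      (FiniteField.X_pow_card_sub_X_ne_zero K hQ)
    simpa using this
  have hmem : x ^ Q - x ∈ boxSpan K x y (Q + 1) (0 + 1) := by
    have hpow (n : ℕ) : x ^ n ∈ boxSpan K x y (n + 1) 1 := by
      simpa using sub_pow_mem_boxSpan (K := K) x y 0 n
    exact sub_mem (hpow Q) (boxSpan_mono (by lia) le_rfl (pow_one x ▸ hpow 1))
  exact H.card_le_of_forall_algHom_eq_zero hne hmem s fun φ hφ ↦ by
    rw [map_sub, map_pow, hs φ hφ, sub_self]

/-- Index type of the monomials in Stepanov's auxiliary function: a tuple `(i, j, s, t)` stands for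
`(x - α) ^ (i + N * s) * y ^ (j + N * t)`. -/
abbrev StepanovIndex (d M m : ℕ) := Fin M × Fin d × Fin (m + 1) × Fin d

/-- Stepanov's auxiliary function with coefficients `a`. -/
def stepanovFunction {d M m : ℕ} (x y : R) (α : K) (N : ℕ) (a : StepanovIndex d M m → K) : R :=
  ∑ i, a i • ((x - algebraMap K R α) ^ (i.1 + N * i.2.2.1 : ℕ) * y ^ (i.2.1 + N * i.2.2.2 : ℕ))

/-- At a point with `x ^ Q = x` and `(y ^ Q) ^ t = ∑ k, ρ t k y * (y ^ Q) ^ k`, where `Q = M * N`,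
the `M`-th power of the monomial `i` in Stepanov's auxiliary function is
`∑ k, stepanovCoeff x y α Q ρ i k * (y ^ Q) ^ k`. -/
noncomputable def stepanovCoeff {d M m r : ℕ} (x y : R) (α : K) (Q : ℕ) (ρ : Fin d → Fin r → K[X])
    (i : StepanovIndex d M m) (k : Fin r) : R :=
  (x - algebraMap K R α) ^ (M * i.1) * (x - algebraMap K R (α ^ Q)) ^ (i.2.2.1 : ℕ) *
    y ^ (M * i.2.1) * aeval y (ρ i.2.2.2 k)

section StepanovFunction

variable {d M N m r Q : ℕ} {α : K} {ρ : Fin d → Fin r → K[X]}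

theorem stepanovCoeff_mem_boxSpan (hρ : ∀ t k, (ρ t k).natDegree < d)
    (i : StepanovIndex d M m) (k : Fin r) :
    stepanovCoeff x y α Q ρ i k ∈ boxSpan K x y (M ^ 2 + m + 1) (d * M + d) := by
  obtain ⟨i, j, s, t⟩ := i
  have hi : M * i + s + 1 ≤ M ^ 2 + m + 1 := by nlinarith [i.2, s.2]
  have hj : M * j + d ≤ d * M + d := by nlinarith [j.2]
  have hx : (x - algebraMap K R α) ^ (M * i : ℕ) * (x - algebraMap K R (α ^ Q)) ^ (s : ℕ) ∈
      boxSpan K x y (M * i + s + 1) 1 :=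
    mul_mem_boxSpan (by lia) (by lia) (sub_pow_mem_boxSpan x y α _) (sub_pow_mem_boxSpan x y _ _)
  have hxy := mul_mem_boxSpan (A := M * i + s + 1) (B := M * j + 1) (by lia) (by lia) hx
    (pow_snd_mem_boxSpan x y (M * j))
  have hxyρ := mul_mem_boxSpan (A := M * i + s + 1) (B := M * j + d) (by lia) (by lia) hxy
    (aeval_snd_mem_boxSpan x y (hρ t k))
  exact boxSpan_mono hi hj hxyρ

theorem stepanovFunction_mem_boxSpan (a : StepanovIndex d M m → K) :
    stepanovFunction x y α N a ∈ boxSpan K x y (M + N * m + 1) (d + N * d + 1) := by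
  refine Submodule.sum_mem _ fun ⟨i, j, s, t⟩ _ ↦ Submodule.smul_mem _ _ ?_
  have hs : N * s ≤ N * m := Nat.mul_le_mul_left _ (by lia)
  have ht : N * t ≤ N * d := Nat.mul_le_mul_left _ (by lia)
  exact mul_mem_boxSpan (by grind) (by grind) (sub_pow_mem_boxSpan x y α _)
    (pow_snd_mem_boxSpan x y _)

theorem injective_stepanovExponent (hMN : d * M ≤ N) :
    Function.Injective fun i : StepanovIndex d M m ↦
      ((i.2.1 + N * i.2.2.2 : ℕ) : ℤ) - d * (i.1 + N * i.2.2.1 : ℕ) := by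
  have digits {n a a' b b' : ℕ} (ha : a < n) (ha' : a' < n) (h : a + n * b = a' + n * b') :
      a = a' ∧ b = b' := by
    have hmod := congrArg (· % n) h
    simp only [Nat.add_mul_mod_self_left, Nat.mod_eq_of_lt ha, Nat.mod_eq_of_lt ha'] at hmod
    exact ⟨hmod, Nat.eq_of_mul_eq_mul_left (by lia : 0 < n) (by lia)⟩
  have hlt (j : Fin d) (i : Fin M) : j + d * i < N := by nlinarith [i.2, j.2]
  rintro ⟨i, j, s, t⟩ ⟨i', j', s', t'⟩ h
  have h : (j + d * i') + N * (t + d * s' : ℕ) = (j' + d * i) + N * (t' + d * s) := by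
    zify
    push_cast at h
    linarith
  obtain ⟨hlow, hhigh⟩ := digits (hlt j i') (hlt j' i) h
  obtain ⟨hj, hi⟩ := digits j.2 j'.2 hlow
  obtain ⟨ht, hs⟩ := digits t.2 t'.2 hhigh
  simp only [Prod.mk.injEq, Fin.ext_iff]
  exact ⟨hi.symm, hj, hs.symm, ht⟩

/-- The relations `∑ k, stepanovCoeff x y α Q ρ i k = 0` are linear conditions with values
in a space of small dimension. -/
theorem IsProductCurve.exists_ne_zero_sum_smul_stepanovCoeff_eq_zero (H : IsProductCurve f c x y)
    {ρ : Fin f.natDegree → Fin r → K[X]} (hρ : ∀ t k, (ρ t k).natDegree < f.natDegree)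
    (hm : f.natDegree ≤ m + 1)
    (hdim : r * (M ^ 2 + f.natDegree * M + m + 1) < M * (f.natDegree * (m + 1))) (Q : ℕ) (α : K) :
    ∃ b : StepanovIndex f.natDegree M m → K, b ≠ 0 ∧
      ∀ k, ∑ i, b i • stepanovCoeff x y α Q ρ i k = 0 := by
  set V := boxSpan K x y (M ^ 2 + m + 1) (f.natDegree * M + f.natDegree)
  let w (i : StepanovIndex f.natDegree M m) (k : Fin r) : V :=
    ⟨_, stepanovCoeff_mem_boxSpan (α := α) (Q := Q) hρ i k⟩
  have hV : finrank K V = f.natDegree * (M ^ 2 + f.natDegree * M + m + 1) := by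
    have := H.finrank_boxSpan_add (a := M ^ 2 + m + 1) (b := f.natDegree * M + f.natDegree)
      (by lia) (by lia)
    linarith
  have hlt : finrank K (Fin r → V) < finrank K (StepanovIndex f.natDegree M m → K) := by
    rw [finrank_pi_fintype, finrank_fintype_fun_eq_card, Finset.sum_const]
    simp only [Fintype.card_prod, Fintype.card_fin, Finset.card_univ, smul_eq_mul, hV]
    nlinarith [H.natDegree_pos]
  obtain ⟨b, hb, hb0⟩ := (Submodule.ne_bot_iff _).mp
    (LinearMap.ker_ne_bot_of_finrank_lt (f := Fintype.linearCombination K w) hlt)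
  refine ⟨b, hb0, fun k ↦ ?_⟩
  rw [LinearMap.mem_ker, Fintype.linearCombination_apply] at hb
  simpa [w] using congrArg (fun u ↦ (u k : R)) hb

theorem map_stepanovFunction_eq_zero {p μ ν : ℕ} [Fact p.Prime] [CharP K p]
    {a b : StepanovIndex d (p ^ μ) m → K} (hab : ∀ i, a i ^ p ^ μ = b i)
    (hb : ∀ k, ∑ i, b i • stepanovCoeff x y α (p ^ (μ + ν)) ρ i k = 0) (φ : R →ₐ[K] K)
    (hx : φ x ^ p ^ (μ + ν) = φ x)
    (hy : ∀ t : Fin d, (φ y ^ p ^ (μ + ν)) ^ (t : ℕ) =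
      ∑ k, (ρ t k).eval (φ y) * (φ y ^ p ^ (μ + ν)) ^ (k : ℕ)) :
    φ (stepanovFunction x y α (p ^ ν) a) = 0 := by
  set Q := p ^ (μ + ν) with hQ
  have hcoeff (i : StepanovIndex d (p ^ μ) m) :
      (a i * ((φ x - α) ^ (i.1 + p ^ ν * i.2.2.1 : ℕ) * φ y ^ (i.2.1 + p ^ ν * i.2.2.2 : ℕ))) ^
        p ^ μ = ∑ k, b i * φ (stepanovCoeff x y α Q ρ i k) * (φ y ^ Q) ^ (k : ℕ) := by
    have hxα : φ x - α ^ Q = (φ x - α) ^ Q := by rw [hQ, sub_pow_char_pow, ← hQ, hx]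
    simp only [stepanovCoeff, map_mul, map_pow, map_sub, AlgHom.commutes,
      Algebra.algebraMap_self_apply, ← aeval_algHom_apply, coe_aeval_eq_eval, mul_assoc,
      ← Finset.mul_sum, ← hy]
    rw [mul_pow, hab, hxα, hQ, pow_add]
    ring
  rw [← pow_eq_zero_iff (pow_ne_zero μ (Fact.out : p.Prime).ne_zero), stepanovFunction, map_sum,
    sum_pow_char_pow p]
  simp only [map_smul, map_mul, map_pow, map_sub, AlgHom.commutes, Algebra.algebraMap_self_apply,
    smul_eq_mul, hcoeff]
  rw [Finset.sum_comm]
  refine Finset.sum_eq_zero fun k _ ↦ ?_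
  rw [← Finset.sum_mul]
  have := congrArg φ (hb k)
  simp only [map_sum, map_smul, smul_eq_mul, map_zero] at this
  rw [this, zero_mul]

end StepanovFunction

theorem IsProductCurve.card_le_of_stepanov [IsAlgClosed K] [IsDomain R] {p μ ν m r : ℕ}
    [Fact p.Prime] [CharP K p] (H : IsProductCurve f c x y) (hf : f.Separable)
    (hμν : f.natDegree * p ^ μ ≤ p ^ ν) (hm : f.natDegree ≤ m + 1)
    (hdim : r * ((p ^ μ) ^ 2 + f.natDegree * p ^ μ + m + 1) < p ^ μ * (f.natDegree * (m + 1)))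
    {ρ : Fin f.natDegree → Fin r → K[X]} (hρ : ∀ t k, (ρ t k).natDegree < f.natDegree)
    (s : Finset (R →ₐ[K] K))
    (hs : ∀ φ ∈ s, φ x ^ p ^ (μ + ν) = φ x ∧ ∀ t : Fin f.natDegree, (φ y ^ p ^ (μ + ν)) ^ (t : ℕ) =
      ∑ k, (ρ t k).eval (φ y) * (φ y ^ p ^ (μ + ν)) ^ (k : ℕ)) :
    s.card ≤ f.natDegree * (p ^ μ + p ^ ν * m + (f.natDegree + p ^ ν * f.natDegree)) := by
  have hM : 0 < p ^ μ := pow_pos (Fact.out : p.Prime).pos μ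
  obtain ⟨α, hα⟩ := H.exists_linearIndependent_sub_pow_mul_pow hf
  obtain ⟨b, hb0, hb⟩ := H.exists_ne_zero_sum_smul_stepanovCoeff_eq_zero hρ hm hdim
    (p ^ (μ + ν)) α
  choose a ha using fun i ↦ IsAlgClosed.exists_pow_nat_eq (b i) hM
  have ha0 : stepanovFunction x y α (p ^ ν) a ≠ 0 := fun h ↦ hb0 <| by
    ext i
    rw [← ha, Fintype.linearIndependent_iff.mp (hα _ _ (injective_stepanovExponent hμν)) a h i,
      zero_pow hM.ne', Pi.zero_apply]
  exact H.card_le_of_forall_algHom_eq_zero ha0 (stepanovFunction_mem_boxSpan a) s fun φ hφ ↦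
    map_stepanovFunction_eq_zero ha hb φ (hs φ hφ).1 (hs φ hφ).2

theorem exists_stepanov_parameter {d r M N : ℕ} (hd : 0 < d) (hr : r ≤ d) (hM : 2 ≤ M)
    (hMN : d * M ≤ N) :
    ∃ m, d ≤ m + 1 ∧ r * (M ^ 2 + d * M + m + 1) < M * (d * (m + 1)) ∧
      d * (M + N * m + (d + N * d)) ≤ r * (M * N) + 8 * d ^ 2 * N := by
  have hlow : d * (r * M / d) ≤ r * M := Nat.mul_div_le _ _
  have hupp : r * M < d * (r * M / d + 1) := Nat.lt_mul_div_succ _ hd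
  generalize r * M / d = e at hlow hupp
  refine ⟨e + 5 * d, by lia, ?_, ?_⟩
  · have hr' : r * (e + 5 * d + 1) ≤ d * (e + 5 * d + 1) := Nat.mul_le_mul_right _ hr
    have hd' : d ≤ d ^ 2 := Nat.le_self_pow two_ne_zero d
    calc r * (M ^ 2 + d * M + (e + 5 * d) + 1)
        = r * M * M + r * (d * M) + r * (e + 5 * d + 1) := by ring
      _ ≤ r * M * M + d * (d * M) + d * (e + 5 * d + 1) := by gcongr
      _ ≤ r * M * M + d ^ 2 * M + (r * M + 6 * d ^ 2) := by nlinarith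
      _ ≤ r * M * M + d ^ 2 * M + (d ^ 2 * M + 3 * d ^ 2 * M) := by
        have hrM : r * M ≤ d ^ 2 * M := Nat.mul_le_mul_right _ (hr.trans hd')
        have hdM : 3 * d ^ 2 * 2 ≤ 3 * d ^ 2 * M := Nat.mul_le_mul_left _ hM
        lia
      _ = M * (r * M + 5 * d ^ 2) := by ring
      _ < M * (d * (e + 5 * d + 1)) := by
        gcongr
        nlinarith
  · have hN : 1 ≤ N := by nlinarith
    have he : N * (d * e) ≤ N * (r * M) := Nat.mul_le_mul_left _ hlow
    have hdN : d ^ 2 * 1 ≤ d ^ 2 * N := Nat.mul_le_mul_left _ hN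
    have hNd : 1 * N ≤ d ^ 2 * N := Nat.mul_le_mul_right _ (Nat.one_le_pow _ _ hd)
    calc d * (M + N * (e + 5 * d) + (d + N * d))
        = d * M + N * (d * e) + d ^ 2 * 1 + 6 * d ^ 2 * N := by ring
      _ ≤ d ^ 2 * N + N * (r * M) + d ^ 2 * N + 6 * d ^ 2 * N := by lia
      _ = r * (M * N) + 8 * d ^ 2 * N := by ring

theorem IsProductCurve.card_le_mul_add_mul_sqrt [IsAlgClosed K] [IsDomain R] {p n r : ℕ}
    [Fact p.Prime] [CharP K p] (H : IsProductCurve f c x y) (hf : f.Separable) (hn : 0 < n)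
    (hr : r ≤ f.natDegree) {ρ : Fin f.natDegree → Fin r → K[X]}
    (hρ : ∀ t k, (ρ t k).natDegree < f.natDegree) (s : Finset (R →ₐ[K] K))
    (hs : ∀ φ ∈ s, φ x ^ p ^ n = φ x ∧ ∀ t : Fin f.natDegree, (φ y ^ p ^ n) ^ (t : ℕ) =
      ∑ k, (ρ t k).eval (φ y) * (φ y ^ p ^ n) ^ (k : ℕ)) :
    (s.card : ℝ) ≤ r * (p : ℝ) ^ n +
      8 * f.natDegree ^ 2 * p ^ (f.natDegree + 1) * √((p : ℝ) ^ n) := by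
  have hp : p.Prime := Fact.out
  set d := f.natDegree
  have hd : 0 < d := H.natDegree_pos
  have hp1 : (1 : ℝ) ≤ p := by exact_mod_cast hp.one_le
  rcases lt_or_ge n (d + 2) with hnd | hnd
  · have hsqrt : √((p : ℝ) ^ n) ≤ p ^ (d + 1) := by
      rw [Real.sqrt_le_left (by positivity), ← pow_mul]
      exact pow_le_pow_right₀ hp1 (by lia)
    have hcard : (s.card : ℝ) ≤ d * p ^ n := by
      exact_mod_cast H.card_le_natDegree_mul_of_pow_eq (one_lt_pow₀ hp.one_lt hn.ne') s
        fun φ hφ ↦ (hs φ hφ).1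
    have hd2 : (d : ℝ) ≤ 8 * d ^ 2 := by exact_mod_cast (by nlinarith : d ≤ 8 * d ^ 2)
    calc (s.card : ℝ) ≤ d * (√((p : ℝ) ^ n) * √((p : ℝ) ^ n)) := by
          rwa [Real.mul_self_sqrt (by positivity)]
      _ ≤ 8 * d ^ 2 * (p ^ (d + 1) * √((p : ℝ) ^ n)) := by gcongr
      _ ≤ r * (p : ℝ) ^ n + 8 * d ^ 2 * p ^ (d + 1) * √((p : ℝ) ^ n) := by
        rw [← mul_assoc]
        exact le_add_of_nonneg_left (by positivity)
  · obtain ⟨μ, ν, hμ, rfl, hdν, hν⟩ : ∃ μ ν, μ ≠ 0 ∧ n = μ + ν ∧ d + μ ≤ ν ∧ ν ≤ d + 1 + μ :=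
      ⟨(n - d) / 2, n - (n - d) / 2, by lia, by lia, by lia, by lia⟩
    have hμν : d * p ^ μ ≤ p ^ ν := calc
      d * p ^ μ ≤ p ^ d * p ^ μ := Nat.mul_le_mul_right _ (Nat.lt_pow_self hp.one_lt).le
      _ = p ^ (d + μ) := (pow_add ..).symm
      _ ≤ p ^ ν := Nat.pow_le_pow_right hp.pos hdν
    have hsqrt : (p : ℝ) ^ ν ≤ p ^ (d + 1) * √((p : ℝ) ^ (μ + ν)) := by
      refine le_of_sq_le_sq ?_ (by positivity)
      rw [mul_pow, Real.sq_sqrt (by positivity), ← pow_mul, ← pow_mul, ← pow_add]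
      exact pow_le_pow_right₀ hp1 (by lia)
    obtain ⟨m, hm, hdim, hbound⟩ := exists_stepanov_parameter hd hr
      (hp.two_le.trans (Nat.le_self_pow hμ p)) hμν
    calc (s.card : ℝ) ≤ r * (p ^ μ * p ^ ν) + 8 * d ^ 2 * p ^ ν := by
          exact_mod_cast (H.card_le_of_stepanov hf hμν hm hdim hρ s hs).trans hbound
      _ ≤ r * p ^ (μ + ν) + 8 * d ^ 2 * (p ^ (d + 1) * √((p : ℝ) ^ (μ + ν))) := by
        rw [← pow_add]
        gcongr
      _ = _ := by ring

end Stepanov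

section Points

variable {K : Type*} [Field K] {f : K[X]} {c : K}

/-- The points of the curve `f(x) f(y) = c` with `f'(y) ≠ 0` whose coordinates are fixed by
raising to the power `Q`. -/
def fixedPoints (f : K[X]) (c : K) (Q : ℕ) : Set (K × K) :=
  {P | P.1 ^ Q = P.1 ∧ P.2 ^ Q = P.2 ∧ f.eval P.1 * f.eval P.2 = c ∧ f.derivative.eval P.2 ≠ 0}

theorem natDegree_iterate_divX (f : K[X]) (k : ℕ) : (divX^[k] f).natDegree = f.natDegree - k := by
  induction k with
  | zero => rfl
  | succ k ih => rw [Function.iterate_succ_apply', natDegree_divX_eq_natDegree_tsub_one, ih,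
      Nat.sub_sub]

theorem coeff_iterate_divX (f : K[X]) (k n : ℕ) : (divX^[k] f).coeff n = f.coeff (n + k) := by
  induction k generalizing n with
  | zero => rfl
  | succ k ih =>
    rw [Function.iterate_succ_apply', coeff_divX, ih, Nat.add_right_comm, Nat.add_assoc]

theorem iterate_divX_natDegree (f : K[X]) : divX^[f.natDegree] f = C f.leadingCoeff := by
  have := eq_C_of_natDegree_eq_zero (p := divX^[f.natDegree] f)
    (by rw [natDegree_iterate_divX, Nat.sub_self])
  rwa [coeff_iterate_divX, zero_add] at this

theorem sum_eval_iterate_divX_mul_sub (f : K[X]) (y z : K) :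
    (∑ i ∈ Finset.range f.natDegree, (divX^[i + 1] f).eval y * z ^ i) * (z - y) =
      f.eval z - f.eval y := by
  have hstep (i : ℕ) : (divX^[i] f).eval y = (divX^[i + 1] f).eval y * y + f.coeff i := by
    have := congrArg (eval y) (divX_mul_X_add (divX^[i] f))
    rw [eval_add, eval_mul, eval_X, eval_C, coeff_iterate_divX, zero_add] at this
    rw [← this, Function.iterate_succ_apply']
  have htop : (divX^[f.natDegree] f).eval y = f.coeff f.natDegree := by
    rw [iterate_divX_natDegree, eval_C, leadingCoeff]
  calc _ = ∑ i ∈ Finset.range f.natDegree, ((divX^[i + 1] f).eval y * z ^ (i + 1) -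
        (divX^[i] f).eval y * z ^ i + f.coeff i * z ^ i) := by
        rw [Finset.sum_mul]
        refine Finset.sum_congr rfl fun i _ ↦ ?_
        rw [hstep i]
        ring
    _ = (divX^[f.natDegree] f).eval y * z ^ f.natDegree - f.eval y +
        ∑ i ∈ Finset.range f.natDegree, f.coeff i * z ^ i := by
        rw [Finset.sum_add_distrib, Finset.sum_range_sub fun i ↦ (divX^[i] f).eval y * z ^ i]
        simp
    _ = f.eval z - f.eval y := by
        rw [htop, eval_eq_sum_range (x := z), Finset.sum_range_succ]
        ring

/-- The curve `(f(z) - f(y)) / (z - y) = 0` has degree less than that of `f` in `z`, so that the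
powers of `z` can be reduced. -/
theorem exists_forall_pow_eq_sum (hd : 0 < f.natDegree) :
    ∃ ρ : Fin f.natDegree → Fin (f.natDegree - 1) → K[X],
      (∀ t k, (ρ t k).natDegree < f.natDegree) ∧ ∀ y z, f.eval z = f.eval y → z ≠ y →
        ∀ t : Fin f.natDegree, z ^ (t : ℕ) = ∑ k, (ρ t k).eval y * z ^ (k : ℕ) := by
  refine ⟨fun t k ↦ if (t : ℕ) < f.natDegree - 1 then if (t : ℕ) = k then 1 else 0
    else -(C f.leadingCoeff⁻¹ * divX^[k + 1] f), fun t k ↦ ?_, fun y z hyz hne t ↦ ?_⟩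
  · dsimp only
    split_ifs
    · simpa using hd
    · simpa using hd
    · rw [natDegree_neg]
      refine (natDegree_C_mul_le _ _).trans_lt ?_
      rw [natDegree_iterate_divX]
      lia
  · rcases lt_or_ge (t : ℕ) (f.natDegree - 1) with ht | ht
    · simp only [if_pos ht]
      rw [Finset.sum_eq_single ⟨t, ht⟩ (fun k _ hk ↦ ?_) (by simp)]
      · simp
      · rw [if_neg fun h ↦ hk (Fin.ext h.symm), eval_zero, zero_mul]
    · obtain ⟨e, he⟩ : ∃ e, f.natDegree = e + 1 := ⟨f.natDegree - 1, by lia⟩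
      have hrel := sum_eval_iterate_divX_mul_sub f y z
      have htop : (divX^[e + 1] f).eval y = f.leadingCoeff := by
        rw [← he, iterate_divX_natDegree, eval_C]
      rw [hyz, sub_self, mul_eq_zero, or_iff_left (sub_ne_zero.mpr hne), he,
        Finset.sum_range_succ, htop] at hrel
      have hlead := leadingCoeff_ne_zero.mpr (ne_zero_of_natDegree_gt hd)
      simp only [if_neg ht.not_gt, eval_neg, eval_mul, eval_C]
      rw [Fin.sum_univ_eq_sum_range
        fun k ↦ -(f.leadingCoeff⁻¹ * (divX^[k + 1] f).eval y) * z ^ k]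
      simp only [neg_mul, mul_assoc, Finset.sum_neg_distrib, ← Finset.mul_sum]
      rw [show f.natDegree - 1 = e by lia, show (t : ℕ) = e by lia,
        eq_neg_of_add_eq_zero_left hrel]
      field_simp

theorem card_roots_mul_C_sub_C_le (f : K[X]) (b c : K) :
    (f * C b - C c).roots.card ≤ f.natDegree :=
  (card_roots' _).trans <| natDegree_sub_C.trans_le (natDegree_mul_C_le f b)

theorem mul_C_sub_C_ne_zero (hd : 0 < f.natDegree) (hc : c ≠ 0) (b : K) : f * C b - C c ≠ 0 := by
  intro h
  have hdeg := congrArg natDegree h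
  rw [natDegree_sub_C, natDegree_zero] at hdeg
  rcases eq_or_ne b 0 with rfl | hb
  · simp [hc] at h
  · rw [natDegree_mul_C hb] at hdeg
    exact hd.ne' hdeg

theorem exists_card_le_sq_forall_notMem (hd : 0 < f.natDegree) (hf : f.Separable) (hc : c ≠ 0) :
    ∃ E : Finset K, E.card ≤ f.natDegree ^ 2 ∧ ∀ a ∉ E, f.eval a ≠ 0 ∧
      ∀ b, f.eval a * f.eval b = c → f.derivative.eval b ≠ 0 := by
  classical
  have hf' : f.derivative ≠ 0 := fun h ↦ hd.ne' <|
    natDegree_eq_zero_of_isUnit (isCoprime_zero_right.mp (h ▸ separable_def f |>.mp hf))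
  refine ⟨f.roots.toFinset ∪ f.derivative.roots.toFinset.biUnion fun β ↦
    (f * C (f.eval β) - C c).roots.toFinset, ?_, fun a ha ↦ ?_⟩
  · have hroots : f.roots.toFinset.card ≤ f.natDegree :=
      (Multiset.toFinset_card_le _).trans (card_roots' f)
    have hroots' : f.derivative.roots.toFinset.card ≤ f.natDegree - 1 :=
      (Multiset.toFinset_card_le _).trans ((card_roots' _).trans (natDegree_derivative_le f))
    calc _ ≤ f.natDegree + (f.natDegree - 1) * f.natDegree :=
          (Finset.card_union_le _ _).trans <| Nat.add_le_add hroots <|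
            (Finset.card_biUnion_le_card_mul _ _ _ fun β _ ↦ (Multiset.toFinset_card_le _).trans
              (card_roots_mul_C_sub_C_le f _ c)).trans (Nat.mul_le_mul_right _ hroots')
      _ = f.natDegree ^ 2 := by
        obtain ⟨e, he⟩ := Nat.exists_eq_add_of_lt hd
        rw [he, zero_add, Nat.add_sub_cancel]
        ring
  · simp only [Finset.mem_union, Finset.mem_biUnion, Multiset.mem_toFinset, not_or, not_exists,
      not_and, mem_roots (ne_zero_of_natDegree_gt hd), mem_roots hf',
      mem_roots (mul_C_sub_C_ne_zero hd hc _)] at ha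
    exact ⟨ha.1, fun b hb hβ ↦ ha.2 b hβ (by simp [hb])⟩

variable [IsAlgClosed K]

theorem card_toFinset_roots_sub_C [DecidableEq K] {u : K}
    (h : ∀ b, f.eval b = u → f.derivative.eval b ≠ 0) :
    (f - C u).roots.toFinset.card = f.natDegree := by
  have hsep : (f - C u).Separable := by
    rw [separable_def, isCoprime_iff_aeval_ne_zero_of_isAlgClosed K K]
    intro b
    simp only [coe_aeval_eq_eval, eval_sub, eval_C, derivative_sub, derivative_C, sub_zero, Ne,
      sub_eq_zero, ← not_and_or]
    exact fun hb ↦ h b hb.1 hb.2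
  rw [Multiset.toFinset_card_of_nodup (nodup_roots hsep),
    splits_iff_card_roots.mp (IsAlgClosed.splits _), natDegree_sub_C]

theorem exists_finset_points_over (hd : 0 < f.natDegree) (hf : f.Separable) (hc : c ≠ 0)
    (s : Finset K) :
    ∃ U : Finset (K × K), (∀ P ∈ U, P.1 ∈ s ∧ f.eval P.1 * f.eval P.2 = c ∧
      f.derivative.eval P.2 ≠ 0) ∧ f.natDegree * s.card ≤ U.card + f.natDegree ^ 3 := by
  classical
  obtain ⟨E, hE, hEs⟩ := exists_card_le_sq_forall_notMem hd hf hc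
  let fiber (a : K) : Finset K := (f - C (c / f.eval a)).roots.toFinset
  have hmem {a b : K} (ha : a ∈ s \ E) (hb : b ∈ fiber a) : f.eval a * f.eval b = c := by
    have := (mem_roots'.mp (Multiset.mem_toFinset.mp hb)).2
    rw [IsRoot, eval_sub, eval_C, sub_eq_zero] at this
    rw [this, mul_div_cancel₀ _ (hEs a (Finset.mem_sdiff.mp ha).2).1]
  have hcard (a : K) (ha : a ∈ s \ E) : (fiber a).card = f.natDegree := by
    obtain ⟨hfa, hfa'⟩ := hEs a (Finset.mem_sdiff.mp ha).2
    exact card_toFinset_roots_sub_C fun b hb ↦ hfa' b (by rw [hb, mul_div_cancel₀ _ hfa])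
  refine ⟨((s \ E).sigma fiber).map (Equiv.sigmaEquivProd K K).toEmbedding, ?_, ?_⟩
  · rintro ⟨a, b⟩ hP
    obtain ⟨⟨a, b⟩, hab, h⟩ := Finset.mem_map.mp hP
    obtain ⟨rfl, rfl⟩ := Prod.mk.inj h
    obtain ⟨ha, hb⟩ := Finset.mem_sigma.mp hab
    obtain ⟨has, haE⟩ := Finset.mem_sdiff.mp ha
    exact ⟨has, hmem ha hb, (hEs a haE).2 b (hmem ha hb)⟩
  · have hsdiff : s.card ≤ (s \ E).card + f.natDegree ^ 2 :=
      tsub_le_iff_right.mp ((Nat.sub_le_sub_left hE _).trans (Finset.le_card_sdiff E s))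
    rw [Finset.card_map, Finset.card_sigma, Finset.sum_congr rfl hcard, Finset.sum_const,
      smul_eq_mul]
    calc f.natDegree * s.card ≤ f.natDegree * ((s \ E).card + f.natDegree ^ 2) := by gcongr
      _ = _ := by ring

end Points

section PointCount

variable {K : Type*} [Field K] [IsAlgClosed K] {f : K[X]} {c : K} {p n : ℕ} [Fact p.Prime]
  [CharP K p]

variable (K p) in
theorem exists_finset_card_eq_forall_mem_iff_pow_eq (hn : 0 < n) :
    ∃ s : Finset K, s.card = p ^ n ∧ ∀ a, a ∈ s ↔ a ^ p ^ n = a := by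
  classical
  have hp : 1 < p := (Fact.out : p.Prime).one_lt
  have hsep : (X ^ p ^ n - X : K[X]).Separable := galois_poly_separable p _ (dvd_pow_self p hn.ne')
  refine ⟨(X ^ p ^ n - X : K[X]).roots.toFinset, ?_, fun a ↦ ?_⟩
  · rw [Multiset.toFinset_card_of_nodup (nodup_roots hsep),
      splits_iff_card_roots.mp (IsAlgClosed.splits _),
      FiniteField.X_pow_card_pow_sub_X_natDegree_eq K hn.ne' hp]
  · rw [Multiset.mem_toFinset, mem_roots (FiniteField.X_pow_card_pow_sub_X_ne_zero K hn.ne' hp)]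
    simp [sub_eq_zero]

theorem finite_fixedPoints (hn : 0 < n) : (fixedPoints f c (p ^ n)).Finite := by
  obtain ⟨s, -, hs⟩ := exists_finset_card_eq_forall_mem_iff_pow_eq K p hn
  refine (s ×ˢ s).finite_toSet.subset fun P hP ↦ ?_
  simp [hs, hP.1, hP.2.1]

theorem card_points_le_mul_add_mul_sqrt {r : ℕ} (hd : 0 < f.natDegree) (hf : f.Separable)
    (hc : c ≠ 0) (hn : 0 < n) (hr : r ≤ f.natDegree) {ρ : Fin f.natDegree → Fin r → K[X]}
    (hρ : ∀ t k, (ρ t k).natDegree < f.natDegree) (s : Finset (K × K))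
    (hs : ∀ P ∈ s, f.eval P.1 * f.eval P.2 = c ∧ P.1 ^ p ^ n = P.1 ∧
      ∀ t : Fin f.natDegree, (P.2 ^ p ^ n) ^ (t : ℕ) =
        ∑ k, (ρ t k).eval P.2 * (P.2 ^ p ^ n) ^ (k : ℕ)) :
    (s.card : ℝ) ≤ r * (p : ℝ) ^ n +
      8 * f.natDegree ^ 2 * p ^ (f.natDegree + 1) * √((p : ℝ) ^ n) := by
  have := isDomain_curveRing hd hc hf.squarefree
  choose φ hx hy using fun P : s ↦ exists_algHom_coord (f := f) (c := c) (S := K)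
    (by simpa only [coe_aeval_eq_eval, Algebra.algebraMap_self_apply] using (hs P.1 P.2).1)
  have hφ : Function.Injective φ := fun P P' h ↦
    Subtype.ext (Prod.ext (by rw [← hx, ← hx, h]) (by rw [← hy, ← hy, h]))
  have := (isProductCurve_coord hd hc).card_le_mul_add_mul_sqrt hf hn hr hρ
    (s.attach.map ⟨φ, hφ⟩) fun ψ hψ ↦ by
      obtain ⟨P, -, rfl⟩ := Finset.mem_map.mp hψ
      simp only [Function.Embedding.coeFn_mk, hx, hy]
      exact (hs P.1 P.2).2
  simpa only [Finset.card_map, Finset.card_attach] using this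

theorem ncard_fixedPoints_le (hd : 0 < f.natDegree) (hf : f.Separable) (hc : c ≠ 0) (hn : 0 < n) :
    ((fixedPoints f c (p ^ n)).ncard : ℝ) ≤
      (p : ℝ) ^ n + 8 * f.natDegree ^ 2 * p ^ (f.natDegree + 1) * √((p : ℝ) ^ n) := by
  have hfin := finite_fixedPoints (f := f) (c := c) (p := p) hn
  have := card_points_le_mul_add_mul_sqrt (r := 1) hd hf hc hn hd (ρ := fun t _ ↦ X ^ (t : ℕ))
    (fun t _ ↦ (natDegree_X_pow_le _).trans_lt t.2) hfin.toFinset fun P hP ↦ by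
      obtain ⟨hx, hy, hP, -⟩ := hfin.mem_toFinset.mp hP
      exact ⟨hP, hx, fun t ↦ by simp [hy]⟩
  rwa [← Set.ncard_eq_toFinset_card _ hfin, Nat.cast_one, one_mul] at this

theorem le_ncard_fixedPoints_add (hd : 0 < f.natDegree) (hf : f.Separable) (hc : c ≠ 0)
    (hn : 0 < n) (hcQ : c ^ p ^ n = c) (hfQ : ∀ a, f.eval (a ^ p ^ n) = f.eval a ^ p ^ n) :
    (p : ℝ) ^ n ≤ (fixedPoints f c (p ^ n)).ncard +
      8 * f.natDegree ^ 2 * p ^ (f.natDegree + 1) * √((p : ℝ) ^ n) + f.natDegree ^ 3 := by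
  classical
  obtain ⟨s, hscard, hs⟩ := exists_finset_card_eq_forall_mem_iff_pow_eq K p hn
  obtain ⟨U, hU, hUcard⟩ := exists_finset_points_over hd hf hc s
  obtain ⟨ρ, hρ, hρU⟩ := exists_forall_pow_eq_sum hd
  have hconj := card_points_le_mul_add_mul_sqrt hd hf hc hn (Nat.sub_le f.natDegree 1) hρ
    (U.filter fun P ↦ P.2 ^ p ^ n ≠ P.2) fun P hP ↦ by
      obtain ⟨hPU, hne⟩ := Finset.mem_filter.mp hP
      obtain ⟨hx, hP, -⟩ := hU P hPU
      have hx := (hs _).mp hx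
      refine ⟨hP, hx, hρU _ _ ?_ hne⟩
      refine mul_left_cancel₀ (left_ne_zero_of_mul (hP.symm ▸ hc)) ?_
      calc f.eval P.1 * f.eval (P.2 ^ p ^ n) = (f.eval P.1 * f.eval P.2) ^ p ^ n := by
            rw [mul_pow, ← hfQ, ← hfQ, hx]
        _ = f.eval P.1 * f.eval P.2 := by rw [hP, hcQ]
  have hfixed : (U.filter fun P ↦ P.2 ^ p ^ n = P.2).card ≤ (fixedPoints f c (p ^ n)).ncard := by
    rw [← Set.ncard_coe_finset]
    refine Set.ncard_le_ncard (fun P hP ↦ ?_) (finite_fixedPoints hn)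
    obtain ⟨hPU, hy⟩ := Finset.mem_filter.mp hP
    obtain ⟨hx, hP⟩ := hU P hPU
    exact ⟨(hs _).mp hx, hy, hP⟩
  have hsplit := Finset.card_filter_add_card_filter_not (s := U) fun P ↦ P.2 ^ p ^ n = P.2
  rw [hscard] at hUcard
  have hlow : (f.natDegree : ℝ) * p ^ n ≤ (fixedPoints f c (p ^ n)).ncard +
      (U.filter fun P ↦ P.2 ^ p ^ n ≠ P.2).card + f.natDegree ^ 3 := by
    exact_mod_cast (by lia)
  rw [Nat.cast_sub hd] at hconj
  push_cast at hconj
  linarith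

theorem abs_ncard_fixedPoints_sub_le (hd : 0 < f.natDegree) (hf : f.Separable) (hc : c ≠ 0)
    (hn : 0 < n) (hcQ : c ^ p ^ n = c) (hfQ : ∀ a, f.eval (a ^ p ^ n) = f.eval a ^ p ^ n) :
    |((fixedPoints f c (p ^ n)).ncard : ℝ) - (p : ℝ) ^ n| ≤
      (8 * f.natDegree ^ 2 * p ^ (f.natDegree + 1) + f.natDegree ^ 3) * √((p : ℝ) ^ n) := by
  have hup := ncard_fixedPoints_le (p := p) hd hf hc hn
  have hlow := le_ncard_fixedPoints_add hd hf hc hn hcQ hfQ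
  have hsqrt : (1 : ℝ) ≤ √((p : ℝ) ^ n) := by
    rw [Real.one_le_sqrt]
    exact one_le_pow₀ (by exact_mod_cast (Fact.out : p.Prime).one_le)
  have hd3 : (f.natDegree : ℝ) ^ 3 * 1 ≤ f.natDegree ^ 3 * √((p : ℝ) ^ n) := by gcongr
  rw [abs_le, add_mul]
  constructor <;> linarith [(by positivity : 0 ≤ (f.natDegree : ℝ) ^ 3 * √((p : ℝ) ^ n))]

end PointCount

theorem cardQuot_mul_of_infinite {D : Type*} [CommRing D] [IsDedekindDomain D] [Infinite D]
    (I J : Ideal D) :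
    Submodule.cardQuot (I * J) = Submodule.cardQuot I * Submodule.cardQuot J :=
  UniqueFactorizationMonoid.multiplicative_of_coprime Submodule.cardQuot I J
    (Submodule.cardQuot_bot _ _)
    (fun hI ↦ by simp [Ideal.isUnit_iff.mp hI, Ideal.mul_top])
    (fun _ hI ↦
      have := Ideal.isPrime_of_prime hI
      cardQuot_pow_of_prime hI.ne_zero)
    fun hIJ ↦ cardQuot_mul_of_coprime <| Ideal.isCoprime_iff_sup_eq.mpr <| Ideal.isUnit_iff.mp <|
      hIJ (Ideal.dvd_iff_le.mpr le_sup_left) (Ideal.dvd_iff_le.mpr le_sup_right)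

theorem radical_pow_of_prime {D : Type*} [CommRing D] [IsDedekindDomain D] {P : Ideal D}
    (hP : Prime P) {k : ℕ} (hk : k ≠ 0) : (P ^ k).radical = P := by
  rw [Ideal.radical_pow P hk, Ideal.IsPrime.radical (Ideal.isPrime_of_prime hP)]

open UniqueFactorizationMonoid in
theorem pow_dvd_iff_le_count_normalizedFactors {D : Type*} [CommRing D] [IsDedekindDomain D]
    [DecidableEq (Ideal D)] {P I : Ideal D} (hI : I ≠ ⊥) (hP : Prime P) (k : ℕ) :
    P ^ k ∣ I ↔ k ≤ (normalizedFactors I).count P := by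
  rw [pow_dvd_iff_le_emultiplicity, emultiplicity_eq_count_normalizedFactors hP.irreducible hI,
    normalize_eq, Nat.cast_le]

section Codim

variable (F : Type*) {D : Type*} [Field F] [CommRing D] [Algebra F D]

/-- The codimension of an ideal in an `F`-algebra, which plays the role of the degree of a divisor
on a curve. -/
noncomputable def codim (E : Ideal D) : ℕ := Module.finrank F (D ⧸ E)

theorem codim_top : codim F (⊤ : Ideal D) = 0 :=
  have : Subsingleton (D ⧸ (⊤ : Ideal D)) := Ideal.Quotient.subsingleton_iff.mpr rfl
  Module.finrank_zero_of_subsingleton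

variable [Ring.HasFiniteQuotients D] {E E' : Ideal D}

theorem finite_quotient (hE : E ≠ ⊥) : Module.Finite F (D ⧸ E) :=
  have := Ring.HasFiniteQuotients.finiteQuotient hE
  Module.Finite.of_finite

theorem codim_pos (hE : E ≠ ⊥) (hE' : E ≠ ⊤) : 0 < codim F E := by
  have := finite_quotient F hE
  have := Ideal.Quotient.nontrivial_iff.mpr hE'
  exact Module.finrank_pos

theorem cardQuot_eq_pow_codim (hE : E ≠ ⊥) :
    Submodule.cardQuot E = Nat.card F ^ codim F E := by
  have := finite_quotient F hE
  rw [Submodule.cardQuot_apply, codim]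
  exact Module.natCard_eq_pow_finrank

theorem finite_setOf_codim_eq (D : Type*) [CommRing D] [Algebra F D] [Ring.HasFiniteQuotients D]
    (n : ℕ) : {E : Ideal D | E ≠ ⊥ ∧ codim F E = n}.Finite := by
  refine (Ring.HasFiniteQuotients.finite_cardQuot_le (Nat.card F ^ n)).subset fun E hE ↦ ?_
  rw [Set.mem_ofPred_eq, cardQuot_eq_pow_codim F hE.1, hE.2]

variable [Finite F]

theorem codim_mul_of_cardQuot_mul [IsDomain D] (hE : E ≠ ⊥) (hE' : E' ≠ ⊥)
    (h : Submodule.cardQuot (E * E') = Submodule.cardQuot E * Submodule.cardQuot E') :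
    codim F (E * E') = codim F E + codim F E' := by
  apply Nat.pow_right_injective (Finite.one_lt_card : 1 < Nat.card F)
  dsimp only
  rw [pow_add, ← cardQuot_eq_pow_codim F hE, ← cardQuot_eq_pow_codim F hE', ← h,
    cardQuot_eq_pow_codim F (mul_ne_zero hE hE')]

theorem codim_mul_of_isCoprime [IsDomain D] (hE : E ≠ ⊥) (hE' : E' ≠ ⊥) (h : IsCoprime E E') :
    codim F (E * E') = codim F E + codim F E' :=
  codim_mul_of_cardQuot_mul F hE hE' (cardQuot_mul_of_coprime h)

variable [IsDedekindDomain D] [Infinite D]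

theorem codim_mul (hE : E ≠ ⊥) (hE' : E' ≠ ⊥) :
    codim F (E * E') = codim F E + codim F E' :=
  codim_mul_of_cardQuot_mul F hE hE' (cardQuot_mul_of_infinite E E')

theorem codim_pow (hE : E ≠ ⊥) (k : ℕ) : codim F (E ^ k) = k * codim F E := by
  induction k with
  | zero => simp [codim_top]
  | succ k ih => rw [pow_succ, codim_mul F (pow_ne_zero k hE) hE, ih, Nat.succ_mul]

theorem codim_multiset_prod {s : Multiset (Ideal D)} (hs : ⊥ ∉ s) :
    codim F s.prod = (s.map (codim F)).sum := by
  induction s using Multiset.induction with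
  | empty => simp [codim_top]
  | cons E s ih =>
    rw [Multiset.mem_cons, not_or] at hs
    rw [Multiset.prod_cons, codim_mul F (Ne.symm hs.1) (Multiset.prod_ne_zero hs.2), ih hs.2,
      Multiset.map_cons, Multiset.sum_cons]

open UniqueFactorizationMonoid Classical in
theorem codim_eq_sum_count_normalizedFactors (hE : E ≠ ⊥) :
    codim F E = ∑ P ∈ (normalizedFactors E).toFinset,
      (normalizedFactors E).count P * codim F P := by
  conv_lhs => rw [← associated_iff_eq.mp (prod_normalizedFactors hE)]
  rw [codim_multiset_prod F (zero_notMem_normalizedFactors E), Finset.sum_multiset_map_count]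
  rfl

end Codim

section IdealCount

variable (F : Type*) {D : Type*} [Field F] [CommRing D] [Algebra F D]

open Classical in
/-- The von Mangoldt function on ideals: `codim P` at the powers `P ^ k`, `k ≥ 1`, of a nonzero
prime `P`, and `0` at the other ideals. -/
noncomputable def idealMangoldt (E : Ideal D) : ℕ := if IsPrimePow E then codim F E.radical else 0

theorem idealMangoldt_pow [IsDedekindDomain D] {P : Ideal D} (hP : Prime P) {k : ℕ} (hk : k ≠ 0) :
    idealMangoldt F (P ^ k) = codim F P := by
  rw [idealMangoldt, if_pos (hP.isPrimePow.pow hk), radical_pow_of_prime hP hk]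

variable (D) [Ring.HasFiniteQuotients D]

/-- The nonzero ideals of codimension `n`, that is, the effective divisors of degree `n`. -/
noncomputable def idealsOfCodim (n : ℕ) : Finset (Ideal D) := (finite_setOf_codim_eq F D n).toFinset

variable {F D} in
theorem mem_idealsOfCodim {n : ℕ} {E : Ideal D} :
    E ∈ idealsOfCodim F D n ↔ E ≠ ⊥ ∧ codim F E = n :=
  Set.Finite.mem_toFinset _

theorem idealsOfCodim_zero [Nontrivial D] : idealsOfCodim F D 0 = {⊤} := by
  ext E
  rw [mem_idealsOfCodim, Finset.mem_singleton]
  refine ⟨fun ⟨hE, h⟩ ↦ ?_, fun h ↦ h ▸ ⟨top_ne_bot, codim_top F⟩⟩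
  by_contra htop
  exact (codim_pos F hE htop).ne' h

/-- The zeta function of the algebra, as the generating function of its ideals. -/
noncomputable def zetaSeries : PowerSeries ℝ := .mk fun n ↦ (idealsOfCodim F D n).card

/-- The coefficients of the logarithmic derivative of `zetaSeries`. They count the points over the
extension of `F` of degree `n`, see `ncard_algHom_eq_mangoldtSum`. -/
noncomputable def mangoldtSum (n : ℕ) : ℕ := ∑ E ∈ idealsOfCodim F D n, idealMangoldt F E

variable {D}

variable [IsDedekindDomain D]

theorem mangoldtSum_zero : mangoldtSum F D 0 = 0 := by
  rw [mangoldtSum, idealsOfCodim_zero, Finset.sum_singleton, idealMangoldt]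
  exact if_neg (Ideal.one_eq_top (R := D) ▸ not_isPrimePow_one)

variable [Finite F] [Infinite D]

open UniqueFactorizationMonoid in
theorem sum_dvd_idealMangoldt {I : Ideal D} (hI : I ≠ ⊥) {s : Finset (Ideal D)}
    (hs : ∀ E, E ∈ s ↔ E ∣ I) : ∑ E ∈ s, idealMangoldt F E = codim F I := by
  classical
  have hprime {P : Ideal D} (hP : P ∈ (normalizedFactors I).toFinset) : Prime P :=
    prime_of_normalized_factor P (Multiset.mem_toFinset.mp hP)
  calc ∑ E ∈ s, idealMangoldt F E
      = ∑ Pk ∈ (normalizedFactors I).toFinset.sigma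
          fun P ↦ Finset.Icc 1 ((normalizedFactors I).count P), codim F Pk.1 := by
        refine (Finset.sum_of_injOn (fun Pk ↦ Pk.1 ^ Pk.2) ?_ ?_ ?_ ?_).symm
        · rintro ⟨P, k⟩ h ⟨Q, l⟩ h' hPQ
          obtain ⟨hP, hk⟩ := Finset.mem_sigma.mp h
          obtain ⟨hQ, hl⟩ := Finset.mem_sigma.mp h'
          dsimp only at hPQ hP hQ hk hl
          obtain rfl : P = Q := by
            rw [← radical_pow_of_prime (hprime hP) (by grind : k ≠ 0), hPQ,
              radical_pow_of_prime (hprime hQ) (by grind : l ≠ 0)]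
          obtain rfl : k = l :=
            pow_injective_of_not_isUnit (hprime hP).not_isUnit (hprime hP).ne_zero hPQ
          rfl
        · rintro ⟨P, k⟩ h
          obtain ⟨hP, hk⟩ := Finset.mem_sigma.mp h
          exact (hs _).mpr <| (pow_dvd_iff_le_count_normalizedFactors hI (hprime hP) k).mpr
            (Finset.mem_Icc.mp hk).2
        · intro E hE hEim
          refine if_neg fun hpp ↦ hEim ?_
          obtain ⟨P, k, hP, hk, rfl⟩ := (isPrimePow_def E).mp hpp
          have hkc := (pow_dvd_iff_le_count_normalizedFactors hI hP k).mp ((hs _).mp hE)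
          refine ⟨⟨P, k⟩, ?_, rfl⟩
          simp only [Finset.coe_sigma, Set.mem_sigma_iff, Finset.mem_coe, Finset.mem_Icc,
            Multiset.mem_toFinset]
          exact ⟨Multiset.count_pos.mp (hk.trans_le hkc), hk, hkc⟩
        · rintro ⟨P, k⟩ h
          obtain ⟨hP, hk⟩ := Finset.mem_sigma.mp h
          exact (idealMangoldt_pow F (hprime hP) (by grind)).symm
    _ = codim F I := by
        rw [codim_eq_sum_count_normalizedFactors F hI, Finset.sum_sigma]
        simp

open Classical in
theorem card_filter_dvd_idealsOfCodim {E : Ideal D} (hE : E ≠ ⊥) (n : ℕ) :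
    {I ∈ idealsOfCodim F D (n + codim F E) | E ∣ I}.card = (idealsOfCodim F D n).card := by
  rw [← Finset.card_image_of_injective (idealsOfCodim F D n) (mul_right_injective₀ hE)]
  congr 1
  ext I
  simp only [Finset.mem_filter, Finset.mem_image, mem_idealsOfCodim]
  constructor
  · rintro ⟨hI, E', rfl⟩
    have hE' : E' ≠ ⊥ := right_ne_zero_of_mul (show E * E' ≠ 0 from hI.1)
    have hn := hI.2
    rw [codim_mul F hE hE', add_comm] at hn
    exact ⟨E', ⟨hE', Nat.add_right_cancel hn⟩, rfl⟩
  · rintro ⟨E', hE', rfl⟩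
    exact ⟨⟨mul_ne_zero hE hE'.1, by rw [codim_mul F hE hE'.1, hE'.2, add_comm]⟩,
      dvd_mul_right E E'⟩

theorem codim_le_of_dvd {E I : Ideal D} (hI : I ≠ ⊥) (h : E ∣ I) :
    E ≠ ⊥ ∧ codim F E ≤ codim F I := by
  obtain ⟨E', rfl⟩ := h
  have hE : E ≠ ⊥ := left_ne_zero_of_mul (show E * E' ≠ 0 from hI)
  have hE' : E' ≠ ⊥ := right_ne_zero_of_mul (show E * E' ≠ 0 from hI)
  exact ⟨hE, codim_mul F hE hE' ▸ Nat.le_add_right _ _⟩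

theorem mul_card_idealsOfCodim (n : ℕ) : n * (idealsOfCodim F D n).card =
    ∑ ij ∈ Finset.HasAntidiagonal.antidiagonal n,
      (idealsOfCodim F D ij.1).card * mangoldtSum F D ij.2 := by
  classical
  have hcodim (I) (hI : I ∈ idealsOfCodim F D n) :
      n = ∑ ij ∈ Finset.HasAntidiagonal.antidiagonal n,
        ∑ E ∈ idealsOfCodim F D ij.2, if E ∣ I then idealMangoldt F E else 0 := by
    obtain ⟨hI0, rfl⟩ := mem_idealsOfCodim.mp hI
    let s := (Finset.HasAntidiagonal.antidiagonal (codim F I)).biUnion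
      fun ij ↦ {E ∈ idealsOfCodim F D ij.2 | E ∣ I}
    have hs (E) : E ∈ s ↔ E ∣ I := by
      simp only [s, Finset.mem_biUnion, Finset.mem_filter, mem_idealsOfCodim]
      refine ⟨fun ⟨_, _, _, h⟩ ↦ h, fun h ↦ ?_⟩
      obtain ⟨hE, hle⟩ := codim_le_of_dvd F hI0 h
      exact ⟨(codim F I - codim F E, codim F E),
        Finset.HasAntidiagonal.mem_antidiagonal.mpr (Nat.sub_add_cancel hle), ⟨hE, rfl⟩, h⟩
    refine (sum_dvd_idealMangoldt F hI0 hs).symm.trans ?_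
    rw [Finset.sum_biUnion]
    · simp only [Finset.sum_filter]
    · intro ij hij ij' hij' hne
      refine Finset.disjoint_left.mpr fun E hE hE' ↦ hne ?_
      simp only [Finset.mem_filter, mem_idealsOfCodim] at hE hE'
      simp only [Finset.mem_coe, Finset.HasAntidiagonal.mem_antidiagonal] at hij hij'
      ext <;> lia
  rw [mul_comm, ← smul_eq_mul, ← Finset.sum_const, Finset.sum_congr rfl hcodim, Finset.sum_comm]
  refine Finset.sum_congr rfl fun ij hij ↦ ?_
  rw [Finset.sum_comm, mangoldtSum, Finset.mul_sum]
  refine Finset.sum_congr rfl fun E hE ↦ ?_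
  obtain ⟨hE, hj⟩ := mem_idealsOfCodim.mp hE
  rw [← Finset.HasAntidiagonal.mem_antidiagonal.mp hij, ← Finset.sum_filter, Finset.sum_const, ← hj,
    card_filter_dvd_idealsOfCodim F hE, smul_eq_mul]

theorem derivative_zetaSeries : PowerSeries.derivative ℝ (zetaSeries F D) =
    zetaSeries F D * .mk fun n ↦ (mangoldtSum F D (n + 1) : ℝ) := by
  ext n
  have h := mul_card_idealsOfCodim F (D := D) (n + 1)
  rw [Finset.Nat.sum_antidiagonal_succ', mangoldtSum_zero, mul_zero, zero_add] at h
  rw [PowerSeries.coeff_derivative, PowerSeries.coeff_mul, mul_comm]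
  simp only [zetaSeries, PowerSeries.coeff_mk]
  exact_mod_cast h

open Classical in
/-- Writing `span {t} = E * E'` exchanges the divisors of codimensions `n` and `m`. -/
theorem card_filter_mem_idealsOfCodim_le {t : D} (ht : t ≠ 0) {n m : ℕ}
    (hnm : codim F (Ideal.span {t}) = n + m) :
    {E ∈ idealsOfCodim F D n | t ∈ E}.card ≤ {E ∈ idealsOfCodim F D m | t ∈ E}.card := by
  have hspan : Ideal.span {t} ≠ ⊥ := by rwa [Ne, Ideal.span_singleton_eq_bot]
  choose! g hg using fun (E : Ideal D) (hE : t ∈ E) ↦ Ideal.dvd_span_singleton.mpr hE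
  refine Finset.card_le_card_of_injOn g (fun E hE ↦ ?_) fun E hE E' hE' h ↦ ?_
  · obtain ⟨hE, ht⟩ := Finset.mem_filter.mp hE
    obtain ⟨hE, hn⟩ := mem_idealsOfCodim.mp hE
    have hgE : g E ≠ ⊥ := right_ne_zero_of_mul (hg E ht ▸ hspan)
    rw [hg E ht, codim_mul F hE hgE, hn] at hnm
    refine Finset.mem_filter.mpr ⟨mem_idealsOfCodim.mpr ⟨hgE, Nat.add_left_cancel hnm⟩, ?_⟩
    exact Ideal.dvd_span_singleton.mp ⟨E, (hg E ht).trans (mul_comm _ _)⟩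
  · have ht := hg E (Finset.mem_filter.mp hE).2
    have ht' := hg E' (Finset.mem_filter.mp hE').2
    rw [← h] at ht'
    exact mul_right_cancel₀ (right_ne_zero_of_mul (ht ▸ hspan)) (ht.symm.trans ht')

open Classical in
/-- Double counting of the pairs `(E, t)` with `t ∈ M ∩ E`. -/
theorem card_div_pow_eq_of_card_filter_mem {q w n m : ℕ} (hq : 0 < q) {M : Finset D}
    (hM : ∀ t ∈ M, t ≠ 0 ∧ codim F (Ideal.span {t}) = n + m)
    (hn : ∀ E ∈ idealsOfCodim F D n, {t ∈ M | t ∈ E}.card * q ^ n = q ^ w)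
    (hm : ∀ E ∈ idealsOfCodim F D m, {t ∈ M | t ∈ E}.card * q ^ m = q ^ w) :
    ((idealsOfCodim F D n).card : ℝ) / q ^ n = (idealsOfCodim F D m).card / q ^ m := by
  have hq0 : (q : ℝ) ≠ 0 := by exact_mod_cast hq.ne'
  have hcount {e : ℕ} (he : ∀ E ∈ idealsOfCodim F D e, {t ∈ M | t ∈ E}.card * q ^ e = q ^ w) :
      ((idealsOfCodim F D e).card : ℝ) / q ^ e * q ^ w =
        ∑ t ∈ M, ({E ∈ idealsOfCodim F D e | t ∈ E}.card : ℝ) := by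
    have h : ∑ t ∈ M, {E ∈ idealsOfCodim F D e | t ∈ E}.card * q ^ e =
        (idealsOfCodim F D e).card * q ^ w := by
      rw [← Finset.sum_mul, ← smul_eq_mul _ (q ^ w), ← Finset.sum_const,
        ← Finset.sum_congr rfl he, ← Finset.sum_mul]
      exact congrArg (· * q ^ e)
        (Finset.sum_card_bipartiteAbove_eq_sum_card_bipartiteBelow fun (t : D) E ↦ t ∈ E)
    rw [div_mul_eq_mul_div, div_eq_iff (pow_ne_zero _ hq0), Finset.sum_mul]
    exact_mod_cast h.symm
  refine mul_right_cancel₀ (pow_ne_zero w hq0) ?_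
  rw [hcount hn, hcount hm]
  refine Finset.sum_congr rfl fun t ht ↦ ?_
  obtain ⟨ht, hnm⟩ := hM t ht
  rw [(card_filter_mem_idealsOfCodim_le F ht hnm).antisymm
    (card_filter_mem_idealsOfCodim_le F ht (hnm.trans (add_comm n m)))]

end IdealCount

section HomCount

variable {F D K : Type*} [Field F] [CommRing D] [Algebra F D] [Field K] [Algebra F K]

variable (K) in
/-- The homomorphisms out of the residue field at `P`, as the homomorphisms with kernel `P`. -/
noncomputable def algHomQuotientEquiv (P : Ideal D) [P.IsMaximal] :
    (D ⧸ P →ₐ[F] K) ≃ {φ : D →ₐ[F] K | RingHom.ker φ = P} where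
  toFun ψ := ⟨ψ.comp (Ideal.Quotient.mkₐ F P), by
    let := Ideal.Quotient.field P
    ext z
    rw [RingHom.mem_ker, AlgHom.comp_apply, map_eq_zero_iff ψ ψ.injective]
    exact Ideal.Quotient.eq_zero_iff_mem⟩
  invFun φ := Ideal.Quotient.liftₐ P φ.1 fun _ ha ↦ φ.2.ge ha
  left_inv ψ := Ideal.Quotient.algHom_ext F (by ext; rfl)
  right_inv φ := by
    ext
    rfl

theorem nonempty_algHom_of_codim_eq_one {E : Ideal D} (hE : codim F E = 1) :
    Nonempty (D →ₐ[F] F) := by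
  rw [codim] at hE
  have := Module.finite_of_finrank_eq_succ hE
  have : Nontrivial (D ⧸ E) := Module.nontrivial_of_finrank_pos (R := F) (by lia)
  let e : F ≃ₐ[F] (D ⧸ E) := AlgEquiv.ofBijective (Algebra.ofId F (D ⧸ E))
    (Module.Free.bijective_algebraMap_of_finrank_eq_one hE)
  exact ⟨(e.symm : (D ⧸ E) →ₐ[F] F).comp (Ideal.Quotient.mkₐ F E)⟩

theorem ker_ne_bot_of_pow_eq [Infinite D] {Q : ℕ} (hQ : 1 < Q) {φ : D →ₐ[F] K}
    (hφ : ∀ z, φ z ^ Q = φ z) : RingHom.ker φ ≠ ⊥ := by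
  intro hbot
  refine Set.infinite_range_of_injective ((RingHom.injective_iff_ker_eq_bot φ).mpr hbot) ?_
  refine (Polynomial.rootSet_finite (.X ^ Q - .X : Polynomial K) K).subset ?_
  rintro _ ⟨z, rfl⟩
  rw [Polynomial.mem_rootSet]
  exact ⟨FiniteField.X_pow_card_sub_X_ne_zero K hQ, by simp [hφ z]⟩

variable [Ring.HasFiniteQuotients D] [Finite F]

variable (K) in
theorem ncard_setOf_ker_eq [IsAlgClosed K] {P : Ideal D}
    (hP : P ≠ ⊥) [P.IsPrime] : {φ : D →ₐ[F] K | RingHom.ker φ = P}.Finite ∧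
      {φ : D →ₐ[F] K | RingHom.ker φ = P}.ncard = codim F P := by
  have := finite_quotient F hP
  have : Finite (D ⧸ P) := Module.finite_of_finite F
  have : P.IsMaximal := Ideal.Quotient.maximal_of_isField _ (Finite.isField_of_domain (D ⧸ P))
  let := Ideal.Quotient.field P
  refine ⟨Set.finite_coe_iff.mp (.of_equiv _ (algHomQuotientEquiv K P)), ?_⟩
  rw [← Nat.card_coe_set_eq, ← Nat.card_congr (algHomQuotientEquiv K P),
    AlgHom.natCard_of_splits F (D ⧸ P) K fun _ ↦ IsAlgClosed.splits _, codim]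

theorem codim_dvd_iff {P : Ideal D} (hP : P ≠ ⊥) [P.IsPrime] (j : ℕ) :
    codim F P ∣ j ↔ ∀ z : D ⧸ P, z ^ Nat.card F ^ j = z := by
  have := finite_quotient F hP
  have : Finite (D ⧸ P) := Module.finite_of_finite F
  have : P.IsMaximal := Ideal.Quotient.maximal_of_isField _ (Finite.isField_of_domain (D ⧸ P))
  let := Ideal.Quotient.field P
  let := Fintype.ofFinite F
  rw [codim, ← FiniteField.orderOf_frobeniusAlgHom F (D ⧸ P), orderOf_dvd_iff_pow_eq_one,
    AlgHom.ext_iff]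
  refine forall_congr' fun z ↦ ?_
  rw [AlgHom.coe_pow, FiniteField.coe_frobeniusAlgHom, pow_iterate, AlgHom.one_apply,
    Nat.card_eq_fintype_card]

theorem forall_pow_card_pow_eq_iff [Infinite D] {j : ℕ} (hj : 0 < j) (φ : D →ₐ[F] K) :
    (∀ z, φ z ^ Nat.card F ^ j = φ z) ↔
      RingHom.ker φ ≠ ⊥ ∧ codim F (RingHom.ker φ) ∣ j := by
  have hker : (∀ z, φ z ^ Nat.card F ^ j = φ z) ↔
      ∀ z : D ⧸ RingHom.ker φ, z ^ Nat.card F ^ j = z := by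
    rw [Ideal.Quotient.mk_surjective.forall]
    refine forall_congr' fun z ↦ ?_
    rw [← map_pow, ← map_pow, Ideal.Quotient.eq, RingHom.mem_ker, map_sub, sub_eq_zero]
  have : (RingHom.ker φ).IsPrime := RingHom.ker_isPrime φ
  refine ⟨fun h ↦ ?_, fun ⟨hbot, hdvd⟩ ↦ hker.mpr ((codim_dvd_iff hbot j).mp hdvd)⟩
  have hbot := ker_ne_bot_of_pow_eq (Nat.one_lt_pow hj.ne' Finite.one_lt_card) h
  exact ⟨hbot, (codim_dvd_iff hbot j).mpr (hker.mp h)⟩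

variable [IsDedekindDomain D]

variable (K) in
theorem ncard_setOf_ker_eq_radical [IsAlgClosed K] (E : Ideal D) :
    {φ : D →ₐ[F] K | IsPrimePow E ∧ RingHom.ker φ = E.radical}.Finite ∧
    {φ : D →ₐ[F] K | IsPrimePow E ∧ RingHom.ker φ = E.radical}.ncard = idealMangoldt F E := by
  by_cases hE : IsPrimePow E
  · obtain ⟨P, k, hP, hk, rfl⟩ := (isPrimePow_def E).mp hE
    have := Ideal.isPrime_of_prime hP
    simpa only [hE, true_and, radical_pow_of_prime hP hk.ne', idealMangoldt_pow F hP hk.ne'] using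
      ncard_setOf_ker_eq K hP.ne_zero
  · simp [idealMangoldt, hE]

variable [Infinite D]

theorem exists_isPrimePow_iff_codim_dvd {P : Ideal D} (hP : Prime P) {j : ℕ} (hj : 0 < j) :
    (∃ E ∈ idealsOfCodim F D j, IsPrimePow E ∧ P = E.radical) ↔ codim F P ∣ j := by
  constructor
  · rintro ⟨E, hEj, hE, rfl⟩
    obtain ⟨P, k, hP', hk, rfl⟩ := (isPrimePow_def E).mp hE
    rw [radical_pow_of_prime hP' hk.ne', ← (mem_idealsOfCodim.mp hEj).2, codim_pow F hP'.ne_zero]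
    exact dvd_mul_left _ _
  · rintro ⟨k, rfl⟩
    have hk : k ≠ 0 := right_ne_zero_of_mul hj.ne'
    exact ⟨P ^ k, mem_idealsOfCodim.mpr
      ⟨pow_ne_zero k hP.ne_zero, (codim_pow F hP.ne_zero k).trans (mul_comm _ _)⟩,
      hP.isPrimePow.pow hk, (radical_pow_of_prime hP hk).symm⟩

theorem eq_of_radical_eq_of_mem_idealsOfCodim {E E' : Ideal D} (hE : IsPrimePow E)
    (hE' : IsPrimePow E') (h : E.radical = E'.radical) (hcodim : codim F E = codim F E') :
    E = E' := by
  obtain ⟨P, k, hP, hk, rfl⟩ := (isPrimePow_def E).mp hE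
  obtain ⟨P', k', hP', hk', rfl⟩ := (isPrimePow_def E').mp hE'
  rw [radical_pow_of_prime hP hk.ne', radical_pow_of_prime hP' hk'.ne'] at h
  subst h
  rw [codim_pow F hP.ne_zero, codim_pow F hP.ne_zero] at hcodim
  rw [Nat.eq_of_mul_eq_mul_right
    (codim_pos F hP.ne_zero (Ideal.isPrime_of_prime hP).ne_top) hcodim]

variable (K) in
theorem ncard_algHom_eq_mangoldtSum [IsAlgClosed K] {j : ℕ} (hj : 0 < j) :
    {φ : D →ₐ[F] K | ∀ z, φ z ^ Nat.card F ^ j = φ z}.ncard = mangoldtSum F D j := by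
  have hunion : {φ : D →ₐ[F] K | ∀ z, φ z ^ Nat.card F ^ j = φ z} =
      ⋃ E ∈ (idealsOfCodim F D j : Set (Ideal D)),
        {φ | IsPrimePow E ∧ RingHom.ker φ = E.radical} := by
    ext φ
    simp only [Set.mem_iUnion, exists_prop, Set.mem_ofPred_eq, Finset.mem_coe,
      forall_pow_card_pow_eq_iff hj]
    refine ⟨fun ⟨hbot, h⟩ ↦ ?_, fun ⟨E, hEj, hE, hker⟩ ↦ ?_⟩
    · exact (exists_isPrimePow_iff_codim_dvd
        (Ideal.prime_of_isPrime hbot (RingHom.ker_isPrime φ)) hj).mpr h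
    · have hP : Prime (RingHom.ker φ) := by
        obtain ⟨P, k, hP, hk, rfl⟩ := (isPrimePow_def E).mp hE
        rwa [hker, radical_pow_of_prime hP hk.ne']
      exact ⟨hP.ne_zero, (exists_isPrimePow_iff_codim_dvd hP hj).mp ⟨E, hEj, hE, hker⟩⟩
  rw [hunion, (Finset.finite_toSet _).ncard_biUnion fun E _ ↦ (ncard_setOf_ker_eq_radical K E).1]
  · rw [finsum_mem_coe_finset]
    exact Finset.sum_congr rfl fun E _ ↦ (ncard_setOf_ker_eq_radical K E).2
  · refine fun E hE E' hE' hne ↦ Set.disjoint_left.mpr fun φ hφ hφ' ↦ hne ?_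
    exact eq_of_radical_eq_of_mem_idealsOfCodim hφ.1 hφ'.1 (hφ.2.symm.trans hφ'.2)
      ((mem_idealsOfCodim.mp hE).2.trans (mem_idealsOfCodim.mp hE').2.symm)

end HomCount

theorem ncard_sub_mem_and_sub_mem {A : Type*} [AddCommGroup A] {V W : AddSubgroup A}
    (hVW : V ⊔ W = ⊤) (a b : A) :
    {r | r - a ∈ V ∧ r - b ∈ W}.ncard * Nat.card (A ⧸ W) = Nat.card V := by
  obtain ⟨v, hv, w, hw, hvw⟩ := AddSubgroup.mem_sup.mp (hVW ▸ AddSubgroup.mem_top (b - a))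
  have hset : {r | r - a ∈ V ∧ r - b ∈ W} = (· + (a + v)) '' (V ⊓ W : AddSubgroup A) := by
    ext r
    rw [Set.image_add_right, Set.mem_preimage, Set.mem_ofPred_eq, SetLike.mem_coe,
      AddSubgroup.mem_inf, ← sub_eq_add_neg]
    refine and_congr ?_ ?_
    · rw [← sub_sub, sub_eq_add_neg _ v, add_mem_cancel_right (neg_mem hv)]
    · have : r - (a + v) = r - b + w := by grind
      rw [this, add_mem_cancel_right hw]
  have hcard := AddSubgroup.relIndex_mul_relIndex ⊥ (V ⊓ W) V bot_le inf_le_left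
  rw [AddSubgroup.relIndex_bot_left, AddSubgroup.relIndex_bot_left,
    AddSubgroup.inf_relIndex_left, ← AddSubgroup.relIndex_sup_right, hVW,
    AddSubgroup.relIndex_top_right] at hcard
  rw [hset, Set.ncard_image_of_injective _ (add_left_injective _)]
  exact hcard

section Localization

variable {R D : Type*} [CommRing R] [CommRing D] [Algebra R D]

theorem bijective_algebraMap_quotient_under (M : Submonoid R) [IsLocalization M D] (E : Ideal D)
    [IsArtinianRing (R ⧸ E.under R)] :
    Function.Bijective (algebraMap (R ⧸ E.under R) (D ⧸ E)) := by
  refine ⟨FaithfulSMul.algebraMap_injective _ _, ?_⟩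
  have : IsLocalization (M.map (Ideal.Quotient.mk (E.under R))) (D ⧸ E) :=
    IsLocalization.of_surjective M D _ Ideal.Quotient.mk_surjective (Ideal.Quotient.mk E)
      Ideal.Quotient.mk_surjective rfl (by
        rw [Ideal.mk_ker, Ideal.mk_ker, IsLocalization.map_under M D E])
  exact IsArtinianRing.localization_surjective (M.map (Ideal.Quotient.mk (E.under R))) (D ⧸ E)

theorem under_ne_bot_of_isLocalization (M : Submonoid R) [IsLocalization M D] {E : Ideal D}
    (hE : E ≠ ⊥) : E.under R ≠ ⊥ := by
  intro h
  rw [← IsLocalization.map_under M D E, h, Ideal.map_bot] at hE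
  exact hE rfl

theorem isCoprime_under_span [Ring.HasFiniteQuotients R] (δ : R) [IsLocalization.Away δ D]
    {E : Ideal D} (hE : E ≠ ⊥) : IsCoprime (E.under R) (Ideal.span {δ}) := by
  have := Ring.HasFiniteQuotients.finiteQuotient
    (under_ne_bot_of_isLocalization (.powers δ) hE)
  have hunit : IsUnit (RingEquiv.ofBijective _
      (bijective_algebraMap_quotient_under (.powers δ) E) (Ideal.Quotient.mk _ δ)) :=
    (IsLocalization.Away.algebraMap_isUnit (S := D) δ).map (Ideal.Quotient.mk E)
  obtain ⟨s, hs⟩ := ((MulEquiv.isUnit_map _).mp hunit).exists_right_inv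
  obtain ⟨s, rfl⟩ := Ideal.Quotient.mk_surjective s
  rw [← map_mul, ← map_one (Ideal.Quotient.mk _), eq_comm, Ideal.Quotient.eq] at hs
  exact Ideal.isCoprime_iff_exists.mpr
    ⟨_, hs, δ * s, Ideal.mul_mem_right s _ (Ideal.mem_span_singleton_self δ), by ring⟩

theorem under_map_of_isCoprime (δ : R) [IsLocalization.Away δ D] {I : Ideal R}
    (hI : IsCoprime I (Ideal.span {δ})) : (I.map (algebraMap R D)).under R = I := by
  refine le_antisymm (fun r hr ↦ ?_) Ideal.le_comap_map
  obtain ⟨_, ⟨n, rfl⟩, hn⟩ :=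
    (IsLocalization.algebraMap_mem_map_algebraMap_iff (.powers δ) D I r).mp hr
  obtain ⟨i, hi, j, hj, hij⟩ := Ideal.isCoprime_iff_exists.mp (hI.pow_right (n := n))
  rw [Ideal.span_singleton_pow, Ideal.mem_span_singleton'] at hj
  obtain ⟨b, rfl⟩ := hj
  rw [← one_mul r, ← hij, add_mul, mul_assoc]
  exact add_mem (I.mul_mem_right r hi) (I.mul_mem_left b hn)

variable [Ring.HasFiniteQuotients R]

theorem hasFiniteQuotients_of_isLocalization (M : Submonoid R) [IsLocalization M D] :
    Ring.HasFiniteQuotients D where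
  finiteQuotient {E} hE := by
    have := Ring.HasFiniteQuotients.finiteQuotient (under_ne_bot_of_isLocalization M hE)
    exact .of_surjective _ (bijective_algebraMap_quotient_under M E).surjective

theorem codim_under_of_isLocalization {F : Type*} [Field F] [Algebra F R] [Algebra F D]
    [IsScalarTower F R D] (M : Submonoid R) [IsLocalization M D] {E : Ideal D} (hE : E ≠ ⊥) :
    codim F (E.under R) = codim F E := by
  have := Ring.HasFiniteQuotients.finiteQuotient (under_ne_bot_of_isLocalization M hE)
  exact (LinearEquiv.ofBijective
    (Ideal.quotientMapₐ E (IsScalarTower.toAlgHom F R D) le_rfl).toLinearMap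
    (bijective_algebraMap_quotient_under M E)).finrank_eq

end Localization

theorem isDedekindDomain_of_essFiniteType_of_formallyUnramified (A B : Type*) [CommRing A]
    [CommRing B] [Algebra A B] [IsDedekindDomain A] [IsDomain B] [Algebra.EssFiniteType A B]
    [Algebra.FormallyUnramified A B] : IsDedekindDomain B := by
  have : IsNoetherianRing B := Algebra.EssFiniteType.isNoetherianRing A B
  suffices IsDedekindDomainDvr B from inferInstance
  refine ⟨fun q hq _ ↦ ?_⟩
  let p := q.under A
  let := Localization.AtPrime.algebraOfLiesOver p q
  have hmax : p.map (algebraMap A (Localization.AtPrime q)) = IsLocalRing.maximalIdeal _ :=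
    ((Algebra.isUnramifiedAt_iff_map_eq A p q).mp inferInstance).2
  suffices (IsLocalRing.maximalIdeal (Localization.AtPrime q)).IsPrincipal from
    ((IsDiscreteValuationRing.TFAE (Localization.AtPrime q)
      (IsLocalization.AtPrime.not_isField B hq _)).out 4 0).mp this
  rw [← hmax, IsScalarTower.algebraMap_eq A (Localization.AtPrime p) (Localization.AtPrime q),
    ← Ideal.map_map]
  infer_instance

section Unramified

theorem eq_of_aeval_eq_of_sq_eq_zero {F S : Type*} [CommRing F] [CommRing S] [Algebra F S]
    {f : F[X]} {a b : S} (hb : IsUnit (aeval b f.derivative)) (hab : (a - b) ^ 2 = 0)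
    (h : aeval a f = aeval b f) : a = b := by
  have hadd := aeval_add_of_sq_eq_zero f b (a - b) hab
  rw [add_sub_cancel, h, left_eq_add, hb.mul_right_eq_zero] at hadd
  exact sub_eq_zero.mp hadd

variable {F R D : Type*} [Field F] [CommRing R] [CommRing D] [Algebra F R] [Algebra F D]
  [Algebra R D] [IsScalarTower F R D] {f : F[X]} {c : F} {x y : R}

namespace IsProductCurve

theorem aeval_derivative_ne_zero (H : IsProductCurve f c x y) (hf : f.Separable) :
    aeval y f.derivative ≠ 0 := by
  intro h
  rw [Polynomial.Separable, transcendental_iff.mp H.transcendental_snd _ h,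
    isCoprime_zero_right] at hf
  exact H.natDegree_pos.ne' (natDegree_eq_zero_of_isUnit hf)

theorem finiteType (H : IsProductCurve f c x y) : Algebra.FiniteType F R := by
  refine ⟨Subalgebra.fg_def.mpr ⟨{x, y}, Set.toFinite _, ?_⟩⟩
  rw [← Algebra.toSubmodule_eq_top, eq_top_iff, ← H.monomialSpan_univ, monomialSpan_le_iff]
  exact fun p _ ↦ Subalgebra.mul_mem (Algebra.adjoin F {x, y})
    (pow_mem (Algebra.subset_adjoin (by simp)) _) (pow_mem (Algebra.subset_adjoin (by simp)) _)

theorem infinite (H : IsProductCurve f c x y) : Infinite R :=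
  have : Infinite (reducedExponents f.natDegree) :=
    .of_injective (fun n : ℕ ↦ ⟨(n, 0), Or.inr H.natDegree_pos⟩)
      fun _ _ h ↦ congrArg Prod.fst (congrArg Subtype.val h)
  .of_injective _ H.basis.injective

theorem hasFiniteQuotients [Finite F] [IsDomain R] (H : IsProductCurve f c x y) :
    Ring.HasFiniteQuotients R where
  finiteQuotient {I} hI := by
    obtain ⟨g, hg, hg0⟩ := Submodule.exists_mem_ne_zero_of_ne_bot hI
    have := H.finite_quotient_span hg0
    have : Finite (R ⧸ Ideal.span {g}) := Module.finite_of_finite F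
    exact .of_surjective _
      (Ideal.Quotient.factor_surjective ((Ideal.span_singleton_le_iff_mem I).mpr hg))

theorem isUnit_aeval_fst (H : IsProductCurve f c x y) : IsUnit (aeval x f) :=
  isUnit_of_mul_isUnit_left (H.aeval_mul_aeval ▸ H.ne_zero.isUnit.map (algebraMap F R))

variable [IsLocalization.Away (aeval y f.derivative) D]

theorem formallyUnramified [Algebra F[X] D] [IsScalarTower F F[X] D]
    (hX : algebraMap F[X] D X = algebraMap R D x) (H : IsProductCurve f c x y) :
    Algebra.FormallyUnramified F[X] D := by
  refine Algebra.FormallyUnramified.iff_comp_injective.mpr fun B _ _ I hI φ ψ hφψ ↦ ?_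
  let : Algebra F B := ((algebraMap F[X] B).comp (algebraMap F F[X])).toAlgebra
  have : IsScalarTower F F[X] B := .of_algebraMap_eq fun _ ↦ rfl
  let toB (χ : D →ₐ[F[X]] B) : R →ₐ[F] B :=
    (χ.restrictScalars F).comp (IsScalarTower.toAlgHom F R D)
  have hx : toB φ x = toB ψ x := by
    change φ (algebraMap R D x) = ψ (algebraMap R D x)
    rw [← hX, φ.commutes, ψ.commutes]
  have hsq : (toB φ y - toB ψ y) ^ 2 = 0 := by
    rw [← Ideal.mem_bot, ← hI]
    exact Ideal.pow_mem_pow (Ideal.Quotient.eq.mp (DFunLike.congr_fun hφψ (algebraMap R D y))) 2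
  have hunit : IsUnit (aeval (toB ψ y) f.derivative) := by
    rw [aeval_algHom_apply]
    exact (IsLocalization.Away.algebraMap_isUnit (S := D) (aeval y f.derivative)).map ψ
  have haeval : aeval (toB φ y) f = aeval (toB ψ y) f := by
    apply (H.isUnit_aeval_fst.map (toB ψ)).mul_left_cancel
    rw [aeval_algHom_apply (toB ψ), ← map_mul, H.aeval_mul_aeval, ← aeval_algHom_apply (toB ψ),
      ← hx, aeval_algHom_apply, aeval_algHom_apply, ← map_mul, H.aeval_mul_aeval,
      AlgHom.commutes, AlgHom.commutes]
  have hcomp : toB φ = toB ψ := H.algHom_ext hx (eq_of_aeval_eq_of_sq_eq_zero hunit hsq haeval)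
  exact AlgHom.restrictScalars_injective F
    (IsLocalization.algHom_ext (.powers (aeval y f.derivative)) hcomp)

theorem isDedekindDomain [IsDomain D] (H : IsProductCurve f c x y) : IsDedekindDomain D := by
  let : Algebra F[X] D := (aeval (algebraMap R D x)).toAlgebra
  have : IsScalarTower F F[X] D := .of_algHom (aeval (algebraMap R D x))
  have := H.finiteType
  have : Algebra.EssFiniteType R D :=
    .of_isLocalization D (.powers (aeval y f.derivative))
  have : Algebra.EssFiniteType F D := .comp F R D
  have : Algebra.EssFiniteType F[X] D := .of_comp F F[X] D
  have := H.formallyUnramified (D := D) (aeval_X (algebraMap R D x))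
  exact isDedekindDomain_of_essFiniteType_of_formallyUnramified F[X] D

end IsProductCurve

end Unramified

section Reflection

variable {F R : Type*} [Field F] [CommRing R] [Algebra F R] {f : F[X]} {c : F} {x y : R}

variable (F) in
/-- The elements `t` of level `k` used to compare the ideals of codimension `n` with those of
codimension `2 * d * k - n`. The congruence modulo `δ` makes `t` generate the same ideal before and
after localizing away from `δ`. -/
def reflectors (x y δ : R) (k : ℕ) : Set R :=
  {t | IsMonicOfLevel F x y k t ∧ t - 1 ∈ Ideal.span {δ}}

theorem finite_reflectors [Finite F] (x y δ : R) (k : ℕ) : (reflectors F x y δ k).Finite := by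
  have : Finite (boxSpan F x y k k) := Module.finite_of_finite F
  refine ((Set.toFinite (boxSpan F x y k k : Set R)).preimage
    (sub_left_injective (b := x ^ k + y ^ k)).injOn).subset fun t ht ↦ ht.1

theorem isCoprime_span_of_mem_reflectors {δ t : R} {k : ℕ} (ht : t ∈ reflectors F x y δ k) :
    IsCoprime (Ideal.span {t}) (Ideal.span {δ}) :=
  Ideal.isCoprime_iff_exists.mpr ⟨t, Ideal.mem_span_singleton_self t, 1 - t,
    neg_sub t 1 ▸ neg_mem ht.2, add_sub_cancel t 1⟩

theorem under_span_algebraMap {δ t : R} {k : ℕ} {D : Type*} [CommRing D] [Algebra R D]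
    [IsLocalization.Away δ D] (ht : t ∈ reflectors F x y δ k) :
    (Ideal.span {algebraMap R D t}).under R = Ideal.span {t} := by
  rw [← Set.image_singleton, ← Ideal.map_span]
  exact under_map_of_isCoprime δ (isCoprime_span_of_mem_reflectors ht)

namespace IsProductCurve

theorem boxSpan_sup_eq_top [IsDomain R] (H : IsProductCurve f c x y) {k : ℕ}
    (hk : f.natDegree ≤ k) {I : Ideal R} [Module.Finite F (R ⧸ I)]
    (hI : codim F I < Module.finrank F (boxSpan F x y (k + 1 - f.natDegree) (k + 1))) :
    (boxSpan F x y k k).toAddSubgroup ⊔ I.toAddSubgroup = ⊤ := by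
  have hker := LinearMap.ker_ne_bot_of_finrank_lt (f := (Ideal.Quotient.mkₐ F I).toLinearMap ∘ₗ
    (boxSpan F x y (k + 1 - f.natDegree) (k + 1)).subtype) hI
  obtain ⟨⟨g, hg⟩, hgI, hg0⟩ := Submodule.exists_mem_ne_zero_of_ne_bot hker
  refine eq_top_iff.mpr fun r _ ↦ ?_
  obtain ⟨s, hs⟩ := H.exists_sub_mul_mem_boxSpan_of_mem hk (by simpa using hg0) hg r
  exact AddSubgroup.mem_sup.mpr ⟨_, hs, g * s,
    I.mul_mem_right s (Ideal.Quotient.eq_zero_iff_mem.mp hgI), sub_add_cancel r _⟩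

theorem ncard_reflectors_inter_mul [Finite F] [IsDomain R] (H : IsProductCurve f c x y) {k : ℕ}
    (hk : f.natDegree ≤ k) {I : Ideal R} {δ : R} (hI : I ≠ ⊥) (hδ : δ ≠ 0)
    (hIδ : IsCoprime I (Ideal.span {δ}))
    (hlt : codim F I + codim F (Ideal.span {δ}) <
      Module.finrank F (boxSpan F x y (k + 1 - f.natDegree) (k + 1))) :
    (reflectors F x y δ k ∩ I).ncard * Nat.card F ^ (codim F I + codim F (Ideal.span {δ})) =
      Nat.card F ^ Module.finrank F (boxSpan F x y k k) := by
  have := H.hasFiniteQuotients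
  have hδ' : Ideal.span {δ} ≠ ⊥ := by rwa [Ne, Ideal.span_singleton_eq_bot]
  have hmul : I * Ideal.span {δ} ≠ ⊥ := mul_ne_zero hI hδ'
  have := finite_quotient F hmul
  rw [← codim_mul_of_isCoprime F hI hδ' hIδ] at hlt ⊢
  obtain ⟨a, ha, b, hb, hab⟩ := Ideal.isCoprime_iff_exists.mp hIδ
  have hset : reflectors F x y δ k ∩ I =
      {t | t - (x ^ k + y ^ k) ∈ (boxSpan F x y k k).toAddSubgroup ∧
        t - a ∈ (I * Ideal.span {δ}).toAddSubgroup} := by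
    ext t
    have hta : t - a = t - 1 + b := by rw [← hab]; ring
    have hmem : t - a ∈ I * Ideal.span {δ} ↔ t ∈ I ∧ t - 1 ∈ Ideal.span {δ} := by
      rw [Ideal.mul_eq_inf_of_isCoprime hIδ, Ideal.mem_inf, Submodule.sub_mem_iff_left I ha, hta,
        Submodule.add_mem_iff_left _ hb]
    exact and_assoc.trans (and_congr_right fun _ ↦ and_comm.trans hmem.symm)
  rw [hset, ← cardQuot_eq_pow_codim F hmul, ← Module.natCard_eq_pow_finrank]
  exact ncard_sub_mem_and_sub_mem (H.boxSpan_sup_eq_top hk hlt) _ _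

theorem codim_span_aeval_derivative_le [IsDomain R] (H : IsProductCurve f c x y)
    (hf : f.Separable) :
    codim F (Ideal.span {aeval y f.derivative}) ≤ f.natDegree * (f.natDegree - 1) := by
  have hd := H.natDegree_pos
  have hlt : f.derivative.natDegree < f.natDegree - 1 + 1 :=
    (natDegree_derivative_lt hd.ne').trans_le (by lia)
  simpa [codim] using H.finrank_quotient_span_le (a := 0) (H.aeval_derivative_ne_zero hf)
    (aeval_snd_mem_boxSpan x y hlt)

variable [Finite F] [IsDomain R] {D : Type*} [CommRing D] [Algebra F D] [Algebra R D]
  [IsScalarTower F R D] [IsLocalization.Away (aeval y f.derivative) D]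

theorem ncard_reflectors_inter_under_mul (H : IsProductCurve f c x y) (hf : f.Separable)
    {k e e' : ℕ} (hk : 2 * f.natDegree ≤ k) (hee' : e + e' = 2 * f.natDegree * k)
    (he' : 3 * f.natDegree * (f.natDegree - 1) + 1 ≤ e') {E : Ideal D} (hE : E ≠ ⊥)
    (hEe : codim F E = e) :
    (reflectors F x y (aeval y f.derivative) k ∩ E.under R).ncard * Nat.card F ^ e =
      Nat.card F ^ (Module.finrank F (boxSpan F x y k k) -
        codim F (Ideal.span {aeval y f.derivative})) := by
  have := H.hasFiniteQuotients
  set δ := aeval y f.derivative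
  have hδ := H.codim_span_aeval_derivative_le hf
  have hsquare := H.finrank_boxSpan_add (a := k) (b := k) (by lia) (by lia)
  have hbox := H.finrank_boxSpan_add (a := k + 1 - f.natDegree) (b := k + 1) (by lia) (by lia)
  have hbound : e + codim F (Ideal.span {δ}) <
        Module.finrank F (boxSpan F x y (k + 1 - f.natDegree) (k + 1)) ∧
      codim F (Ideal.span {δ}) ≤ Module.finrank F (boxSpan F x y k k) := by
    obtain ⟨j, rfl⟩ := Nat.exists_eq_add_of_le (show f.natDegree ≤ k by lia)
    rw [show f.natDegree + j + 1 - f.natDegree = j + 1 by lia] at hbox ⊢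
    have hsub : f.natDegree * (f.natDegree - 1) + f.natDegree = f.natDegree * f.natDegree := by
      rw [← Nat.mul_succ, Nat.succ_eq_add_one, Nat.sub_add_cancel H.natDegree_pos]
    have hdj := Nat.mul_le_mul_left f.natDegree (show f.natDegree ≤ j by lia)
    constructor <;> nlinarith
  have hcount := H.ncard_reflectors_inter_mul (k := k) (by lia)
    (under_ne_bot_of_isLocalization (.powers δ) hE) (H.aeval_derivative_ne_zero hf)
    (isCoprime_under_span δ hE)
    (by rw [codim_under_of_isLocalization (.powers δ) hE, hEe]; exact hbound.1)
  rw [codim_under_of_isLocalization (.powers δ) hE, hEe, pow_add, ← mul_assoc,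
    ← Nat.sub_add_cancel hbound.2, pow_add] at hcount
  exact Nat.eq_of_mul_eq_mul_right (pow_pos Nat.card_pos _) hcount

theorem card_idealsOfCodim_div_pow_eq [IsDedekindDomain D] [Infinite D] [Ring.HasFiniteQuotients D]
    (H : IsProductCurve f c x y) (hf : f.Separable) {k n m : ℕ} (hk : 2 * f.natDegree ≤ k)
    (hnm : n + m = 2 * f.natDegree * k) (hn : 3 * f.natDegree * (f.natDegree - 1) + 1 ≤ n)
    (hm : 3 * f.natDegree * (f.natDegree - 1) + 1 ≤ m) :
    ((idealsOfCodim F D n).card : ℝ) / Nat.card F ^ n =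
      (idealsOfCodim F D m).card / Nat.card F ^ m := by
  classical
  have := H.hasFiniteQuotients
  have hinj : Function.Injective (algebraMap R D) := IsLocalization.injective D
    (powers_le_nonZeroDivisors_of_noZeroDivisors (H.aeval_derivative_ne_zero hf))
  have hcard {e e' : ℕ} (hee' : e + e' = 2 * f.natDegree * k)
      (he' : 3 * f.natDegree * (f.natDegree - 1) + 1 ≤ e') (E) (hE : E ∈ idealsOfCodim F D e) :
      {t ∈ (finite_reflectors (F := F) x y (aeval y f.derivative) k).toFinset.image
          (algebraMap R D) | t ∈ E}.card * Nat.card F ^ e =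
        Nat.card F ^ (Module.finrank F (boxSpan F x y k k) -
          codim F (Ideal.span {aeval y f.derivative})) := by
    obtain ⟨hE0, hEe⟩ := mem_idealsOfCodim.mp hE
    rw [← H.ncard_reflectors_inter_under_mul hf hk hee' he' hE0 hEe, Finset.filter_image,
      Finset.card_image_of_injective _ hinj, ← Set.ncard_coe_finset]
    congr 3
    ext t
    simp
  refine card_div_pow_eq_of_card_filter_mem F Nat.card_pos (fun s hs ↦ ?_) (hcard hnm hm)
    (hcard ((add_comm m n).trans hnm) hn)
  obtain ⟨t, ht, rfl⟩ := Finset.mem_image.mp hs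
  rw [Set.Finite.mem_toFinset] at ht
  have ht0 : algebraMap R D t ≠ 0 :=
    (map_ne_zero_iff _ hinj).mpr (H.ne_zero_of_isMonicOfLevel (by lia) ht.1)
  rw [hnm, ← codim_under_of_isLocalization (.powers (aeval y f.derivative)) (by simpa using ht0),
    under_span_algebraMap ht]
  exact ⟨ht0, H.finrank_quotient_span_of_isMonicOfLevel (by lia) ht.1⟩

end IsProductCurve

end Reflection

section Points

theorem exists_algHom_eq_pow_card_pow (F K : Type*) [Field F] [Finite F] [CommRing K]
    [Algebra F K] (j : ℕ) : ∃ Φ : K →ₐ[F] K, ∀ z, Φ z = z ^ Nat.card F ^ j := by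
  have := Fintype.ofFinite F
  refine ⟨FiniteField.frobeniusAlgHom F K ^ j, fun z ↦ ?_⟩
  rw [AlgHom.coe_pow, FiniteField.coe_frobeniusAlgHom, pow_iterate, Nat.card_eq_fintype_card]

variable {F : Type*} [Field F] {f : F[X]} {c : F} {D : Type*} [CommRing D] [Algebra F D]
  [Algebra (CurveRing f c) D] [IsScalarTower F (CurveRing f c) D]

theorem algHom_aeval_algebraMap {K : Type*} [CommRing K] [Algebra F K] (φ : D →ₐ[F] K) (g : F[X])
    (r : CurveRing f c) : φ (algebraMap _ D (aeval r g)) = aeval (φ (algebraMap _ D r)) g := by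
  rw [aeval_algHom_apply, aeval_algebraMap_apply]

theorem aeval_algHom_mul_aeval_algHom (hd : 0 < f.natDegree) (hc : c ≠ 0)
    {K : Type*} [CommRing K] [Algebra F K] (φ : D →ₐ[F] K) :
    aeval (φ (algebraMap _ D (xCoord f c))) f * aeval (φ (algebraMap _ D (yCoord f c))) f =
      algebraMap F K c := by
  rw [← algHom_aeval_algebraMap, ← algHom_aeval_algebraMap, ← map_mul, ← map_mul,
    (isProductCurve_coord hd hc).aeval_mul_aeval, ← IsScalarTower.algebraMap_apply, φ.commutes]

variable [IsLocalization.Away (aeval (yCoord f c) f.derivative) D]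

theorem algHom_ext_of_coord (hd : 0 < f.natDegree) (hc : c ≠ 0)
    {K : Type*} [CommRing K] [Algebra F K] {φ ψ : D →ₐ[F] K}
    (hx : φ (algebraMap _ D (xCoord f c)) = ψ (algebraMap _ D (xCoord f c)))
    (hy : φ (algebraMap _ D (yCoord f c)) = ψ (algebraMap _ D (yCoord f c))) : φ = ψ :=
  IsLocalization.algHom_ext (A := CurveRing f c) (.powers (aeval (yCoord f c) f.derivative))
    ((isProductCurve_coord hd hc).algHom_ext hx hy)

theorem exists_algHom_of_isUnit_aeval_derivative {K : Type*} [CommRing K] [Algebra F K] {a b : K}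
    (h : aeval a f * aeval b f = algebraMap F K c) (hb : IsUnit (aeval b f.derivative)) :
    ∃ φ : D →ₐ[F] K, φ (algebraMap _ D (xCoord f c)) = a ∧ φ (algebraMap _ D (yCoord f c)) = b := by
  obtain ⟨φ, rfl, rfl⟩ := exists_algHom_coord h
  rw [aeval_algHom_apply] at hb
  have hunit (w : Submonoid.powers (aeval (yCoord f c) f.derivative)) : IsUnit (φ w) := by
    obtain ⟨_, n, rfl⟩ := w
    simpa only [map_pow] using hb.pow n
  exact ⟨IsLocalization.liftAlgHom hunit, IsLocalization.lift_eq _ _, IsLocalization.lift_eq _ _⟩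

variable [Finite F]

theorem ncard_algHom_eq_ncard_fixedPoints (hd : 0 < f.natDegree) (hc : c ≠ 0) {K : Type*}
    [Field K] [Algebra F K] (j : ℕ) :
    {φ : D →ₐ[F] K | ∀ z, φ z ^ Nat.card F ^ j = φ z}.ncard =
      (fixedPoints (f.map (algebraMap F K)) (algebraMap F K c) (Nat.card F ^ j)).ncard := by
  refine Set.ncard_congr
    (fun φ _ ↦ (φ (algebraMap _ D (xCoord f c)), φ (algebraMap _ D (yCoord f c)))) ?_ ?_ ?_
  · intro φ hφ
    refine ⟨hφ _, hφ _, ?_, ?_⟩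
    · rw [eval_map_algebraMap, eval_map_algebraMap, aeval_algHom_mul_aeval_algHom hd hc]
    · rw [derivative_map, eval_map_algebraMap, ← algHom_aeval_algebraMap]
      exact ((IsLocalization.Away.algebraMap_isUnit _).map φ).ne_zero
  · intro φ ψ _ _ h
    exact algHom_ext_of_coord hd hc (congrArg Prod.fst h) (congrArg Prod.snd h)
  · rintro ⟨a, b⟩ ⟨ha, hb, hab, hb'⟩
    rw [eval_map_algebraMap, eval_map_algebraMap] at hab
    rw [derivative_map, eval_map_algebraMap] at hb'
    obtain ⟨φ, rfl, rfl⟩ := exists_algHom_of_isUnit_aeval_derivative (D := D) hab hb'.isUnit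
    obtain ⟨Φ, hΦ⟩ := exists_algHom_eq_pow_card_pow F K j
    have hφ : Φ.comp φ = φ :=
      algHom_ext_of_coord hd hc ((hΦ _).trans ha) ((hΦ _).trans hb)
    exact ⟨φ, fun z ↦ (hΦ _).symm.trans (DFunLike.congr_fun hφ z), rfl⟩

variable [IsDedekindDomain D] [Infinite D] [Ring.HasFiniteQuotients D]

variable (D) in
theorem exists_abs_mangoldtSum_sub_le (hd : 0 < f.natDegree) (hf : f.Separable) (hc : c ≠ 0) :
    ∃ C₀ : ℝ, ∀ j, |(mangoldtSum F D (j + 1) : ℝ) - Nat.card F ^ (j + 1)| ≤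
      C₀ * √(Nat.card F) ^ j := by
  obtain ⟨p, hchar⟩ := CharP.exists F
  have := Fintype.ofFinite F
  obtain ⟨⟨a, ha⟩, hp, hq⟩ := FiniteField.card F p
  rw [← Nat.card_eq_fintype_card] at hq
  have : Fact p.Prime := ⟨hp⟩
  let K := AlgebraicClosure F
  have : CharP K p := charP_of_injective_algebraMap (algebraMap F K).injective p
  refine ⟨(8 * f.natDegree ^ 2 * p ^ (f.natDegree + 1) + f.natDegree ^ 3) * √(Nat.card F),
    fun j ↦ ?_⟩
  obtain ⟨Φ, hΦ⟩ := exists_algHom_eq_pow_card_pow F K (j + 1)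
  have hpow : p ^ (a * (j + 1)) = Nat.card F ^ (j + 1) := by rw [hq, pow_mul]; rfl
  have hcount := abs_ncard_fixedPoints_sub_le (K := K) (p := p) (n := a * (j + 1))
    (f := f.map (algebraMap F K)) (c := algebraMap F K c) (by rwa [natDegree_map]) hf.map
    (by simpa using hc) (by positivity) (by rw [hpow, ← hΦ, AlgHom.commutes])
    (fun z ↦ by
      rw [hpow, ← hΦ, ← hΦ, eval_map_algebraMap, eval_map_algebraMap, aeval_algHom_apply])
  rw [natDegree_map, hpow, ← ncard_algHom_eq_ncard_fixedPoints (D := D) hd hc,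
    ncard_algHom_eq_mangoldtSum K (Nat.succ_pos j)] at hcount
  have hsqrt : √((p : ℝ) ^ (a * (j + 1))) = √(Nat.card F) ^ (j + 1) := by
    rw [hq, Nat.cast_pow, pow_mul, PNat.mk_coe]
    exact (Real.sqrt_eq_iff_mul_self_eq (by positivity) (by positivity)).mpr
      (by rw [← mul_pow, Real.mul_self_sqrt (by positivity)])
  rw [hsqrt, ← Nat.cast_pow, hpow, Nat.cast_pow] at hcount
  rwa [mul_assoc, ← pow_succ']

theorem exists_codim_eq_one (hd : 0 < f.natDegree) (hf : f.Separable) (hc : c ≠ 0)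
    (hcard : (3 * f.natDegree * (f.natDegree - 1) + 1) ^ 2 < Nat.card F) :
    ∃ E : Ideal D, codim F E = 1 := by
  have H := isProductCurve_coord hd hc
  have := isDomain_curveRing hd hc hf.squarefree
  obtain ⟨C₀, hC₀⟩ := exists_abs_mangoldtSum_sub_le D hd hf hc
  have hpos : 0 < (zetaSeries F D).coeff 1 := by
    refine coeff_one_pos_of_reflection (q := Nat.card F)
      (B := 3 * f.natDegree * (f.natDegree - 1) + 1) (by exact_mod_cast Finite.one_lt_card)
      ?_ (derivative_zetaSeries F) (fun j ↦ by simpa using hC₀ j) (fun k ↦ ?_) ?_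
    · simp [zetaSeries, idealsOfCodim_zero]
    · refine ⟨2 * f.natDegree * (k + 2 * f.natDegree), by nlinarith, fun n m hnm hn hm ↦ ?_⟩
      simpa [zetaSeries] using H.card_idealsOfCodim_div_pow_eq hf (by lia) hnm hn hm
    · exact Real.lt_sqrt_of_sq_lt (by exact_mod_cast hcard)
  rw [zetaSeries, PowerSeries.coeff_mk, Nat.cast_pos, Finset.card_pos] at hpos
  exact hpos.imp fun E hE ↦ (mem_idealsOfCodim.mp hE).2

end Points

theorem sq_three_mul_mul_sub_one_add_one_le {d : ℕ} (hd : 0 < d) :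
    (3 * d * (d - 1) + 1) ^ 2 ≤ (2 * d - 1) ^ 4 := by
  obtain ⟨n, rfl⟩ := Nat.exists_eq_add_of_lt hd
  rw [pow_mul _ 2 2]
  refine Nat.pow_le_pow_left ?_ 2
  rw [show 2 * (0 + n + 1) - 1 = 2 * n + 1 by lia, show 0 + n + 1 - 1 = n by lia]
  nlinarith

end ProductCurve

theorem statement11_general {F : Type*} [Field F] [Finite F] {f : Polynomial F}
    (hd : 0 < f.natDegree) (hf : f.Separable)
    (hcard : (3 * f.natDegree * (f.natDegree - 1) + 1) ^ 2 < Nat.card F) {c : F} (hc : c ≠ 0) :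
    ∃ x y : F, f.eval x * f.eval y = c := by
  have H := ProductCurve.isProductCurve_coord hd hc
  have := ProductCurve.isDomain_curveRing hd hc hf.squarefree
  let δ := Polynomial.aeval (ProductCurve.yCoord f c) f.derivative
  let D := Localization.Away δ
  have hδ : Submonoid.powers δ ≤ nonZeroDivisors _ :=
    powers_le_nonZeroDivisors_of_noZeroDivisors (H.aeval_derivative_ne_zero hf)
  have : IsDomain D := IsLocalization.isDomain_localization hδ
  have : IsDedekindDomain D := H.isDedekindDomain
  have := H.infinite
  have : Infinite D := .of_injective _ (IsLocalization.injective D hδ)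
  have := H.hasFiniteQuotients
  have : Ring.HasFiniteQuotients D :=
    ProductCurve.hasFiniteQuotients_of_isLocalization (.powers δ)
  obtain ⟨E, hE⟩ := ProductCurve.exists_codim_eq_one (D := D) hd hf hc hcard
  obtain ⟨φ⟩ := ProductCurve.nonempty_algHom_of_codim_eq_one hE
  exact ⟨_, _, ProductCurve.aeval_algHom_mul_aeval_algHom hd hc φ⟩

/-- If `F` is a finite field with `|F| > (2d−1)^4` and `f ∈ F[X]` is
non-constant of degree `d`, square-free over the algebraic closure, then every nonzero
`c ∈ F` can be written as `c = f(x)f(y)` with `x, y ∈ F`. -/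
theorem statement11 (F : Type*) [Field F] [Finite F]
    (f : Polynomial F) (d : ℕ) (hd : f.natDegree = d) (hdeg : 0 < f.degree)
    (hcard : (2 * d - 1) ^ 4 < Nat.card F)
    (hsf : Squarefree (f.map (algebraMap F (AlgebraicClosure F)))) :
    ∀ c : F, c ≠ 0 → ∃ x y : F, Polynomial.eval x f * Polynomial.eval y f = c := by
  intro c hc
  have hsep : f.Separable := (Polynomial.separable_map _).mp
    (PerfectField.separable_iff_squarefree.mpr hsf)
  have hd0 : 0 < f.natDegree := Polynomial.natDegree_pos_iff_degree_pos.mpr hdeg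
  exact statement11_general hd0 hsep
    ((ProductCurve.sq_three_mul_mul_sub_one_add_one_le hd0).trans_lt (hd ▸ hcard)) hc
end
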